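/- arXiv:1709.05031 — 12 statements merged into one kernel-verified Lean document; each statement's English description precedes it below -/
import Mathlib

section
/- Let p ≥ 2 be real, B > 0, c ∈ ℝ, a ∈ ℝ, δ > 0. Suppose φ : (a, a+δ) → ℝ is continuously differentiable with φ(x) > 0 and φ'(x) > 0 for all x ∈ (a, a+δ), satisfies (φ'(x))² = 2B/φ(x)² + c − (2/p)·φ(x)^(p−2) on (a, a+δ), and φ(x) → 0 as x → a⁺. Then φ(x)/√(x−a) → (8B)^{1/4} as x → a⁺, i.e. near its vanishing point φ behaves like √(2√(2B))·√(x−a). -/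
open Filter Set

open scoped Topology

/-!
Multiplying the equation by `φ²` shows `(φ φ')² → 2B`, so the derivative `2 φ φ'` of `φ²` tends to
`2√(2B)` in absolute value. By the mean value theorem the slope `φ(x)² / (x - a)` is a value of this
derivative between `a` and `x`; being nonnegative, it tends to `2√(2B)` whatever the sign of `φ'`.
It remains to take square roots.
-/

section Slope

variable {f f' : ℝ → ℝ} {a : ℝ}

theorem exists_hasDerivAt_eq_slope_of_tendsto_nhdsGT {L x : ℝ} (hax : a < x)
    (hf : ∀ y ∈ Ioc a x, HasDerivAt f (f' y) y) (hL : Tendsto f (𝓝[>] a) (𝓝 L)) :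
    ∃ ξ ∈ Ioo a x, f' ξ = (f x - L) / (x - a) := by
  have hfx : Tendsto f (𝓝[<] x) (𝓝 (f x)) :=
    (hf x (right_mem_Ioc.2 hax)).continuousAt.continuousWithinAt
  obtain ⟨ξ, hξ, hratio⟩ := exists_ratio_hasDerivAt_eq_ratio_slope' f f' hax id (fun _ => 1)
    (fun y hy => hf y (Ioo_subset_Ioc_self hy)) (fun y _ => hasDerivAt_id y)
    hL continuousWithinAt_id hfx continuousWithinAt_id
  refine ⟨ξ, hξ, ?_⟩
  rw [eq_div_iff (sub_pos.2 hax).ne', mul_comm]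
  simpa only [id, mul_one] using hratio

/-- The target filter is `map f'` rather than a neighbourhood filter because only `|f'|`, not `f'`,
is known to converge when the lemma is applied. -/
theorem tendsto_slope_map_deriv_nhdsGT {L : ℝ}
    (hf : ∀ᶠ x in 𝓝[>] a, HasDerivAt f (f' x) x) (hL : Tendsto f (𝓝[>] a) (𝓝 L)) :
    Tendsto (fun x => (f x - L) / (x - a)) (𝓝[>] a) (map f' (𝓝[>] a)) := by
  intro s hs
  obtain ⟨b, hab, hb⟩ := mem_nhdsGT_iff_exists_Ioo_subset.1 (hf.and hs)
  rw [mem_map]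
  filter_upwards [Ioo_mem_nhdsGT hab] with x hx
  obtain ⟨ξ, hξ, hslope⟩ := exists_hasDerivAt_eq_slope_of_tendsto_nhdsGT hx.1
    (fun y hy => (hb ⟨hy.1, hy.2.trans_lt hx.2⟩).1) hL
  have hξs : f' ξ ∈ s := (hb ⟨hξ.1, hξ.2.trans hx.2⟩).2
  rwa [hslope] at hξs

theorem tendsto_abs_div_sqrt_of_tendsto_abs_mul_deriv {m : ℝ}
    (hf : ∀ᶠ x in 𝓝[>] a, HasDerivAt f (f' x) x) (h0 : Tendsto f (𝓝[>] a) (𝓝 0))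
    (hm : Tendsto (fun x => |f x * f' x|) (𝓝[>] a) (𝓝 m)) :
    Tendsto (fun x => |f x| / √(x - a)) (𝓝[>] a) (𝓝 √(2 * m)) := by
  have hsq : ∀ᶠ x in 𝓝[>] a, HasDerivAt (fun y => f y ^ 2) (2 * (f x * f' x)) x :=
    hf.mono fun x hx => by simpa [mul_assoc] using hx.fun_pow 2
  have hsq0 : Tendsto (fun x => f x ^ 2) (𝓝[>] a) (𝓝 0) := by simpa using h0.pow 2
  have habs : Tendsto (fun x => |2 * (f x * f' x)|) (𝓝[>] a) (𝓝 (2 * m)) := by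
    simpa only [abs_mul, abs_two] using hm.const_mul 2
  have hslope : Tendsto (fun x => |(f x ^ 2 - 0) / (x - a)|) (𝓝[>] a) (𝓝 (2 * m)) :=
    (tendsto_map'_iff (f := abs).2 habs).comp (tendsto_slope_map_deriv_nhdsGT hsq hsq0)
  refine hslope.sqrt.congr' ?_
  filter_upwards [self_mem_nhdsWithin] with x hx
  have hxa : 0 ≤ x - a := (sub_pos.2 hx).le
  rw [sub_zero, abs_of_nonneg (by positivity), Real.sqrt_div (sq_nonneg _), Real.sqrt_sq_eq_abs]

end Slope

theorem tendsto_sq_mul_inv_sq_add_inv_add_sub_rpow (β α c κ : ℝ) {p : ℝ} (hp : 0 < p) :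
    Tendsto (fun y : ℝ => y ^ 2 * (β / y ^ 2 + α / y + c - κ * y ^ (p - 2))) (𝓝[>] 0) (𝓝 β) := by
  have hcont : ContinuousAt (fun y : ℝ => β + α * y + c * y ^ 2 - κ * y ^ p) 0 := by
    have hrpow := Real.continuousAt_rpow_const 0 p (Or.inr hp.le)
    fun_prop
  have hlim : Tendsto (fun y : ℝ => β + α * y + c * y ^ 2 - κ * y ^ p) (𝓝[>] 0) (𝓝 β) := by
    simpa [ContinuousAt, Real.zero_rpow hp.ne'] using hcont.tendsto.mono_left nhdsWithin_le_nhds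
  refine hlim.congr' ?_
  filter_upwards [self_mem_nhdsWithin] with y (hy : 0 < y)
  have hpow : y ^ p = y ^ (p - 2) * y ^ 2 := by
    rw [← Real.rpow_add_natCast hy.ne', Nat.cast_ofNat, sub_add_cancel]
  rw [hpow]
  field_simp

theorem sqrt_two_mul_sqrt_two_mul {x : ℝ} (hx : 0 ≤ x) :
    √(2 * √(2 * x)) = (8 * x) ^ ((1 : ℝ) / 4) := by
  have hinner : 2 * √(2 * x) = √(8 * x) := by
    rw [show 8 * x = 2 ^ 2 * (2 * x) by ring, Real.sqrt_mul (sq_nonneg 2),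
      Real.sqrt_sq zero_le_two]
  rw [hinner, Real.sqrt_eq_rpow, Real.sqrt_eq_rpow, ← Real.rpow_mul (by positivity)]
  norm_num

theorem stmt_1_general (A B c : ℝ) {p a : ℝ} (hp : 0 < p) {φ φ' : ℝ → ℝ}
    (hd : ∀ᶠ x in 𝓝[>] a, HasDerivAt φ (φ' x) x) (hpos : ∀ᶠ x in 𝓝[>] a, 0 < φ x)
    (hODE : ∀ᶠ x in 𝓝[>] a,
      φ' x ^ 2 = 2 * B / φ x ^ 2 + 2 * A / φ x + c - 2 / p * φ x ^ (p - 2))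
    (hlim : Tendsto φ (𝓝[>] a) (𝓝 0)) :
    Tendsto (fun x => φ x / √(x - a)) (𝓝[>] a) (𝓝 ((8 * B) ^ ((1 : ℝ) / 4))) := by
  have hsq : Tendsto (fun x => (φ x * φ' x) ^ 2) (𝓝[>] a) (𝓝 (2 * B)) := by
    refine ((tendsto_sq_mul_inv_sq_add_inv_add_sub_rpow (2 * B) (2 * A) c (2 / p) hp).comp
      (tendsto_nhdsWithin_iff.2 ⟨hlim, hpos⟩)).congr' ?_
    filter_upwards [hODE] with x hx
    rw [Function.comp_apply, mul_pow, hx]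
  have hB : 0 ≤ B := by linarith [ge_of_tendsto' hsq fun x => sq_nonneg (φ x * φ' x)]
  have habs : Tendsto (fun x => |φ x * φ' x|) (𝓝[>] a) (𝓝 √(2 * B)) := by
    simpa only [Real.sqrt_sq_eq_abs] using hsq.sqrt
  rw [← sqrt_two_mul_sqrt_two_mul hB]
  refine (tendsto_abs_div_sqrt_of_tendsto_abs_mul_deriv hd hlim habs).congr' ?_
  filter_upwards [hpos] with x hx
  rw [abs_of_pos hx]

/-- boundary behavior of compactons at the edge of their support:
φ(x) ~ √(2√(2B))·√(x−a) as x → a⁺, i.e. φ(x)/√(x−a) → (8B)^{1/4}. -/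
theorem stmt_1 (p B c a δ : ℝ) (hp : 2 ≤ p) (hB : 0 < B) (hδ : 0 < δ)
    (φ φ' : ℝ → ℝ)
    (hd : ∀ x ∈ Set.Ioo a (a + δ), HasDerivAt φ (φ' x) x)
    (hc' : ContinuousOn φ' (Set.Ioo a (a + δ)))
    (hpos : ∀ x ∈ Set.Ioo a (a + δ), 0 < φ x)
    (hpos' : ∀ x ∈ Set.Ioo a (a + δ), 0 < φ' x)
    (hODE : ∀ x ∈ Set.Ioo a (a + δ),
      (φ' x) ^ 2 = 2 * B / (φ x) ^ 2 + c - (2 / p) * φ x ^ (p - 2))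
    (hlim : Tendsto φ (nhdsWithin a (Set.Ioo a (a + δ))) (nhds 0)) :
    Tendsto (fun x => φ x / Real.sqrt (x - a)) (nhdsWithin a (Set.Ioo a (a + δ)))
      (nhds ((8 * B) ^ ((1 : ℝ) / 4))) := by
  have hIoo : Ioo a (a + δ) ∈ 𝓝[>] a := Ioo_mem_nhdsGT (by linarith)
  rw [nhdsWithin_Ioo_eq_nhdsGT (by linarith)] at hlim ⊢
  exact stmt_1_general 0 B c (p := p) (by linarith) (eventually_of_mem hIoo hd)
    (eventually_of_mem hIoo hpos) (eventually_of_mem hIoo (by simpa using hODE)) hlim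
end

section
/- Let c < 1 and B > 0 and set r = √(2B)/(1−c). Define φ(x) = √((c−1)x² + 2B/(1−c)) for |x| < r. Then φ is positive and twice continuously differentiable on (−r, r), and satisfies −c·φ(x) + φ(x)·(φ(x)·φ'(x))' + φ(x) = 0 for all x ∈ (−r, r); moreover φ(x) → 0 as x → ±r. -/
open Filter Set

open scoped Topology

/-!
Since `φ φ' = (φ²)' / 2`, the equation `-c φ + φ (φ φ')' + φ = 0` divided by `φ > 0` says that `φ²`
has constant second derivative `2 (c - 1)`. For the even solution vanishing at `±r` this forces
`φ² = (1 - c) (r² - x²)`, the upper half of an ellipse.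
-/

section Sqrt

variable {f : ℝ → ℝ} {x : ℝ}

theorem sqrt_mul_deriv_sqrt (hf : DifferentiableAt ℝ f x) (hx : 0 < f x) :
    √(f x) * deriv (fun y ↦ √(f y)) x = deriv f x / 2 := by
  have hsqrt : √(f x) ≠ 0 := (Real.sqrt_pos.2 hx).ne'
  rw [deriv_sqrt hf hx.ne']
  field_simp

theorem deriv_sqrt_mul_deriv_sqrt (hf : ∀ᶠ y in 𝓝 x, DifferentiableAt ℝ f y) (hx : 0 < f x) :
    deriv (fun y ↦ √(f y) * deriv (fun z ↦ √(f z)) y) x = deriv (deriv f) x / 2 := by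
  have hpos : ∀ᶠ y in 𝓝 x, 0 < f y :=
    hf.self_of_nhds.continuousAt.eventually_const_lt hx
  have heq : (fun y ↦ √(f y) * deriv (fun z ↦ √(f z)) y) =ᶠ[𝓝 x] fun y ↦ deriv f y / 2 := by
    filter_upwards [hf, hpos] with y hfy hy using sqrt_mul_deriv_sqrt hfy hy
  rw [heq.deriv_eq, deriv_div_const]

end Sqrt

/-- The profile `x ↦ √(a (r² - x²))`: for `0 < a`, the upper half of the ellipse
`y² + a x² = a r²` on `[-r, r]`, extended by zero because `Real.sqrt` vanishes on negative numbers.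
The compacton of speed `c` is the case `a = 1 - c`. -/
noncomputable def semiellipse (a r x : ℝ) : ℝ :=
  √(a * (r ^ 2 - x ^ 2))

section Semiellipse

variable {a r x : ℝ}

theorem mul_sq_sub_sq_pos (ha : 0 < a) (hx : x ∈ Ioo (-r) r) : 0 < a * (r ^ 2 - x ^ 2) :=
  mul_pos ha (sub_pos.2 (sq_lt_sq' hx.1 hx.2))

theorem semiellipse_pos (ha : 0 < a) (hx : x ∈ Ioo (-r) r) : 0 < semiellipse a r x :=
  Real.sqrt_pos.2 (mul_sq_sub_sq_pos ha hx)

theorem semiellipse_of_sq_eq (hx : x ^ 2 = r ^ 2) : semiellipse a r x = 0 := by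
  simp [semiellipse, hx]

theorem continuous_semiellipse : Continuous (semiellipse a r) := by
  unfold semiellipse
  fun_prop

theorem tendsto_semiellipse_of_sq_eq (hx : x ^ 2 = r ^ 2) :
    Tendsto (semiellipse a r) (𝓝 x) (𝓝 0) :=
  continuous_semiellipse.tendsto' x 0 (semiellipse_of_sq_eq hx)

theorem contDiffOn_semiellipse {n : WithTop ℕ∞} (ha : 0 < a) :
    ContDiffOn ℝ n (semiellipse a r) (Ioo (-r) r) :=
  ContDiffOn.sqrt (by fun_prop) fun _ hx ↦ (mul_sq_sub_sq_pos ha hx).ne'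

theorem deriv_deriv_mul_sq_sub_sq :
    deriv (deriv fun y ↦ a * (r ^ 2 - y ^ 2)) x = -2 * a := by
  simp [mul_comm]

theorem deriv_semiellipse_mul_deriv (ha : 0 < a) (hx : x ∈ Ioo (-r) r) :
    deriv (fun y ↦ semiellipse a r y * deriv (semiellipse a r) y) x = -a := by
  have hdiff : ∀ᶠ y in 𝓝 x, DifferentiableAt ℝ (fun z ↦ a * (r ^ 2 - z ^ 2)) y :=
    .of_forall fun y ↦ by fun_prop
  calc deriv (fun y ↦ semiellipse a r y * deriv (semiellipse a r) y) x
    _ = deriv (deriv fun y ↦ a * (r ^ 2 - y ^ 2)) x / 2 :=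
      deriv_sqrt_mul_deriv_sqrt hdiff (mul_sq_sub_sq_pos ha hx)
    _ = -a := by rw [deriv_deriv_mul_sq_sub_sq]; ring

end Semiellipse

theorem sqrt_eq_semiellipse {c B : ℝ} (hc : c ≠ 1) (hB : 0 ≤ B) (x : ℝ) :
    √((c - 1) * x ^ 2 + 2 * B / (1 - c)) = semiellipse (1 - c) (√(2 * B) / (1 - c)) x := by
  have hc' : 1 - c ≠ 0 := sub_ne_zero.2 hc.symm
  rw [semiellipse, div_pow, Real.sq_sqrt (by positivity)]
  congr 1
  field_simp
  ring

/-- explicit compacton profile for degenerate KdV with p = 2. -/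
theorem stmt_2 (c B : ℝ) (hc : c < 1) (hB : 0 < B)
    (r : ℝ) (hr : r = Real.sqrt (2 * B) / (1 - c))
    (φ : ℝ → ℝ)
    (hφ : ∀ x, φ x = Real.sqrt ((c - 1) * x ^ 2 + 2 * B / (1 - c))) :
    (∀ x ∈ Set.Ioo (-r) r, 0 < φ x) ∧
    ContDiffOn ℝ 2 φ (Set.Ioo (-r) r) ∧
    (∀ x ∈ Set.Ioo (-r) r,
      -c * φ x + φ x * deriv (fun y => φ y * deriv φ y) x + φ x = 0) ∧
    Tendsto φ (nhdsWithin r (Set.Ioo (-r) r)) (nhds 0) ∧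
    Tendsto φ (nhdsWithin (-r) (Set.Ioo (-r) r)) (nhds 0) := by
  have ha : 0 < 1 - c := sub_pos.2 hc
  obtain rfl : φ = semiellipse (1 - c) r :=
    funext fun x ↦ by rw [hφ, hr, sqrt_eq_semiellipse hc.ne hB.le]
  refine ⟨fun x ↦ semiellipse_pos ha, contDiffOn_semiellipse ha, fun x hx ↦ ?_,
    (tendsto_semiellipse_of_sq_eq rfl).mono_left nhdsWithin_le_nhds,
    (tendsto_semiellipse_of_sq_eq (neg_sq r)).mono_left nhdsWithin_le_nhds⟩
  rw [deriv_semiellipse_mul_deriv ha hx]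
  ring
end

section
/- Let c > 0 and B ∈ ℝ with −c² < 4B < 0, and set Z = √(4B + c²), so 0 < Z < c. Then φ(x) = √(c + Z·cos(√2·x)) is well-defined, positive, and twice continuously differentiable on all of ℝ, is periodic with period √2·π, and satisfies −c·φ(x) + φ(x)·(φ(x)·φ'(x))' + φ(x)³ = 0 for all x ∈ ℝ. -/
/-!
For a nonvanishing profile `φ` the equation `-c φ + φ (φ φ')' + φ ^ (n + 1) = 0` reads
`(φ φ')' + φ ^ n = c`. As `φ φ' = (φ²)' / 2`, for `n = 2` this is the linear oscillator
`u'' / 2 + u = c` in `u = φ²`, which is solved by `u x = c + Z cos (√2 x)`. When `|Z| < c`, this `u`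
is positive, so its square root is a smooth profile.
-/

open Filter Real Topology

theorem deriv_deriv_sq {𝕜 : Type*} [NontriviallyNormedField 𝕜] {f : 𝕜 → 𝕜} {x : 𝕜}
    (hf : ∀ᶠ y in 𝓝 x, DifferentiableAt 𝕜 f y) :
    deriv (deriv fun y => f y ^ 2) x = 2 * deriv (fun y => f y * deriv f y) x := by
  have first_deriv : (deriv fun y => f y ^ 2) =ᶠ[𝓝 x] fun y => 2 * (f y * deriv f y) := by
    filter_upwards [hf] with y hy
    rw [deriv_fun_pow hy]
    ring
  rw [first_deriv.deriv_eq, deriv_const_mul_field]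

theorem profile_equation_iff_sq {φ : ℝ → ℝ} {x : ℝ} (c : ℝ) (n : ℕ)
    (hφ : ∀ᶠ y in 𝓝 x, DifferentiableAt ℝ φ y) (hx : φ x ≠ 0) :
    -c * φ x + φ x * deriv (fun y => φ y * deriv φ y) x + φ x ^ (n + 1) = 0 ↔
      deriv (deriv fun y => φ y ^ 2) x / 2 + φ x ^ n = c := by
  have factored : -c * φ x + φ x * deriv (fun y => φ y * deriv φ y) x + φ x ^ (n + 1) =
      φ x * (deriv (deriv fun y => φ y ^ 2) x / 2 + φ x ^ n - c) := by
    rw [deriv_deriv_sq hφ]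
    ring
  rw [factored, mul_eq_zero_iff_left hx, sub_eq_zero]

theorem deriv_deriv_const_add_mul_cos (c Z ω x : ℝ) :
    deriv (deriv fun y => c + Z * cos (ω * y)) x = -ω ^ 2 * (Z * cos (ω * x)) := by
  have first_deriv : (deriv fun y => c + Z * cos (ω * y)) = fun y => -(Z * ω) * sin (ω * y) := by
    funext y
    rw [deriv_const_add, deriv_const_mul_field, deriv_comp_mul_left, Real.deriv_cos, smul_eq_mul]
    ring
  rw [first_deriv, deriv_const_mul_field, deriv_comp_mul_left, Real.deriv_sin, smul_eq_mul]
  ring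

theorem add_mul_cos_pos {c Z : ℝ} (hZ : |Z| < c) (θ : ℝ) : 0 < c + Z * cos θ := by
  have abs_mul_cos_le : |Z * cos θ| ≤ |Z| := by
    rw [abs_mul]
    exact mul_le_of_le_one_right (abs_nonneg Z) (abs_cos_le_one θ)
  linarith [neg_abs_le (Z * cos θ)]

/-- The traveling-wave profile of speed `c` whose square oscillates about `c` with amplitude `Z`.
The frequency `√2` is that of the oscillator `u'' / 2 + u = c`. Where the radicand is negative,
`√` takes the junk value `0`. -/
noncomputable def cosProfile (c Z x : ℝ) : ℝ := √(c + Z * cos (√2 * x))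

theorem cosProfile_periodic (c Z : ℝ) : Function.Periodic (cosProfile c Z) (√2 * π) := by
  intro x
  have phase_shift : √2 * (x + √2 * π) = √2 * x + 2 * π := by
    rw [mul_add, ← mul_assoc, mul_self_sqrt zero_le_two]
  rw [cosProfile, phase_shift, cos_add_two_pi, cosProfile]

theorem cosProfile_pos {c Z : ℝ} (hZ : |Z| < c) (x : ℝ) : 0 < cosProfile c Z x :=
  sqrt_pos.mpr (add_mul_cos_pos hZ _)

theorem cosProfile_sq {c Z : ℝ} (hZ : |Z| < c) (x : ℝ) :
    cosProfile c Z x ^ 2 = c + Z * cos (√2 * x) :=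
  sq_sqrt (add_mul_cos_pos hZ _).le

theorem contDiff_cosProfile {c Z : ℝ} {n : WithTop ℕ∞} (hZ : |Z| < c) :
    ContDiff ℝ n (cosProfile c Z) :=
  ContDiff.sqrt (by fun_prop) fun _ => (add_mul_cos_pos hZ _).ne'

theorem cosProfile_equation {c Z : ℝ} (hZ : |Z| < c) (x : ℝ) :
    -c * cosProfile c Z x +
      cosProfile c Z x * deriv (fun y => cosProfile c Z y * deriv (cosProfile c Z) y) x +
      cosProfile c Z x ^ 3 = 0 := by
  have differentiable : Differentiable ℝ (cosProfile c Z) :=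
    (contDiff_cosProfile hZ).differentiable one_ne_zero
  refine (profile_equation_iff_sq c 2 (.of_forall differentiable) (cosProfile_pos hZ x).ne').mpr ?_
  simp only [cosProfile_sq hZ, deriv_deriv_const_add_mul_cos, sq_sqrt zero_le_two]
  ring

/-- explicit periodic traveling-wave profiles for degenerate KdV with p = 4. -/
theorem stmt_3 (c B : ℝ) (hc : 0 < c) (hB1 : -c ^ 2 < 4 * B) (hB2 : 4 * B < 0)
    (Z : ℝ) (hZ : Z = Real.sqrt (4 * B + c ^ 2))
    (φ : ℝ → ℝ)
    (hφ : ∀ x, φ x = Real.sqrt (c + Z * Real.cos (Real.sqrt 2 * x))) :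
    (0 < Z ∧ Z < c) ∧
    (∀ x, 0 < c + Z * Real.cos (Real.sqrt 2 * x)) ∧
    (∀ x, 0 < φ x) ∧
    ContDiff ℝ 2 φ ∧
    Function.Periodic φ (Real.sqrt 2 * Real.pi) ∧
    (∀ x, -c * φ x + φ x * deriv (fun y => φ y * deriv φ y) x + (φ x) ^ 3 = 0) := by
  obtain rfl : φ = cosProfile c Z := funext hφ
  have Z_pos : 0 < Z := hZ ▸ sqrt_pos.mpr (by linarith)
  have Z_lt : Z < c := hZ ▸ (sqrt_lt' hc).mpr (by linarith)
  have abs_Z_lt : |Z| < c := by rwa [abs_of_pos Z_pos]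
  exact ⟨⟨Z_pos, Z_lt⟩, fun _ => add_mul_cos_pos abs_Z_lt _, cosProfile_pos abs_Z_lt,
    contDiff_cosProfile abs_Z_lt, cosProfile_periodic c Z, cosProfile_equation abs_Z_lt⟩
end

section
/- Let p ≥ 2 be real, c, B ∈ ℝ, X > 0. Suppose φ : ℝ → ℝ is continuous, φ(x) = 0 for |x| ≥ X, φ is positive and twice continuously differentiable on (−X, X), φ·φ' is bounded on (−X, X), and on (−X, X) it satisfies −c·φ + φ·(φφ')' + φ^{p−1} = 0. Then c·∫φ² dx + 2·∫(φφ')² dx − ∫φ^p dx = 0 (all integrals over ℝ, equivalently over (−X,X)). -/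
open MeasureTheory Set

/-!
Multiplying the profile equation by `φ` gives `φ² (φφ')' = c φ² - φ ^ p`, and integration by parts
turns the integral of the left side into `-2 ∫ (φφ')²`; the boundary terms vanish because `φ` does
and the flux `φφ'` stays bounded. Boundedness of the flux is read off the first integral of the
equation: multiplying it by `2 φ'` shows that `(φφ')² - c φ² + (2 / p) φ ^ p` is constant.
-/

open Filter Topology

theorem integral_Ioo_deriv_mul_add_mul_deriv_eq_zero {A : Type*} [NormedRing A]
    [NormedAlgebra ℝ A] [CompleteSpace A] {a b M : ℝ} {u v u' v' : ℝ → A} (hab : a < b)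
    (hu : ContinuousOn u (Icc a b)) (hua : u a = 0) (hub : u b = 0)
    (huu' : ∀ x ∈ Ioo a b, HasDerivAt u (u' x) x) (hvv' : ∀ x ∈ Ioo a b, HasDerivAt v (v' x) x)
    (hvM : ∀ x ∈ Ioo a b, ‖v x‖ ≤ M)
    (hint : IntegrableOn (fun x => u' x * v x + u x * v' x) (Ioo a b)) :
    ∫ x in Ioo a b, (u' x * v x + u x * v' x) = 0 := by
  have tendsto_mul {l : Filter ℝ} (hl : Ioo a b ∈ l) (hul : Tendsto u l (𝓝 0)) :
      Tendsto (u * v) l (𝓝 0) :=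
    hul.zero_mul_isBoundedUnder_le (isBoundedUnder_of_eventually_le (mem_of_superset hl hvM))
  have hleft : Tendsto (u * v) (𝓝[>] a) (𝓝 0) := by
    refine tendsto_mul (Ioo_mem_nhdsGT hab) ?_
    rw [← nhdsWithin_Ioo_eq_nhdsGT hab, ← hua]
    exact (hu a (left_mem_Icc.2 hab.le)).mono Ioo_subset_Icc_self
  have hright : Tendsto (u * v) (𝓝[<] b) (𝓝 0) := by
    refine tendsto_mul (Ioo_mem_nhdsLT hab) ?_
    rw [← nhdsWithin_Ioo_eq_nhdsLT hab, ← hub]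
    exact (hu b (right_mem_Icc.2 hab.le)).mono Ioo_subset_Icc_self
  rw [← integral_Ioc_eq_integral_Ioo, ← intervalIntegral.integral_of_le hab.le,
    intervalIntegral.integral_eq_sub_of_hasDerivAt_of_tendsto hab
      (fun x hx => (huu' x hx).mul (hvv' x hx))
      ((intervalIntegrable_iff_integrableOn_Ioo_of_le hab.le).2 hint) hleft hright,
    sub_zero]

theorem integral_Ioo_sq_mul_deriv_flux {a b M : ℝ} {φ φ' g' : ℝ → ℝ} (hab : a < b)
    (hφ : ContinuousOn φ (Icc a b)) (hφa : φ a = 0) (hφb : φ b = 0)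
    (hφ' : ∀ x ∈ Ioo a b, HasDerivAt φ (φ' x) x)
    (hg' : ∀ x ∈ Ioo a b, HasDerivAt (fun y => φ y * φ' y) (g' x) x)
    (hM : ∀ x ∈ Ioo a b, ‖φ x * φ' x‖ ≤ M)
    (hint : IntegrableOn (fun x => φ x ^ 2 * g' x) (Ioo a b)) :
    ∫ x in Ioo a b, φ x ^ 2 * g' x = -2 * ∫ x in Ioo a b, (φ x * φ' x) ^ 2 := by
  have hflux : IntegrableOn (fun x => 2 * (φ x * φ' x) ^ 2) (Ioo a b) := by
    have hcont : ContinuousOn (fun x => φ x * φ' x) (Ioo a b) := HasDerivAt.continuousOn hg'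
    refine (IntegrableOn.of_bound measure_Ioo_lt_top
      ((hcont.fun_pow 2).aestronglyMeasurable measurableSet_Ioo) (M ^ 2) ?_).const_mul 2
    refine ae_restrict_of_forall_mem measurableSet_Ioo fun x hx => ?_
    rw [norm_pow]
    exact pow_le_pow_left₀ (norm_nonneg _) (hM x hx) 2
  have hsq : ∀ x ∈ Ioo a b, HasDerivAt (fun y => φ y ^ 2) (2 * φ x * φ' x) x := fun x hx => by
    simpa using (hφ' x hx).fun_pow 2
  have hmul : ∀ x, 2 * φ x * φ' x * (φ x * φ' x) = 2 * (φ x * φ' x) ^ 2 := fun x => by ring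
  have hparts := integral_Ioo_deriv_mul_add_mul_deriv_eq_zero hab (hφ.fun_pow 2) (by simp [hφa])
    (by simp [hφb]) hsq hg' hM (by simp only [hmul]; exact hflux.add hint)
  simp only [hmul] at hparts
  rw [integral_add hflux hint, integral_const_mul] at hparts
  linarith

/-- `φ` is a positive profile on `s` of a traveling wave with speed `c` of the degenerate KdV
equation `∂ₜu + ∂ₓ(u ∂ₓ(u ∂ₓu) + u ^ (p - 1)) = 0`. The functions `φ'` and `g'` are the derivatives
on `s` of `φ` and of the flux `φφ'`. -/
structure IsTravelingWaveOn (p c : ℝ) (φ φ' g' : ℝ → ℝ) (s : Set ℝ) : Prop where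
  pos : ∀ x ∈ s, 0 < φ x
  hasDerivAt : ∀ x ∈ s, HasDerivAt φ (φ' x) x
  hasDerivAt_flux : ∀ x ∈ s, HasDerivAt (fun y => φ y * φ' y) (g' x) x
  profile_eq : ∀ x ∈ s, -c * φ x + φ x * g' x + φ x ^ (p - 1) = 0

namespace IsTravelingWaveOn

variable {p c a b : ℝ} {φ φ' g' : ℝ → ℝ} {s : Set ℝ}

theorem sq_mul_deriv_flux (h : IsTravelingWaveOn p c φ φ' g' s) {x : ℝ} (hx : x ∈ s) :
    φ x ^ 2 * g' x = c * φ x ^ 2 - φ x ^ p := by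
  have hrpow : φ x ^ p = φ x ^ (p - 1) * φ x := by
    rw [← Real.rpow_add_one (h.pos x hx).ne', sub_add_cancel]
  rw [hrpow]
  linear_combination φ x * h.profile_eq x hx

theorem hasDerivAt_firstIntegral (h : IsTravelingWaveOn p c φ φ' g' s) (hp : p ≠ 0) {x : ℝ}
    (hx : x ∈ s) :
    HasDerivAt (fun y => (φ y * φ' y) ^ 2 - c * φ y ^ 2 + 2 / p * φ y ^ p) 0 x := by
  have hφ := h.hasDerivAt x hx
  have hrpow := hφ.rpow_const (p := p) (.inl (h.pos x hx).ne')
  refine ((((h.hasDerivAt_flux x hx).fun_pow 2).fun_sub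
    ((hφ.fun_pow 2).const_mul c)).fun_add (hrpow.const_mul (2 / p))).congr_deriv ?_
  field_simp
  push_cast
  linear_combination 2 * φ' x * h.profile_eq x hx

theorem exists_flux_sq_eq (h : IsTravelingWaveOn p c φ φ' g' s) (hp : p ≠ 0) (hs : IsOpen s)
    (hs' : IsPreconnected s) :
    ∃ K, ∀ x ∈ s, (φ x * φ' x) ^ 2 = K + c * φ x ^ 2 - 2 / p * φ x ^ p := by
  obtain ⟨K, hK⟩ := hs.exists_is_const_of_deriv_eq_zero hs'
    (fun x hx => (h.hasDerivAt_firstIntegral hp hx).differentiableAt.differentiableWithinAt)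
    (fun x hx => (h.hasDerivAt_firstIntegral hp hx).deriv)
  exact ⟨K, fun x hx => by linear_combination hK x hx⟩

theorem exists_norm_flux_le (h : IsTravelingWaveOn p c φ φ' g' (Ioo a b)) (hp : 0 < p)
    (hφ : ContinuousOn φ (Icc a b)) : ∃ M, ∀ x ∈ Ioo a b, ‖φ x * φ' x‖ ≤ M := by
  obtain ⟨K, hK⟩ := h.exists_flux_sq_eq hp.ne' isOpen_Ioo isPreconnected_Ioo
  have hrpow : ContinuousOn (fun x => φ x ^ p) (Icc a b) := hφ.rpow_const fun _ _ => .inr hp.le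
  have hcont : ContinuousOn (fun x => K + c * φ x ^ 2 - 2 / p * φ x ^ p) (Icc a b) := by fun_prop
  obtain ⟨C, hC⟩ := isCompact_Icc.exists_bound_of_continuousOn hcont
  refine ⟨√C, fun x hx => Real.abs_le_sqrt ?_⟩
  calc (φ x * φ' x) ^ 2 = K + c * φ x ^ 2 - 2 / p * φ x ^ p := hK x hx
    _ ≤ C := (le_abs_self _).trans (hC x (Ioo_subset_Icc_self hx))

end IsTravelingWaveOn

theorem stmt_6_general {p c a b : ℝ} {φ φ' g' : ℝ → ℝ} (hp : 0 < p) (hab : a < b)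
    (h : IsTravelingWaveOn p c φ φ' g' (Ioo a b)) (hφ : ContinuousOn φ (Icc a b))
    (hφa : φ a = 0) (hφb : φ b = 0) :
    c * (∫ x in Ioo a b, φ x ^ 2) + 2 * (∫ x in Ioo a b, (φ x * φ' x) ^ 2)
      - (∫ x in Ioo a b, φ x ^ p) = 0 := by
  have hsq : IntegrableOn (fun x => c * φ x ^ 2) (Ioo a b) :=
    ((hφ.pow 2).integrableOn_Icc.mono_set Ioo_subset_Icc_self).const_mul c
  have hrpow : IntegrableOn (fun x => φ x ^ p) (Ioo a b) :=
    (hφ.rpow_const fun _ _ => .inr hp.le).integrableOn_Icc.mono_set Ioo_subset_Icc_self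
  have heq : EqOn (fun x => φ x ^ 2 * g' x) (fun x => c * φ x ^ 2 - φ x ^ p) (Ioo a b) :=
    fun _ => h.sq_mul_deriv_flux
  obtain ⟨M, hM⟩ := h.exists_norm_flux_le hp hφ
  have hparts := integral_Ioo_sq_mul_deriv_flux hab hφ hφa hφb h.hasDerivAt h.hasDerivAt_flux hM
    (IntegrableOn.congr_fun (hsq.sub hrpow) heq.symm measurableSet_Ioo)
  rw [setIntegral_congr_fun measurableSet_Ioo heq, integral_sub hsq hrpow,
    integral_const_mul] at hparts
  linarith

/-- energy identity for compactly supported traveling-wave profiles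
of the degenerate KdV equation. -/
theorem stmt_6 (p c B X : ℝ) (hp : 2 ≤ p) (hX : 0 < X)
    (φ φ' φ'' g' : ℝ → ℝ)
    (hcont : Continuous φ)
    (hzero : ∀ x, X ≤ |x| → φ x = 0)
    (hpos : ∀ x ∈ Set.Ioo (-X) X, 0 < φ x)
    (hd1 : ∀ x ∈ Set.Ioo (-X) X, HasDerivAt φ (φ' x) x)
    (hd2 : ∀ x ∈ Set.Ioo (-X) X, HasDerivAt φ' (φ'' x) x)
    (hc2 : ContinuousOn φ'' (Set.Ioo (-X) X))
    (hbdd : ∃ M, ∀ x ∈ Set.Ioo (-X) X, |φ x * φ' x| ≤ M)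
    (hg : ∀ x ∈ Set.Ioo (-X) X, HasDerivAt (fun y => φ y * φ' y) (g' x) x)
    (hODE : ∀ x ∈ Set.Ioo (-X) X, -c * φ x + φ x * g' x + φ x ^ (p - 1) = 0) :
    c * (∫ x in Set.Ioo (-X) X, (φ x) ^ 2)
      + 2 * (∫ x in Set.Ioo (-X) X, (φ x * φ' x) ^ 2)
      - (∫ x in Set.Ioo (-X) X, φ x ^ p) = 0 :=
  stmt_6_general (by linarith) (by linarith) ⟨hpos, hd1, hg, hODE⟩ hcont.continuousOn
    (hzero _ (by simp [le_abs_self])) (hzero _ (le_abs_self X))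
end

section
/- Let p ≥ 2 be real, c, B ∈ ℝ, X > 0. Suppose φ : ℝ → ℝ is continuous, φ(x) = 0 for |x| ≥ X, φ is positive and twice continuously differentiable on (−X, X), φ·φ' is bounded on (−X, X), and on (−X, X) it satisfies both −c·φ + φ·(φφ')' + φ^{p−1} = 0 and −(c/2)·φ² + (1/2)·(φφ')² + (1/p)·φ^p = B. Then H(φ) = c·((p−8)/(2p+8))·M(φ) + ((p−4)/(p+4))·2·B·X, where H(φ) = (1/2)∫(φφ')² dx − (1/p)∫φ^p dx and M(φ) = ∫φ² dx. -/
open MeasureTheory Set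

/-!
Multiplying `φφ'` by `φ²` and integrating the derivative of the product gives the virial identity
`2∫(φφ')² + ∫φ²(φφ')' = 0`: the boundary terms vanish because `φ` does, while the first integral of
the profile equation keeps `φφ'` bounded. By the profile equation the identity reads
`2∫(φφ')² + c∫φ² = ∫φ^p`. Integrating the first integral gives a second linear relation among the
same three integrals, and eliminating `∫(φφ')²` and `∫φ^p` leaves the Hamiltonian in terms of the
mass.
-/

open Filter Topology

theorem setIntegral_Ioo_deriv_mul_add_mul_deriv_eq_zero {A : Type*} [NormedRing A]
    [NormedAlgebra ℝ A] [CompleteSpace A] {a b C : ℝ} {u u' v v' : ℝ → A} (hab : a < b)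
    (hu : ∀ x ∈ Ioo a b, HasDerivAt u (u' x) x) (hv : ∀ x ∈ Ioo a b, HasDerivAt v (v' x) x)
    (hint : IntegrableOn (fun x => u' x * v x + u x * v' x) (Ioo a b))
    (hu_bdd : ∀ x ∈ Ioo a b, ‖u x‖ ≤ C)
    (hva : Tendsto v (𝓝[>] a) (𝓝 0)) (hvb : Tendsto v (𝓝[<] b) (𝓝 0)) :
    ∫ x in Ioo a b, (u' x * v x + u x * v' x) = 0 := by
  have tendsto_mul_zero {l : Filter ℝ} (hl : Ioo a b ∈ l) (hvl : Tendsto v l (𝓝 0)) :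
      Tendsto (fun x => u x * v x) l (𝓝 0) :=
    isBoundedUnder_le_mul_tendsto_zero (isBoundedUnder_of_eventually_le
      (eventually_of_mem hl hu_bdd)) hvl
  rw [← integral_Ioc_eq_integral_Ioo, ← intervalIntegral.integral_of_le hab.le,
    intervalIntegral.integral_eq_sub_of_hasDerivAt_of_tendsto hab
      (fun x hx => (hu x hx).mul (hv x hx))
      ((intervalIntegrable_iff_integrableOn_Ioo_of_le hab.le).2 hint)
      (tendsto_mul_zero (Ioo_mem_nhdsGT hab) hva) (tendsto_mul_zero (Ioo_mem_nhdsLT hab) hvb),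
    sub_zero]

section Virial

variable {a b C : ℝ} {φ φ' g' : ℝ → ℝ}

theorem integrableOn_Ioo_sq_of_continuousOn_of_abs_le {g : ℝ → ℝ}
    (hg : ContinuousOn g (Ioo a b)) (hg_bdd : ∀ x ∈ Ioo a b, |g x| ≤ C) :
    IntegrableOn (fun x => g x ^ 2) (Ioo a b) := by
  refine .of_bound measure_Ioo_lt_top ((hg.pow 2).aestronglyMeasurable measurableSet_Ioo) (C ^ 2)
    (ae_restrict_of_forall_mem measurableSet_Ioo fun x hx => ?_)
  rw [norm_pow, Real.norm_eq_abs]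
  gcongr
  exact hg_bdd x hx

theorem two_mul_integral_sq_add_integral_sq_mul_deriv_eq_zero (hab : a < b)
    (hφ : ∀ x ∈ Ioo a b, HasDerivAt φ (φ' x) x)
    (hg : ∀ x ∈ Ioo a b, HasDerivAt (fun y => φ y * φ' y) (g' x) x)
    (hbdd : ∀ x ∈ Ioo a b, |φ x * φ' x| ≤ C)
    (hint : IntegrableOn (fun x => φ x ^ 2 * g' x) (Ioo a b))
    (hφa : Tendsto φ (𝓝[>] a) (𝓝 0)) (hφb : Tendsto φ (𝓝[<] b) (𝓝 0)) :
    2 * (∫ x in Ioo a b, (φ x * φ' x) ^ 2) + ∫ x in Ioo a b, φ x ^ 2 * g' x = 0 := by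
  have hsq : IntegrableOn (fun x => (φ x * φ' x) ^ 2) (Ioo a b) :=
    integrableOn_Ioo_sq_of_continuousOn_of_abs_le (HasDerivAt.continuousOn hg) hbdd
  have product_rule (x : ℝ) : g' x * φ x ^ 2 + φ x * φ' x * (2 * φ x * φ' x) =
      2 * (φ x * φ' x) ^ 2 + φ x ^ 2 * g' x := by ring
  have hφ_sq (x : ℝ) (hx : x ∈ Ioo a b) : HasDerivAt (fun y => φ y ^ 2) (2 * φ x * φ' x) x := by
    simpa using (hφ x hx).fun_pow 2
  rw [← integral_const_mul, ← integral_add (hsq.const_mul 2) hint]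
  simp only [← product_rule]
  refine setIntegral_Ioo_deriv_mul_add_mul_deriv_eq_zero hab hg hφ_sq ?_ hbdd
    (by simpa using hφa.pow 2) (by simpa using hφb.pow 2)
  simp only [product_rule]
  exact (hsq.const_mul 2).fun_add hint

end Virial

section Profile

variable {p c B a b : ℝ} {φ φ' g g' : ℝ → ℝ}

theorem integrableOn_Ioo_rpow (hp : 0 ≤ p) (hφ : ContinuousOn φ (Icc a b)) :
    IntegrableOn (fun x => φ x ^ p) (Ioo a b) :=
  (hφ.rpow_const fun _ _ => .inr hp).integrableOn_Icc.mono_set Ioo_subset_Icc_self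

theorem integrableOn_Ioo_pow (hφ : ContinuousOn φ (Icc a b)) (n : ℕ) :
    IntegrableOn (fun x => φ x ^ n) (Ioo a b) :=
  (hφ.pow n).integrableOn_Icc.mono_set Ioo_subset_Icc_self

theorem sq_eq_of_first_integral {r s : ℝ}
    (h : -(c / 2) * r ^ 2 + (1 / 2) * s ^ 2 + (1 / p) * r ^ p = B) :
    s ^ 2 = 2 * B + c * r ^ 2 - 2 / p * r ^ p := by
  linear_combination 2 * h

theorem exists_abs_le_of_first_integral (hp : 0 ≤ p) (hφ : ContinuousOn φ (Icc a b))
    (hFI : ∀ x ∈ Ioo a b,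
      -(c / 2) * φ x ^ 2 + (1 / 2) * g x ^ 2 + (1 / p) * φ x ^ p = B) :
    ∃ C, ∀ x ∈ Ioo a b, |g x| ≤ C := by
  have hcont : ContinuousOn (fun x => 2 * B + c * φ x ^ 2 - 2 / p * φ x ^ p) (Icc a b) :=
    (continuousOn_const.add (continuousOn_const.mul (hφ.pow 2))).sub
      (continuousOn_const.mul (hφ.rpow_const fun _ _ => .inr hp))
  obtain ⟨C, hC⟩ := isCompact_Icc.exists_bound_of_continuousOn hcont
  refine ⟨√C, fun x hx => Real.abs_le_sqrt ?_⟩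
  rw [sq_eq_of_first_integral (hFI x hx)]
  exact (le_abs_self _).trans (hC x (Ioo_subset_Icc_self hx))

theorem integral_sq_eq_of_first_integral (hp : 0 ≤ p) (hab : a ≤ b) (hφ : ContinuousOn φ (Icc a b))
    (hFI : ∀ x ∈ Ioo a b,
      -(c / 2) * φ x ^ 2 + (1 / 2) * g x ^ 2 + (1 / p) * φ x ^ p = B) :
    ∫ x in Ioo a b, g x ^ 2 =
      2 * B * (b - a) + c * (∫ x in Ioo a b, φ x ^ 2) - 2 / p * ∫ x in Ioo a b, φ x ^ p := by
  have hconst : IntegrableOn (fun _ => 2 * B) (Ioo a b) := integrableOn_const measure_Ioo_lt_top.ne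
  have hmass := (integrableOn_Ioo_pow hφ 2).const_mul c
  have hpot := (integrableOn_Ioo_rpow hp hφ).const_mul (2 / p)
  rw [setIntegral_congr_fun measurableSet_Ioo fun x hx => sq_eq_of_first_integral (hFI x hx),
    integral_sub (hconst.fun_add hmass) hpot, integral_add hconst hmass, setIntegral_const,
    Real.volume_real_Ioo_of_le hab, smul_eq_mul, mul_comm (b - a), integral_const_mul,
    integral_const_mul]

theorem two_mul_integral_sq_add_mul_integral_sq_eq_integral_rpow (hp : 0 < p) (hab : a < b)
    (hφ : ContinuousOn φ (Icc a b)) (hφa : φ a = 0) (hφb : φ b = 0)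
    (hφ_nonneg : ∀ x ∈ Ioo a b, 0 ≤ φ x)
    (hφ' : ∀ x ∈ Ioo a b, HasDerivAt φ (φ' x) x)
    (hg : ∀ x ∈ Ioo a b, HasDerivAt (fun y => φ y * φ' y) (g' x) x)
    (hbdd : ∃ C, ∀ x ∈ Ioo a b, |φ x * φ' x| ≤ C)
    (hODE : ∀ x ∈ Ioo a b, -c * φ x + φ x * g' x + φ x ^ (p - 1) = 0) :
    2 * (∫ x in Ioo a b, (φ x * φ' x) ^ 2) + c * (∫ x in Ioo a b, φ x ^ 2) =
      ∫ x in Ioo a b, φ x ^ p := by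
  obtain ⟨C, hC⟩ := hbdd
  have hmass := (integrableOn_Ioo_pow hφ 2).const_mul c
  have hpot := integrableOn_Ioo_rpow hp.le hφ
  have profile_eq : EqOn (fun x => φ x ^ 2 * g' x) (fun x => c * φ x ^ 2 - φ x ^ p) (Ioo a b) := by
    intro x hx
    have rpow_eq : φ x ^ p = φ x * φ x ^ (p - 1) := by
      rw [← Real.rpow_one_add' (hφ_nonneg x hx) (by linarith), add_sub_cancel]
    linear_combination φ x * hODE x hx + rpow_eq
  have hφa_lim : Tendsto φ (𝓝[>] a) (𝓝 0) := by
    simpa only [ContinuousWithinAt, nhdsWithin_Ioo_eq_nhdsGT hab, hφa] using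
      (hφ a (left_mem_Icc.2 hab.le)).mono Ioo_subset_Icc_self
  have hφb_lim : Tendsto φ (𝓝[<] b) (𝓝 0) := by
    simpa only [ContinuousWithinAt, nhdsWithin_Ioo_eq_nhdsLT hab, hφb] using
      (hφ b (right_mem_Icc.2 hab.le)).mono Ioo_subset_Icc_self
  have virial := two_mul_integral_sq_add_integral_sq_mul_deriv_eq_zero hab hφ' hg hC
    (IntegrableOn.congr_fun (Integrable.sub hmass hpot) profile_eq.symm measurableSet_Ioo)
    hφa_lim hφb_lim
  rw [setIntegral_congr_fun measurableSet_Ioo profile_eq, integral_sub hmass hpot,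
    integral_const_mul] at virial
  linear_combination virial

end Profile

theorem stmt_8_general {p c B a b : ℝ} {φ φ' g' : ℝ → ℝ} (hp : 0 < p) (hab : a < b)
    (hφ : ContinuousOn φ (Icc a b)) (hφa : φ a = 0) (hφb : φ b = 0)
    (hφ_nonneg : ∀ x ∈ Ioo a b, 0 ≤ φ x)
    (hφ' : ∀ x ∈ Ioo a b, HasDerivAt φ (φ' x) x)
    (hg : ∀ x ∈ Ioo a b, HasDerivAt (fun y => φ y * φ' y) (g' x) x)
    (hODE : ∀ x ∈ Ioo a b, -c * φ x + φ x * g' x + φ x ^ (p - 1) = 0)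
    (hFI : ∀ x ∈ Ioo a b,
      -(c / 2) * φ x ^ 2 + (1 / 2) * (φ x * φ' x) ^ 2 + (1 / p) * φ x ^ p = B) :
    (1 / 2) * (∫ x in Ioo a b, (φ x * φ' x) ^ 2) - (1 / p) * (∫ x in Ioo a b, φ x ^ p) =
      c * ((p - 8) / (2 * p + 8)) * (∫ x in Ioo a b, φ x ^ 2)
        + (p - 4) / (p + 4) * B * (b - a) := by
  have virial := two_mul_integral_sq_add_mul_integral_sq_eq_integral_rpow hp hab hφ hφa hφb
    hφ_nonneg hφ' hg (exists_abs_le_of_first_integral hp.le hφ hFI) hODE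
  have energy := integral_sq_eq_of_first_integral hp.le hab.le hφ hFI
  have hp4 : p + 4 ≠ 0 := by positivity
  rw [← virial] at energy ⊢
  field_simp at energy
  rw [show 2 * p + 8 = 2 * (p + 4) by ring]
  field_simp
  linear_combination (p - 4) * energy

/-- the relation H(Φ) = c·((p−8)/(2p+8))·M(Φ) + ((p−4)/(p+4))·2·B·X for
compacton traveling-wave profiles of the degenerate KdV equation, where
H(φ) = (1/2)∫(φφ')² − (1/p)∫φ^p and M(φ) = ∫φ². -/
theorem stmt_8 (p c B X : ℝ) (hp : 2 ≤ p) (hX : 0 < X)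
    (φ φ' φ'' g' : ℝ → ℝ)
    (hcont : Continuous φ)
    (hzero : ∀ x, X ≤ |x| → φ x = 0)
    (hpos : ∀ x ∈ Set.Ioo (-X) X, 0 < φ x)
    (hd1 : ∀ x ∈ Set.Ioo (-X) X, HasDerivAt φ (φ' x) x)
    (hd2 : ∀ x ∈ Set.Ioo (-X) X, HasDerivAt φ' (φ'' x) x)
    (hc2 : ContinuousOn φ'' (Set.Ioo (-X) X))
    (hbdd : ∃ M, ∀ x ∈ Set.Ioo (-X) X, |φ x * φ' x| ≤ M)
    (hg : ∀ x ∈ Set.Ioo (-X) X, HasDerivAt (fun y => φ y * φ' y) (g' x) x)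
    (hODE : ∀ x ∈ Set.Ioo (-X) X, -c * φ x + φ x * g' x + φ x ^ (p - 1) = 0)
    (hFI : ∀ x ∈ Set.Ioo (-X) X,
      -(c / 2) * (φ x) ^ 2 + (1 / 2) * (φ x * φ' x) ^ 2 + (1 / p) * φ x ^ p = B) :
    (1 / 2) * (∫ x in Set.Ioo (-X) X, (φ x * φ' x) ^ 2)
      - (1 / p) * (∫ x in Set.Ioo (-X) X, φ x ^ p)
      = c * ((p - 8) / (2 * p + 8)) * (∫ x in Set.Ioo (-X) X, (φ x) ^ 2)
        + ((p - 4) / (p + 4)) * 2 * B * X := by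
  have hends : φ (-X) = 0 ∧ φ X = 0 := ⟨hzero _ (by simp [le_abs_self]), hzero _ (le_abs_self X)⟩
  rw [stmt_8_general (by linarith) (by linarith) hcont.continuousOn hends.1 hends.2
    (fun x hx => (hpos x hx).le) hd1 hg hODE hFI]
  ring
end

section
/- Let B ≥ 0 and c ∈ ℝ satisfy B > 0, or B = 0 and c > 0. Set Z = √(4B + c²), let x₀ ∈ (0, π/√2] be the least positive solution of cos(√2·x₀) = −c/Z, and let Φ(x) = √(c + Z·cos(√2·x)) for |x| ≤ x₀ and Φ(x) = 0 otherwise. Then M(Φ) = ∫Φ² dx = 2c·x₀ + 2√2·√B, and H(Φ) = (1/2)∫(ΦΦ')² dx − (1/4)∫Φ⁴ dx = −(c/4)·(2c·x₀ + 2√2·√B) = −(c/4)·M(Φ). -/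
open MeasureTheory

/-!
Put `w = Φ²`. Inside the support, `w = c + Z cos (√2 x)` solves the linear equation
`w'' = 2 (c - w)`, and `w` vanishes at both endpoints. Integrating the equation gives the mass as
`c` times the length of the support minus half the jump of `w'`. Integrating it against `w` gives
`∫ w'² = -∫ w w'' = 2 ∫ w² - 2 c ∫ w`. Since `Φ Φ' = w' / 2`, the Hamiltonian is
`(1/8) ∫ w'² - (1/4) ∫ w²`; the quartic terms cancel and `-(c/4) ∫ w` remains.
-/

namespace DegenerateKdV

open Set

section IntervalIntegrals

theorem integral_eq_intervalIntegral_of_eqOn_Ioo {E : Type*} [NormedAddCommGroup E]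
    [NormedSpace ℝ E] {μ : Measure ℝ} [NullSingletonClass μ] {a b : ℝ} (hab : a ≤ b)
    {F f : ℝ → E} (h_in : EqOn F f (Ioo a b)) (h_out : ∀ x ∉ Icc a b, F x = 0) :
    ∫ x, F x ∂μ = ∫ x in a..b, f x ∂μ := by
  rw [← intervalIntegral.integral_congr_Ioo_of_le hab h_in,
    intervalIntegral.integral_of_le hab, ← integral_Icc_eq_integral_Ioc,
    setIntegral_eq_integral_of_forall_compl_eq_zero h_out]

variable {a b c k : ℝ} {w w' : ℝ → ℝ}

theorem mul_integral_of_shifted_oscillator (hw : IntervalIntegrable w volume a b)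
    (hw' : ∀ x ∈ uIcc a b, HasDerivAt w' (k * (c - w x)) x) :
    k * ∫ x in a..b, w x = k * c * (b - a) - (w' b - w' a) := by
  have h_ftc := intervalIntegral.integral_eq_sub_of_hasDerivAt hw'
    ((intervalIntegrable_const.sub hw).const_mul k)
  rw [intervalIntegral.integral_const_mul, intervalIntegral.integral_sub
    intervalIntegrable_const hw, intervalIntegral.integral_const,
    smul_eq_mul] at h_ftc
  linear_combination -h_ftc

theorem integral_deriv_sq_of_shifted_oscillator (hw : ∀ x ∈ uIcc a b, HasDerivAt w (w' x) x)
    (hw' : ∀ x ∈ uIcc a b, HasDerivAt w' (k * (c - w x)) x) (ha : w a = 0) (hb : w b = 0) :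
    ∫ x in a..b, w' x ^ 2 = k * (∫ x in a..b, w x ^ 2) - k * c * ∫ x in a..b, w x := by
  have hw_cont : ContinuousOn w (uIcc a b) := HasDerivAt.continuousOn hw
  have hw'_cont : ContinuousOn w' (uIcc a b) := HasDerivAt.continuousOn hw'
  calc ∫ x in a..b, w' x ^ 2
      = -∫ x in a..b, w x * (k * (c - w x)) := by
        rw [intervalIntegral.integral_mul_deriv_eq_deriv_mul hw hw' hw'_cont.intervalIntegrable
          (ContinuousOn.intervalIntegrable (by fun_prop)), ha, hb]
        simp only [pow_two, zero_mul, sub_self, zero_sub, neg_neg]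
    _ = ∫ x in a..b, (k * w x ^ 2 - k * c * w x) := by
        rw [← intervalIntegral.integral_neg]
        congr! 2 with x
        ring
    _ = k * (∫ x in a..b, w x ^ 2) - k * c * ∫ x in a..b, w x := by
        rw [intervalIntegral.integral_sub (ContinuousOn.intervalIntegrable (by fun_prop))
          (ContinuousOn.intervalIntegrable (by fun_prop)), intervalIntegral.integral_const_mul,
          intervalIntegral.integral_const_mul]

end IntervalIntegrals

/-- The mass `M(u) = ∫ u²`. -/
noncomputable def mass (u : ℝ → ℝ) : ℝ := ∫ x, u x ^ 2

/-- The Hamiltonian `H(u) = (1/2) ∫ (u u')² - (1/4) ∫ u⁴` of the degenerate KdV equation with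
`p = 4`. Where `u` is not differentiable, `deriv` makes the integrand of the first term zero; for
compactons this concerns only the endpoints of the support. -/
noncomputable def hamiltonian (u : ℝ → ℝ) : ℝ :=
  (1 / 2) * (∫ x, (u x * deriv u x) ^ 2) - (1 / 4) * ∫ x, u x ^ 4

/-- The function `√w` on `s`, extended by zero: the shape of a compacton, described through its
square `w`. -/
noncomputable def truncSqrt (w : ℝ → ℝ) (s : Set ℝ) : ℝ → ℝ := s.indicator fun x => √(w x)

section TruncSqrt

variable {a b c : ℝ} {w w' : ℝ → ℝ} {s : Set ℝ} {x : ℝ}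

theorem truncSqrt_of_mem (hx : x ∈ s) : truncSqrt w s x = √(w x) := indicator_of_mem hx _

theorem truncSqrt_of_notMem (hx : x ∉ s) : truncSqrt w s x = 0 := indicator_of_notMem hx _

theorem truncSqrt_mul_deriv {w'x : ℝ} (hs : s ∈ nhds x) (hw : HasDerivAt w w'x x)
    (h_pos : 0 < w x) : truncSqrt w s x * deriv (truncSqrt w s) x = w'x / 2 := by
  have h_eq : truncSqrt w s =ᶠ[nhds x] fun y => √(w y) := by
    filter_upwards [hs] with y hy using truncSqrt_of_mem hy
  rw [((hw.sqrt h_pos.ne').congr_of_eventuallyEq h_eq).deriv, h_eq.eq_of_nhds]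
  field_simp [(Real.sqrt_pos.2 h_pos).ne']

theorem integral_truncSqrt_pow_two_mul (hab : a ≤ b) (hw : ∀ x ∈ Ioo a b, 0 ≤ w x) {n : ℕ}
    (hn : n ≠ 0) : ∫ x, truncSqrt w (Icc a b) x ^ (2 * n) = ∫ x in a..b, w x ^ n := by
  refine integral_eq_intervalIntegral_of_eqOn_Ioo hab (fun x hx => ?_) fun x hx => ?_
  · rw [truncSqrt_of_mem (Ioo_subset_Icc_self hx), pow_mul, Real.sq_sqrt (hw x hx)]
  · rw [truncSqrt_of_notMem hx, zero_pow (by lia)]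

theorem mass_truncSqrt (hab : a ≤ b) (hw : ∀ x ∈ Ioo a b, 0 ≤ w x) :
    mass (truncSqrt w (Icc a b)) = ∫ x in a..b, w x := by
  simpa only [mass, mul_one, pow_one] using integral_truncSqrt_pow_two_mul hab hw one_ne_zero

theorem hamiltonian_truncSqrt (hab : a ≤ b) (h_pos : ∀ x ∈ Ioo a b, 0 < w x)
    (hw : ∀ x ∈ Ioo a b, HasDerivAt w (w' x) x) :
    hamiltonian (truncSqrt w (Icc a b)) =
      (1 / 8) * (∫ x in a..b, w' x ^ 2) - (1 / 4) * ∫ x in a..b, w x ^ 2 := by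
  have h_kinetic : ∫ x, (truncSqrt w (Icc a b) x * deriv (truncSqrt w (Icc a b)) x) ^ 2 =
      ∫ x in a..b, (1 / 4) * w' x ^ 2 := by
    refine integral_eq_intervalIntegral_of_eqOn_Ioo hab (fun x hx => ?_) fun x hx => ?_
    · rw [truncSqrt_mul_deriv (Icc_mem_nhds hx.1 hx.2) (hw x hx) (h_pos x hx)]
      ring
    · rw [truncSqrt_of_notMem hx, zero_mul, zero_pow two_ne_zero]
  have h_quartic : ∫ x, truncSqrt w (Icc a b) x ^ 4 = ∫ x in a..b, w x ^ 2 :=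
    integral_truncSqrt_pow_two_mul hab (fun x hx => (h_pos x hx).le) two_ne_zero
  rw [hamiltonian, h_kinetic, h_quartic, intervalIntegral.integral_const_mul]
  ring

theorem hamiltonian_truncSqrt_eq_neg_mul_mass (hab : a ≤ b) (h_pos : ∀ x ∈ Ioo a b, 0 < w x)
    (hw : ∀ x ∈ Icc a b, HasDerivAt w (w' x) x)
    (hw' : ∀ x ∈ Icc a b, HasDerivAt w' (2 * (c - w x)) x) (ha : w a = 0) (hb : w b = 0) :
    hamiltonian (truncSqrt w (Icc a b)) = -(c / 4) * mass (truncSqrt w (Icc a b)) := by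
  rw [hamiltonian_truncSqrt hab h_pos fun x hx => hw x (Ioo_subset_Icc_self hx),
    mass_truncSqrt hab fun x hx => (h_pos x hx).le]
  rw [← uIcc_of_le hab] at hw hw'
  rw [integral_deriv_sq_of_shifted_oscillator hw hw' ha hb]
  ring

end TruncSqrt

section Cosine

theorem cos_lt_cos_of_abs_lt {x y : ℝ} (hxy : |x| < y) (hy : y ≤ Real.pi) :
    Real.cos y < Real.cos x :=
  Real.cos_abs x ▸ Real.cos_lt_cos_of_nonneg_of_le_pi (abs_nonneg x) hy hxy

theorem mul_sin_eq_sqrt {r θ : ℝ} (hr : 0 ≤ r) (hθ₀ : 0 ≤ θ) (hθ : θ ≤ Real.pi) :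
    r * Real.sin θ = √(r ^ 2 - (r * Real.cos θ) ^ 2) := by
  rw [Real.sin_eq_sqrt_one_sub_cos_sq hθ₀ hθ, mul_pow, ← mul_one_sub,
    Real.sqrt_mul (sq_nonneg r), Real.sqrt_sq hr]

/-- The cosine wave of amplitude `Z` and angular frequency `ω` about the level `c`. -/
noncomputable def shiftedCos (c Z ω x : ℝ) : ℝ := c + Z * Real.cos (ω * x)

variable {c Z ω : ℝ}

theorem shiftedCos_neg (x : ℝ) : shiftedCos c Z ω (-x) = shiftedCos c Z ω x := by
  rw [shiftedCos, shiftedCos, mul_neg, Real.cos_neg]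

theorem hasDerivAt_shiftedCos (x : ℝ) :
    HasDerivAt (shiftedCos c Z ω) (-(ω * Z * Real.sin (ω * x))) x :=
  (((hasDerivAt_const_mul ω).cos.const_mul Z).const_add c).congr_deriv (by ring)

theorem hasDerivAt_deriv_shiftedCos (x : ℝ) :
    HasDerivAt (fun y => -(ω * Z * Real.sin (ω * y))) (ω ^ 2 * (c - shiftedCos c Z ω x)) x :=
  ((hasDerivAt_const_mul ω).sin.const_mul (ω * Z)).neg.congr_deriv
    (by rw [shiftedCos]; ring)

theorem shiftedCos_pos_of_mem_Ioo {x x₀ : ℝ} (hZ : 0 < Z) (hω : 0 < ω) (hx₀ : ω * x₀ ≤ Real.pi)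
    (h_zero : shiftedCos c Z ω x₀ = 0) (hx : x ∈ Ioo (-x₀) x₀) :
    0 < shiftedCos c Z ω x := by
  have h_abs : |ω * x| < ω * x₀ := by
    rw [abs_mul, abs_of_pos hω]
    exact mul_lt_mul_of_pos_left (abs_lt.2 hx) hω
  rw [← h_zero, shiftedCos, shiftedCos]
  gcongr
  exact cos_lt_cos_of_abs_lt h_abs hx₀

end Cosine

/-- The compacton with parameters `c`, `Z` and half-width `x₀`; the paper's `Φ_{B,c}` arises for
`Z = √(4B + c²)` and `x₀` the first positive zero of `c + Z cos (√2 x)`. -/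
noncomputable def compacton (c Z x₀ : ℝ) : ℝ → ℝ :=
  truncSqrt (shiftedCos c Z √2) (Icc (-x₀) x₀)

section Compacton

variable {c Z x₀ : ℝ}

theorem compacton_apply (x : ℝ) :
    compacton c Z x₀ x = if |x| ≤ x₀ then √(c + Z * Real.cos (√2 * x)) else 0 := by
  simp only [compacton, truncSqrt, shiftedCos, indicator_apply, mem_Icc, abs_le]

theorem hasDerivAt_deriv_shiftedCos_sqrt_two (x : ℝ) :
    HasDerivAt (fun y => -(√2 * Z * Real.sin (√2 * y))) (2 * (c - shiftedCos c Z √2 x)) x := by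
  simpa only [Real.sq_sqrt zero_le_two] using hasDerivAt_deriv_shiftedCos (ω := √2) x

theorem mass_compacton (hZ : 0 < Z) (hx₀_nonneg : 0 ≤ x₀) (hx₀ : √2 * x₀ ≤ Real.pi)
    (h_zero : shiftedCos c Z √2 x₀ = 0) :
    mass (compacton c Z x₀) = 2 * c * x₀ + √2 * (Z * Real.sin (√2 * x₀)) := by
  rw [compacton, mass_truncSqrt (by linarith) fun x hx =>
    (shiftedCos_pos_of_mem_Ioo hZ (by positivity) hx₀ h_zero hx).le]
  have h_cont : Continuous (shiftedCos c Z √2) := by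
    unfold shiftedCos
    fun_prop
  have h_int := mul_integral_of_shifted_oscillator (h_cont.intervalIntegrable (-x₀) x₀)
    fun x _ => hasDerivAt_deriv_shiftedCos_sqrt_two x
  rw [mul_neg, Real.sin_neg] at h_int
  linear_combination h_int / 2

theorem hamiltonian_compacton (hZ : 0 < Z) (hx₀_nonneg : 0 ≤ x₀) (hx₀ : √2 * x₀ ≤ Real.pi)
    (h_zero : shiftedCos c Z √2 x₀ = 0) :
    hamiltonian (compacton c Z x₀) = -(c / 4) * mass (compacton c Z x₀) :=
  hamiltonian_truncSqrt_eq_neg_mul_mass (by linarith)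
    (fun _ hx => shiftedCos_pos_of_mem_Ioo hZ (by positivity) hx₀ h_zero hx)
    (fun x _ => hasDerivAt_shiftedCos x) (fun x _ => hasDerivAt_deriv_shiftedCos_sqrt_two x)
    (by rw [shiftedCos_neg, h_zero]) h_zero

end Compacton

end DegenerateKdV

open DegenerateKdV

/-- mass and Hamiltonian of the explicit p = 4 compacton Φ_{B,c}:
M(Φ) = 2c·x₀ + 2√2·√B and H(Φ) = −(c/4)·M(Φ). -/
theorem stmt_9 (B c : ℝ) (hB : 0 ≤ B) (hcase : 0 < B ∨ (B = 0 ∧ 0 < c))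
    (Z : ℝ) (hZ : Z = Real.sqrt (4 * B + c ^ 2))
    (x₀ : ℝ) (hx₀pos : 0 < x₀) (hx₀le : x₀ ≤ Real.pi / Real.sqrt 2)
    (hx₀ : Real.cos (Real.sqrt 2 * x₀) = -c / Z)
    (hleast : ∀ y, 0 < y → Real.cos (Real.sqrt 2 * y) = -c / Z → x₀ ≤ y)
    (Φ : ℝ → ℝ)
    (hΦ : ∀ x, Φ x = if |x| ≤ x₀
      then Real.sqrt (c + Z * Real.cos (Real.sqrt 2 * x)) else 0) :
    (∫ x, (Φ x) ^ 2) = 2 * c * x₀ + 2 * Real.sqrt 2 * Real.sqrt B ∧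
    (1 / 2) * (∫ x, (Φ x * deriv Φ x) ^ 2) - (1 / 4) * (∫ x, (Φ x) ^ 4)
      = -(c / 4) * (2 * c * x₀ + 2 * Real.sqrt 2 * Real.sqrt B) := by
  have h_rad : 0 < 4 * B + c ^ 2 := by
    rcases hcase with hB_pos | ⟨-, hc⟩ <;> positivity
  have hZ_pos : 0 < Z := hZ ▸ Real.sqrt_pos.2 h_rad
  have hx₀_le : √2 * x₀ ≤ Real.pi := (le_div_iff₀' (by positivity)).1 hx₀le
  have hZ_cos : Z * Real.cos (√2 * x₀) = -c := by rw [hx₀, mul_div_cancel₀ _ hZ_pos.ne']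
  have hZ_sin : Z * Real.sin (√2 * x₀) = 2 * √B := by
    have h_sub : Z ^ 2 - (-c) ^ 2 = 2 ^ 2 * B := by rw [hZ, Real.sq_sqrt h_rad.le]; ring
    rw [mul_sin_eq_sqrt hZ_pos.le (by positivity) hx₀_le, hZ_cos, h_sub,
      Real.sqrt_mul (sq_nonneg 2), Real.sqrt_sq zero_le_two]
  have h_zero : shiftedCos c Z √2 x₀ = 0 := by
    rw [shiftedCos, hZ_cos, add_neg_cancel]
  obtain rfl : Φ = compacton c Z x₀ := funext fun x => (hΦ x).trans (compacton_apply x).symm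
  have h_mass : mass (compacton c Z x₀) = 2 * c * x₀ + 2 * √2 * √B := by
    rw [mass_compacton hZ_pos hx₀pos.le hx₀_le h_zero, hZ_sin]
    ring
  exact ⟨h_mass, h_mass ▸ hamiltonian_compacton hZ_pos hx₀pos.le hx₀_le h_zero⟩
end

section
/- Let m > 0 and let B ≥ 0, c ∈ ℝ satisfy B > 0, or B = 0 and c > 0. Set Z = √(4B + c²) and let x₀ ∈ (0, π/√2] be the least positive solution of cos(√2·x₀) = −c/Z. If 2c·x₀ + 2√2·√B = m, then c ≤ m/(√2·π), with equality if and only if B = 0. -/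
/-!
With `s = π - √2 x₀ ∈ [0, π)`, the defining relation of `x₀` says that `(Z, s)` are the polar
coordinates of the point `(c, 2√B)`. In these coordinates the mass satisfies
`m / (√2 π) - c = (Z / π) (sin s - s cos s)`. By strict concavity of `sin` on `[0, π]`, its tangent
at `s > 0` is flatter than the chord from `0` to `s`, so this gap is nonnegative and vanishes only
at `s = 0`, that is, when `2√B = Z sin s` vanishes.
-/

open Real Set

lemma mul_cos_lt_sin {x : ℝ} (hx : 0 < x) (hxπ : x ≤ π) : x * cos x < sin x := by
  have tangent_lt_chord : cos x < slope sin 0 x :=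
    strictConcaveOn_sin_Icc.lt_slope_of_hasDerivAt ⟨le_rfl, pi_pos.le⟩ ⟨hx.le, hxπ⟩ hx
      (hasDerivAt_sin x)
  rwa [slope_def_field, sin_zero, sub_zero, sub_zero, lt_div_iff₀' hx] at tangent_lt_chord

lemma mul_cos_le_sin {x : ℝ} (hx : x ∈ Icc 0 π) : x * cos x ≤ sin x := by
  rcases hx.1.eq_or_lt with rfl | hx_pos
  · simp
  · exact (mul_cos_lt_sin hx_pos hx.2).le

lemma mul_cos_eq_sin_iff {x : ℝ} (hx : x ∈ Icc 0 π) : x * cos x = sin x ↔ x = 0 := by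
  refine ⟨fun h ↦ ?_, by rintro rfl; simp⟩
  by_contra hx_ne
  exact (mul_cos_lt_sin (hx.1.lt_of_ne' hx_ne) hx.2).ne h

lemma mul_sin_eq_of_mul_cos_eq {r a b s : ℝ} (hr : 0 ≤ r) (hb : 0 ≤ b) (hs : s ∈ Icc 0 π)
    (hnorm : r ^ 2 = a ^ 2 + b ^ 2) (hcos : r * cos s = a) : r * sin s = b := by
  refine (sq_eq_sq₀ (mul_nonneg hr (sin_nonneg_of_mem_Icc hs)) hb).mp ?_
  calc (r * sin s) ^ 2 = r ^ 2 - (r * cos s) ^ 2 := by rw [mul_pow, sin_sq]; ring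
    _ = b ^ 2 := by rw [hcos, hnorm]; ring

lemma exists_eq_pi_sub_div_sqrt_two {x : ℝ} (hpos : 0 < x) (hle : x ≤ π / √2) :
    ∃ s ∈ Ico 0 π, x = (π - s) / √2 := by
  rw [le_div_iff₀' (by positivity)] at hle
  refine ⟨π - √2 * x, ⟨sub_nonneg.mpr hle, sub_lt_self π (by positivity)⟩, ?_⟩
  rw [sub_sub_cancel, mul_div_cancel_left₀ _ (by positivity)]

/-- The mass `2 c x₀ + 2√2 √B` of a compacton, in the polar coordinates
`(c, 2√B) = (r cos s, r sin s)`; there `cos (√2 x₀) = -c / Z` becomes `x₀ = (π - s) / √2`. -/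
noncomputable def compactonMass (r s : ℝ) : ℝ :=
  2 * (r * cos s) * ((π - s) / √2) + √2 * (r * sin s)

lemma compactonMass_div_sub_speed (r s : ℝ) :
    compactonMass r s / (√2 * π) - r * cos s = r / π * (sin s - s * cos s) := by
  have sqrt_two_sq : √2 ^ 2 = 2 := sq_sqrt zero_le_two
  rw [compactonMass]
  field_simp
  rw [sqrt_two_sq]
  ring

lemma speed_le_compactonMass_div {r s : ℝ} (hr : 0 ≤ r) (hs : s ∈ Icc 0 π) :
    r * cos s ≤ compactonMass r s / (√2 * π) := by
  rw [← sub_nonneg, compactonMass_div_sub_speed]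
  exact mul_nonneg (by positivity) (sub_nonneg.mpr (mul_cos_le_sin hs))

lemma speed_eq_compactonMass_div_iff {r s : ℝ} (hr : r ≠ 0) (hs : s ∈ Icc 0 π) :
    r * cos s = compactonMass r s / (√2 * π) ↔ s = 0 := by
  have scale_ne : r / π ≠ 0 := div_ne_zero hr pi_ne_zero
  rw [eq_comm, ← sub_eq_zero, compactonMass_div_sub_speed, mul_eq_zero_iff_left scale_ne,
    sub_eq_zero, eq_comm, mul_cos_eq_sin_iff hs]

/-- among p = 4 compactons of fixed mass m, the speed satisfies
c ≤ m/(√2·π), with equality iff B = 0. -/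
theorem stmt_10 (m B c Z x₀ : ℝ) (hm : 0 < m) (hB : 0 ≤ B)
    (hcase : 0 < B ∨ (B = 0 ∧ 0 < c))
    (hZ : Z = Real.sqrt (4 * B + c ^ 2))
    (hx₀pos : 0 < x₀) (hx₀le : x₀ ≤ Real.pi / Real.sqrt 2)
    (hx₀ : Real.cos (Real.sqrt 2 * x₀) = -c / Z)
    (hleast : ∀ y, 0 < y → Real.cos (Real.sqrt 2 * y) = -c / Z → x₀ ≤ y)
    (hmass : 2 * c * x₀ + 2 * Real.sqrt 2 * Real.sqrt B = m) :
    c ≤ m / (Real.sqrt 2 * Real.pi) ∧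
      (c = m / (Real.sqrt 2 * Real.pi) ↔ B = 0) := by
  have radicand_pos : 0 < 4 * B + c ^ 2 := by
    rcases hcase with hB_pos | ⟨rfl, hc⟩ <;> positivity
  have Z_pos : 0 < Z := hZ ▸ sqrt_pos.mpr radicand_pos
  have Z_sq : Z ^ 2 = c ^ 2 + (2 * √B) ^ 2 := by
    rw [hZ, sq_sqrt radicand_pos.le, mul_pow, sq_sqrt hB]; ring
  obtain ⟨s, ⟨s_nonneg, s_lt_pi⟩, rfl⟩ := exists_eq_pi_sub_div_sqrt_two hx₀pos hx₀le
  have s_mem : s ∈ Icc 0 π := ⟨s_nonneg, s_lt_pi.le⟩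
  have polar_cos : Z * cos s = c := by
    rw [mul_div_cancel₀ _ (by positivity), cos_pi_sub, neg_div, neg_inj] at hx₀
    rw [hx₀, mul_div_cancel₀ _ Z_pos.ne']
  have polar_sin : Z * sin s = 2 * √B :=
    mul_sin_eq_of_mul_cos_eq Z_pos.le (by positivity) s_mem Z_sq polar_cos
  have mass_polar : m = compactonMass Z s := by
    rw [← hmass, compactonMass, polar_cos, polar_sin]; ring
  have B_eq_zero_iff : B = 0 ↔ s = 0 := by
    rw [← sin_eq_zero_iff_of_lt_of_lt (by linarith) s_lt_pi, ← sqrt_eq_zero hB,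
      ← mul_eq_zero_iff_left (two_ne_zero (α := ℝ)), ← polar_sin, mul_eq_zero_iff_left Z_pos.ne']
  rw [B_eq_zero_iff, mass_polar, ← polar_cos]
  exact ⟨speed_le_compactonMass_div Z_pos.le s_mem, speed_eq_compactonMass_div_iff Z_pos.ne' s_mem⟩
end

section
/- Let 2 < p < 8 and m > 0. There exists a constant C ≥ 0 such that for every nonnegative, integrable, locally absolutely continuous ρ : ℝ → ℝ with ∫ρ dx = m and ρ' ∈ L²(ℝ), one has (1/8)∫(ρ')² dx − (1/p)∫ρ^{p/2} dx ≥ −C. In other words, I_m := inf{𝓗(ρ) : ρ ≥ 0, ρ ∈ L¹ ∩ H¹-type class, ∫ρ = m} > −∞. -/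
open MeasureTheory

/-! A function `f` on the line with `f' ∈ L²` varies by at most `√(L ∫‖f'‖²)` over an interval
of length `L`, whereas integrability makes `f` take a value of norm at most `L⁻¹ ∫‖f‖` there.
Choosing `L` so that the variation is half of `‖f x‖` gives `‖f x‖³ ≤ 8 (∫‖f‖) (∫‖f'‖²)`. Hence
`∫‖f‖^q` is controlled, at fixed mass, by the power `(q - 1) / 3` of `∫‖f'‖²`. This power is below
`1` exactly when `q < 4`, that is `p = 2q < 8`, and then Young's inequality absorbs it into the
gradient term.
-/

section Measure

variable {α E : Type*} [MeasurableSpace α] {μ : Measure α} [NormedAddCommGroup E] {f : α → E}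

lemma sq_integral_norm_le [IsFiniteMeasure μ] (hf : MemLp f 2 μ) :
    (∫ x, ‖f x‖ ∂μ) ^ 2 ≤ μ.real Set.univ * ∫ x, ‖f x‖ ^ 2 ∂μ := by
  have hf' : MemLp (fun x ↦ ‖f x‖) (ENNReal.ofReal 2) μ := by simpa using hf.norm
  have h_schwarz := integral_mul_norm_le_Lp_mul_Lq (f := fun _ ↦ (1 : ℝ)) .two_two
    (memLp_const 1) hf'
  simp only [norm_one, norm_norm, one_mul, integral_const, smul_eq_mul, Real.rpow_ofNat, one_pow,
    mul_one, ← Real.sqrt_eq_rpow] at h_schwarz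
  rw [← Real.sqrt_mul measureReal_nonneg] at h_schwarz
  exact (Real.le_sqrt (by positivity) (by positivity)).1 h_schwarz

lemma integral_norm_rpow_le_of_norm_le {B q : ℝ} (hq : 1 ≤ q) (hf : Integrable f μ)
    (hB : ∀ᵐ x ∂μ, ‖f x‖ ≤ B) :
    ∫ x, ‖f x‖ ^ q ∂μ ≤ B ^ (q - 1) * ∫ x, ‖f x‖ ∂μ := by
  rw [← integral_const_mul]
  refine integral_mono_of_nonneg (.of_forall fun x ↦ by positivity) (hf.norm.const_mul _) ?_
  filter_upwards [hB] with x hx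
  calc ‖f x‖ ^ q = ‖f x‖ ^ (q - 1) * ‖f x‖ := by
        rw [← Real.rpow_add_one' (norm_nonneg _) (by linarith), sub_add_cancel]
    _ ≤ B ^ (q - 1) * ‖f x‖ := by gcongr

end Measure

lemma exists_forall_mul_rpow_le_mul_add (K : ℝ) {θ ε : ℝ} (hθ₀ : 0 ≤ θ) (hθ₁ : θ < 1)
    (hε : 0 < ε) : ∃ C, 0 ≤ C ∧ ∀ t, 0 ≤ t → K * t ^ θ ≤ ε * t + C := by
  set C := (|K| / ε ^ θ) ^ (1 - θ)⁻¹
  have hC : 0 ≤ C := by positivity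
  have hC_rpow : C ^ (1 - θ) = |K| / ε ^ θ :=
    Real.rpow_inv_rpow (by positivity) (by linarith)
  refine ⟨C, hC, fun t ht ↦ ?_⟩
  calc K * t ^ θ ≤ |K| * t ^ θ := by gcongr; exact le_abs_self K
    _ = (ε * t) ^ θ * C ^ (1 - θ) := by
        rw [hC_rpow, Real.mul_rpow hε.le ht]
        field_simp
    _ ≤ θ * (ε * t) + (1 - θ) * C :=
        Real.geom_mean_le_arith_mean2_weighted hθ₀ (by linarith) (by positivity) hC (by ring)
    _ ≤ 1 * (ε * t) + 1 * C := by gcongr; linarith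
    _ = ε * t + C := by ring

section Line

variable {E : Type*} [NormedAddCommGroup E] {f : ℝ → E}

lemma exists_mem_Ioc_mul_norm_le_integral_norm (hf : Integrable f) (x : ℝ) {L : ℝ} (hL : 0 < L) :
    ∃ y ∈ Set.Ioc x (x + L), L * ‖f y‖ ≤ ∫ z, ‖f z‖ := by
  obtain ⟨y, hy, hfy⟩ := exists_le_setAverage (μ := volume) (s := Set.Ioc x (x + L))
    (by simpa using hL) (by simp) hf.norm.integrableOn
  refine ⟨y, hy, ?_⟩
  rw [setAverage_eq, Real.volume_real_Ioc_of_le (by linarith), add_sub_cancel_left, smul_eq_mul,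
    le_inv_mul_iff₀ hL] at hfy
  exact hfy.trans (setIntegral_le_integral hf.norm (.of_forall fun z ↦ norm_nonneg _))

variable [NormedSpace ℝ E] {f' : ℝ → E}

lemma norm_sub_sq_le_mul_integral_norm_sq (hftc : ∀ a b, f b - f a = ∫ x in a..b, f' x)
    (hf' : MemLp f' 2) (a b : ℝ) :
    ‖f b - f a‖ ^ 2 ≤ |b - a| * ∫ x, ‖f' x‖ ^ 2 := by
  calc ‖f b - f a‖ ^ 2 ≤ (∫ x in Set.uIoc a b, ‖f' x‖) ^ 2 := by
        rw [hftc]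
        gcongr
        exact intervalIntegral.norm_integral_le_integral_norm_uIoc
    _ ≤ volume.real (Set.uIoc a b) * ∫ x in Set.uIoc a b, ‖f' x‖ ^ 2 := by
        have : IsFiniteMeasure (volume.restrict (Set.uIoc a b)) := ⟨by simp⟩
        simpa using sq_integral_norm_le (hf'.restrict (Set.uIoc a b))
    _ ≤ |b - a| * ∫ x, ‖f' x‖ ^ 2 := by
        rw [measureReal_def, Real.volume_uIoc, ENNReal.toReal_ofReal (abs_nonneg _)]
        exact mul_le_mul_of_nonneg_left (setIntegral_le_integral
          (hf'.integrable_norm_pow two_ne_zero) (.of_forall fun x ↦ by positivity)) (abs_nonneg _)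

lemma mul_norm_le_two_mul_integral_norm (hftc : ∀ a b, f b - f a = ∫ x in a..b, f' x)
    (hf' : MemLp f' 2) (hf : Integrable f) {x L : ℝ} (hL : 0 < L)
    (hLx : L * ∫ y, ‖f' y‖ ^ 2 ≤ (‖f x‖ / 2) ^ 2) :
    L * ‖f x‖ ≤ 2 * ∫ y, ‖f y‖ := by
  obtain ⟨y, ⟨hxy, hyL⟩, hfy⟩ := exists_mem_Ioc_mul_norm_le_integral_norm hf x hL
  have h_sub : ‖f x - f y‖ ≤ ‖f x‖ / 2 := by
    refine le_of_sq_le_sq ?_ (by positivity)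
    calc ‖f x - f y‖ ^ 2 ≤ |x - y| * ∫ z, ‖f' z‖ ^ 2 :=
          norm_sub_sq_le_mul_integral_norm_sq hftc hf' y x
      _ ≤ L * ∫ z, ‖f' z‖ ^ 2 := by
          gcongr
          rw [abs_sub_le_iff]
          constructor <;> linarith
      _ ≤ (‖f x‖ / 2) ^ 2 := hLx
  have h_half : ‖f x‖ / 2 ≤ ‖f y‖ := by linarith [norm_sub_norm_le (f x) (f y)]
  calc L * ‖f x‖ = 2 * (L * (‖f x‖ / 2)) := by ring
    _ ≤ 2 * (L * ‖f y‖) := by gcongr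
    _ ≤ 2 * ∫ z, ‖f z‖ := by gcongr

lemma norm_pow_three_le_integral_norm_mul_integral_norm_sq
    (hftc : ∀ a b, f b - f a = ∫ x in a..b, f' x) (hf' : MemLp f' 2)
    (hf : Integrable f) (x : ℝ) :
    ‖f x‖ ^ 3 ≤ 8 * (∫ y, ‖f y‖) * ∫ y, ‖f' y‖ ^ 2 := by
  rcases (norm_nonneg (f x)).eq_or_lt with hfx | hfx
  · rw [← hfx, zero_pow three_ne_zero]
    positivity
  have mul_norm_le (L : ℝ) (hL : 0 < L) :=
    mul_norm_le_two_mul_integral_norm hftc hf' hf (x := x) hL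
  set m := ∫ y, ‖f y‖
  set D := ∫ y, ‖f' y‖ ^ 2
  have : 0 ≤ m := integral_nonneg fun y ↦ norm_nonneg _
  have hD : 0 ≤ D := integral_nonneg fun y ↦ by positivity
  rcases hD.eq_or_lt with hD | hD
  · have h_absurd := mul_norm_le ((2 * m + 1) / ‖f x‖) (by positivity)
      (by rw [← hD, mul_zero]; positivity)
    rw [div_mul_cancel₀ _ hfx.ne'] at h_absurd
    linarith
  · have h := mul_norm_le (‖f x‖ ^ 2 / (4 * D)) (by positivity) (by field_simp; norm_num)
    rw [div_mul_eq_mul_div, div_le_iff₀ (by positivity)] at h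
    linarith

lemma integral_norm_rpow_le_rpow_integral_norm_sq_mul_integral_norm
    (hftc : ∀ a b, f b - f a = ∫ x in a..b, f' x) (hf' : MemLp f' 2)
    (hf : Integrable f) {q : ℝ} (hq : 1 ≤ q) :
    ∫ x, ‖f x‖ ^ q
      ≤ (8 * (∫ x, ‖f x‖) * ∫ x, ‖f' x‖ ^ 2) ^ ((q - 1) / 3) * ∫ x, ‖f x‖ := by
  have h_nonneg : 0 ≤ 8 * (∫ x, ‖f x‖) * ∫ x, ‖f' x‖ ^ 2 := by positivity
  have h_sup (x : ℝ) : ‖f x‖ ≤ (8 * (∫ y, ‖f y‖) * ∫ y, ‖f' y‖ ^ 2) ^ (3⁻¹ : ℝ) := by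
    rw [Real.le_rpow_inv_iff_of_pos (norm_nonneg _) h_nonneg (by norm_num)]
    exact_mod_cast norm_pow_three_le_integral_norm_mul_integral_norm_sq hftc hf' hf x
  have h := integral_norm_rpow_le_of_norm_le hq hf (.of_forall h_sup)
  rwa [← Real.rpow_mul h_nonneg, inv_mul_eq_div] at h

end Line

lemma exists_integral_norm_rpow_le_mul_integral_norm_sq_add (E : Type*) [NormedAddCommGroup E]
    [NormedSpace ℝ E] (m : ℝ) {q ε : ℝ} (hq₁ : 1 ≤ q) (hq₄ : q < 4) (hε : 0 < ε) :
    ∃ C, 0 ≤ C ∧ ∀ f f' : ℝ → E, Integrable f → (∀ a b, f b - f a = ∫ x in a..b, f' x) →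
      MemLp f' 2 → (∫ x, ‖f x‖) ≤ m → ∫ x, ‖f x‖ ^ q ≤ ε * (∫ x, ‖f' x‖ ^ 2) + C := by
  obtain ⟨C, hC, h_young⟩ := exists_forall_mul_rpow_le_mul_add ((8 * m) ^ ((q - 1) / 3) * m)
    (θ := (q - 1) / 3) (by linarith) (by linarith) hε
  refine ⟨C, hC, fun f f' hf hftc hf' h_mass ↦ ?_⟩
  have hm : 0 ≤ m := le_trans (by positivity) h_mass
  have hD : 0 ≤ ∫ x, ‖f' x‖ ^ 2 := by positivity
  calc ∫ x, ‖f x‖ ^ q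
      ≤ (8 * (∫ x, ‖f x‖) * ∫ x, ‖f' x‖ ^ 2) ^ ((q - 1) / 3) * ∫ x, ‖f x‖ :=
        integral_norm_rpow_le_rpow_integral_norm_sq_mul_integral_norm hftc hf' hf hq₁
    _ ≤ (8 * m * ∫ x, ‖f' x‖ ^ 2) ^ ((q - 1) / 3) * m := by gcongr
    _ = (8 * m) ^ ((q - 1) / 3) * m * (∫ x, ‖f' x‖ ^ 2) ^ ((q - 1) / 3) := by
        rw [Real.mul_rpow (by positivity) hD, mul_right_comm]
    _ ≤ ε * (∫ x, ‖f' x‖ ^ 2) + C := h_young _ hD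

theorem stmt_13_general (E : Type*) [NormedAddCommGroup E] [NormedSpace ℝ E] (p m : ℝ)
    (hp1 : 2 ≤ p) (hp2 : p < 8) :
    ∃ C : ℝ, 0 ≤ C ∧ ∀ f f' : ℝ → E, Integrable f →
      (∀ a b : ℝ, f b - f a = ∫ x in a..b, f' x) → MemLp f' 2 → (∫ x, ‖f x‖) ≤ m →
      -C ≤ (1 / 8) * (∫ x, ‖f' x‖ ^ 2) - (1 / p) * (∫ x, ‖f x‖ ^ (p / 2)) := by
  have : 0 < p := by linarith
  obtain ⟨C, hC, h_bound⟩ := exists_integral_norm_rpow_le_mul_integral_norm_sq_add E m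
    (q := p / 2) (ε := p / 8) (by linarith) (by linarith) (by positivity)
  refine ⟨1 / p * C, by positivity, fun f f' hf hftc hf' h_mass ↦ ?_⟩
  have h : 1 / p * ∫ x, ‖f x‖ ^ (p / 2) ≤ 1 / p * (p / 8 * (∫ x, ‖f' x‖ ^ 2) + C) := by
    gcongr
    exact h_bound f f' hf hftc hf' h_mass
  have h_cancel : 1 / p * (p / 8 * (∫ x, ‖f' x‖ ^ 2) + C)
      = 1 / 8 * (∫ x, ‖f' x‖ ^ 2) + 1 / p * C := by
    field_simp
  linarith

/-- for 2 < p < 8, the energy 𝓗(ρ) = (1/8)∫(ρ')² − (1/p)∫ρ^{p/2} is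
bounded below on the set of nonnegative ρ with ∫ρ = m. -/
theorem stmt_13 (p m : ℝ) (hp1 : 2 < p) (hp2 : p < 8) (hm : 0 < m) :
    ∃ C : ℝ, 0 ≤ C ∧ ∀ (ρ ρ' : ℝ → ℝ),
      (∀ x, 0 ≤ ρ x) →
      Integrable ρ →
      (∀ a b : ℝ, ρ b - ρ a = ∫ x in a..b, ρ' x) →
      MemLp ρ' 2 (volume : Measure ℝ) →
      (∫ x, ρ x) = m →
      -C ≤ (1 / 8) * (∫ x, (ρ' x) ^ 2) - (1 / p) * (∫ x, ρ x ^ (p / 2)) := by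
  obtain ⟨C, hC, h_bound⟩ := stmt_13_general ℝ p m hp1.le hp2
  refine ⟨C, hC, fun ρ ρ' hρ hρ_int hftc hρ' h_mass ↦ ?_⟩
  simpa only [Real.norm_eq_abs, sq_abs, abs_of_nonneg (hρ _), h_mass, le_refl, true_imp_iff]
    using h_bound ρ ρ' hρ_int hftc hρ'
end

section
/- Let 2 < p < 8 and m > 0. There exists a nonnegative, smooth, compactly supported function ρ : ℝ → ℝ with ∫ρ dx = m such that (1/8)∫(ρ')² dx − (1/p)∫ρ^{p/2} dx < 0. Hence the infimum I_m of 𝓗 over the constraint set {ρ ≥ 0, ∫ρ = m} is strictly negative. -/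
open MeasureTheory
open Module (finrank)

/-!
The scaling `ρ ↦ l ^ d • ρ (l • ·)` on a `d`-dimensional space preserves the mass, multiplies
`∫ ‖∇ρ‖ ^ 2` by `l ^ (d + 2)` and `∫ ρ ^ q` by `l ^ (d * q - d)`. As soon as these two powers of `l`
differ, i.e. `d * q ≠ 2 * (d + 1)`, one of the limits `l → 0`, `l → ∞` makes the potential term
dominate. For `d = 1` and `q = p / 2` the excluded case is the mass-critical exponent `p = 8`.
-/

lemma exists_pos_rpow_mul_lt_rpow_mul {α β B : ℝ} (hαβ : α ≠ β) (A : ℝ) (hB : 0 < B) :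
    ∃ l : ℝ, 0 < l ∧ l ^ α * A < l ^ β * B := by
  obtain ⟨t, ht, hAB⟩ : ∃ t : ℝ, 0 < t ∧ A * t < B := exists_pos_mul_lt hB A
  set l : ℝ := t ^ (α - β)⁻¹
  have hl : 0 < l := Real.rpow_pos_of_pos ht _
  have hlt : l ^ (α - β) = t := Real.rpow_inv_rpow ht.le (sub_ne_zero.2 hαβ)
  refine ⟨l, hl, ?_⟩
  calc l ^ α * A = l ^ β * (A * t) := by
        rw [← hlt, Real.rpow_sub hl]
        field_simp
    _ < l ^ β * B := by gcongr

lemma integral_rpow_pos_of_hasCompactSupport {X : Type*} [TopologicalSpace X] [MeasurableSpace X]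
    [OpensMeasurableSpace X] {μ : Measure X} [IsFiniteMeasureOnCompacts μ] [μ.IsOpenPosMeasure]
    {f : X → ℝ} {q : ℝ} (hf : Continuous f) (hsupp : HasCompactSupport f) (hnonneg : 0 ≤ f)
    (hne : f ≠ 0) (hq : 0 < q) : 0 < ∫ x, f x ^ q ∂μ := by
  obtain ⟨x, hx⟩ := Function.ne_iff.1 hne
  exact (hf.rpow_const fun _ ↦ .inr hq.le).integral_pos_of_hasCompactSupport_nonneg_nonzero
    (hsupp.comp_left (g := (· ^ q)) (Real.zero_rpow hq.ne'))
    (fun y ↦ Real.rpow_nonneg (hnonneg y) q)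
    (Real.rpow_pos_of_pos ((hnonneg x).lt_of_ne' hx) q).ne'

section NormedSpace

variable {E F : Type*} [NormedAddCommGroup E] [NormedSpace ℝ E]
  [NormedAddCommGroup F] [NormedSpace ℝ F]

/-- The mass-preserving scaling `x ↦ l ^ d • ρ (l • x)` of a function `ρ` on a space of
dimension `d`. -/
noncomputable def massScaling (l : ℝ) (ρ : E → F) (x : E) : F :=
  l ^ finrank ℝ E • ρ (l • x)

lemma contDiff_massScaling {n : WithTop ℕ∞} {ρ : E → F} (hρ : ContDiff ℝ n ρ) (l : ℝ) :
    ContDiff ℝ n (massScaling l ρ) :=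
  (hρ.comp (contDiff_const_smul l)).const_smul _

lemma hasCompactSupport_massScaling {l : ℝ} {ρ : E → F} (hρ : HasCompactSupport ρ) (hl : l ≠ 0) :
    HasCompactSupport (massScaling l ρ) :=
  (hρ.comp_smul hl).smul_left (f := fun _ ↦ l ^ finrank ℝ E)

lemma fderiv_massScaling (l : ℝ) (ρ : E → F) (x : E) :
    fderiv ℝ (massScaling l ρ) x = l ^ (finrank ℝ E + 1) • fderiv ℝ ρ (l • x) := by
  rw [pow_succ, mul_smul, ← fderiv_comp_smul]
  exact congrFun (fderiv_const_smul_field (l ^ finrank ℝ E)) x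

variable [FiniteDimensional ℝ E] [MeasurableSpace E] [BorelSpace E]

lemma exists_nonneg_contDiff_hasCompactSupport_integral_eq (μ : Measure E)
    [IsLocallyFiniteMeasure μ] [μ.IsOpenPosMeasure] {m : ℝ} (hm : 0 ≤ m) :
    ∃ ρ : E → ℝ, (∀ x, 0 ≤ ρ x) ∧ ContDiff ℝ (⊤ : ℕ∞) ρ ∧ HasCompactSupport ρ ∧
      ∫ x, ρ x ∂μ = m := by
  let f : ContDiffBump (0 : E) := ⟨1, 2, one_pos, one_lt_two⟩
  refine ⟨fun x ↦ m * f.normed μ x, fun x ↦ mul_nonneg hm (f.nonneg_normed x),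
    contDiff_const.mul f.contDiff_normed, f.hasCompactSupport_normed.mul_left, ?_⟩
  rw [integral_const_mul, f.integral_normed, mul_one]

variable (μ : Measure E) [μ.IsAddHaarMeasure] {l : ℝ}

lemma integral_massScaling (hl : 0 < l) (ρ : E → F) :
    ∫ x, massScaling l ρ x ∂μ = ∫ x, ρ x ∂μ := by
  simp only [massScaling]
  rw [integral_smul, Measure.integral_comp_smul_of_nonneg μ ρ l (hR := hl.le),
    smul_inv_smul₀ (pow_pos hl _).ne']

lemma integral_pow_mul_comp_smul_rpow (hl : 0 < l) {f : E → ℝ} (hf : ∀ x, 0 ≤ f x) (k : ℕ)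
    (r : ℝ) :
    ∫ x, (l ^ k * f (l • x)) ^ r ∂μ = l ^ (k * r - finrank ℝ E) * ∫ x, f x ^ r ∂μ := by
  have hpow : l ^ (k * r - finrank ℝ E) = (l ^ k) ^ r * (l ^ finrank ℝ E)⁻¹ := by
    rw [Real.rpow_sub hl, Real.rpow_mul hl.le, Real.rpow_natCast, Real.rpow_natCast, div_eq_mul_inv]
  simp_rw [Real.mul_rpow (pow_pos hl k).le (hf _)]
  rw [integral_const_mul,
    Measure.integral_comp_smul_of_nonneg μ (fun x ↦ f x ^ r) l (hR := hl.le), smul_eq_mul, hpow,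
    mul_assoc]

lemma integral_massScaling_rpow (hl : 0 < l) {ρ : E → ℝ} (hρ : ∀ x, 0 ≤ ρ x) (q : ℝ) :
    ∫ x, massScaling l ρ x ^ q ∂μ =
      l ^ (finrank ℝ E * q - finrank ℝ E) * ∫ x, ρ x ^ q ∂μ :=
  integral_pow_mul_comp_smul_rpow μ hl hρ _ q

lemma integral_norm_fderiv_massScaling_rpow (hl : 0 < l) (ρ : E → F) (r : ℝ) :
    ∫ x, ‖fderiv ℝ (massScaling l ρ) x‖ ^ r ∂μ =
      l ^ ((finrank ℝ E + 1 : ℕ) * r - finrank ℝ E) * ∫ x, ‖fderiv ℝ ρ x‖ ^ r ∂μ := by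
  simp_rw [fderiv_massScaling, norm_smul, Real.norm_of_nonneg (pow_pos hl _).le]
  exact integral_pow_mul_comp_smul_rpow μ hl (fun x ↦ norm_nonneg (fderiv ℝ ρ x)) _ r

theorem stmt_14_general (a : ℝ) {b q m : ℝ} (hb : 0 < b) (hq : 0 < q)
    (hcrit : finrank ℝ E * q ≠ 2 * (finrank ℝ E + 1)) (hm : 0 < m) :
    ∃ ρ : E → ℝ,
      (∀ x, 0 ≤ ρ x) ∧
      ContDiff ℝ (⊤ : ℕ∞) ρ ∧
      HasCompactSupport ρ ∧
      ∫ x, ρ x ∂μ = m ∧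
      a * ∫ x, ‖fderiv ℝ ρ x‖ ^ 2 ∂μ - b * ∫ x, ρ x ^ q ∂μ < 0 := by
  obtain ⟨φ, hnonneg, hsmooth, hsupp, hmass⟩ :=
    exists_nonneg_contDiff_hasCompactSupport_integral_eq (E := E) μ hm.le
  have hne : φ ≠ 0 := by
    rintro rfl
    simp [hm.ne] at hmass
  have hpotential : 0 < ∫ x, φ x ^ q ∂μ :=
    integral_rpow_pos_of_hasCompactSupport hsmooth.continuous hsupp hnonneg hne hq
  have hexponents : ((finrank ℝ E + 1 : ℕ) * 2 - finrank ℝ E : ℝ) ≠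
      finrank ℝ E * q - finrank ℝ E := by
    push_cast
    exact fun h ↦ hcrit (by linarith)
  obtain ⟨l, hl, hlt⟩ := exists_pos_rpow_mul_lt_rpow_mul hexponents
    (a * ∫ x, ‖fderiv ℝ φ x‖ ^ (2 : ℝ) ∂μ) (mul_pos hb hpotential)
  refine ⟨massScaling l φ, fun x ↦ mul_nonneg (pow_pos hl _).le (hnonneg _),
    contDiff_massScaling hsmooth l, hasCompactSupport_massScaling hsupp hl.ne',
    (integral_massScaling μ hl φ).trans hmass, ?_⟩
  simp_rw [← Real.rpow_two]
  rw [integral_norm_fderiv_massScaling_rpow μ hl, integral_massScaling_rpow μ hl hnonneg]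
  linarith

end NormedSpace

/-- for 2 < p < 8 and m > 0 there is a nonnegative smooth compactly
supported ρ with ∫ρ = m and 𝓗(ρ) = (1/8)∫(ρ')² − (1/p)∫ρ^{p/2} < 0. -/
theorem stmt_14 (p m : ℝ) (hp1 : 2 < p) (hp2 : p < 8) (hm : 0 < m) :
    ∃ ρ : ℝ → ℝ,
      (∀ x, 0 ≤ ρ x) ∧
      ContDiff ℝ (⊤ : ℕ∞) ρ ∧
      HasCompactSupport ρ ∧
      (∫ x, ρ x) = m ∧
      (1 / 8) * (∫ x, (deriv ρ x) ^ 2) - (1 / p) * (∫ x, ρ x ^ (p / 2)) < 0 := by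
  simpa only [← norm_deriv_eq_norm_fderiv, Real.norm_eq_abs, sq_abs] using
    stmt_14_general (E := ℝ) volume (1 / 8) (b := 1 / p) (q := p / 2) (by positivity)
      (by linarith) (by rw [Module.finrank_self]; push_cast; linarith) hm
end

section
/- Let 2 < p < 8 and m > 0. Let A_m be the set of nonnegative, integrable, locally absolutely continuous functions ρ : ℝ → ℝ with ∫ρ dx = m and derivative ρ' ∈ L²(ℝ). Then the minimization problem for 𝓗(ρ) = (1/8)∫(ρ')² dx − (1/p)∫ρ^{p/2} dx over A_m admits a minimizer: there exists ρ* ∈ A_m such that 𝓗(ρ*) ≤ 𝓗(ρ) for all ρ ∈ A_m. -/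
open MeasureTheory

/-! The argument is a calibration. If `M` is the maximum of a density `u` of mass `m` and
`g(t)² = M^(q - 1) t - t^q`, then completing the square in `(u')² + g(u)²` on both sides of the
maximum gives `∫ (u')² - ∫ u^q ≥ 4 ∫₀^M g - M^(q - 1) m = 4 I M^(q/2 + 1) - M^(q - 1) m`, with
`I = ∫₀¹ √(t - t^q)`. For `M = 1` equality holds for the compacton, the bump whose two branches
solve `|φ'| = √(φ - φ^q)`; its mass satisfies the virial identity `(q - 1) ∫ φ = 2 (q + 2) I`, so
for `m = ∫ φ` and `q ≤ 4` Bernoulli's inequality shows that the lower bound is smallest at `M = 1`.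
Hence `φ` is a minimizer for its own mass, and for `q < 4` changing the height and the width of `φ`
reaches every mass and every pair of positive coefficients. -/

section Primitive

open Set Filter
open scoped Topology Interval

lemma mapClusterPt_zero_of_integrable {α E : Type*} [MeasurableSpace α] {μ : Measure α}
    [NormedAddCommGroup E] {f : α → E} (hf : Integrable f μ) {l : Filter α}
    (hl : ∀ s ∈ l, μ s = ⊤) : MapClusterPt 0 l f := by
  rw [Metric.nhds_basis_ball.mapClusterPt_iff_frequently]
  intro ε hε hfar
  have hlarge : {x | ε ≤ ‖f x‖} ∈ l := by
    filter_upwards [hfar] with x hx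
    simpa using hx
  exact (hf.measure_norm_ge_lt_top hε).ne (hl _ hlarge)

lemma absolutelyContinuousOnInterval_lipschitz_comp {X Y : Type*} [PseudoMetricSpace X]
    [PseudoMetricSpace Y] {G : X → Y} {u : ℝ → X} {K : NNReal} {a b : ℝ}
    (hG : LipschitzOnWith K G (u '' [[a, b]])) (hu : AbsolutelyContinuousOnInterval u a b) :
    AbsolutelyContinuousOnInterval (G ∘ u) a b := by
  refine squeeze_zero' (.of_forall fun E ↦ Finset.sum_nonneg fun i _ ↦ dist_nonneg)
    ?_ (by simpa using Tendsto.const_mul (K : ℝ) hu)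
  filter_upwards [mem_inf_of_right (mem_principal_self _)] with E hE
  rw [Finset.mul_sum]
  refine Finset.sum_le_sum fun i hi ↦ ?_
  obtain ⟨ha, hb⟩ := hE.1 i hi
  exact hG.dist_le_mul _ (mem_image_of_mem u ha) _ (mem_image_of_mem u hb)

/-- `u` is a primitive of the locally integrable function `u'`: this is how local absolute
continuity of `u`, with almost everywhere derivative `u'`, is expressed here. -/
structure IsPrimitive (u u' : ℝ → ℝ) : Prop where
  locallyIntegrable : LocallyIntegrable u'
  sub_eq_integral : ∀ a b, u b - u a = ∫ x in a..b, u' x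

namespace IsPrimitive

variable {u u' g : ℝ → ℝ}

lemma intervalIntegrable (h : IsPrimitive u u') (a b : ℝ) :
    IntervalIntegrable u' volume a b :=
  (h.locallyIntegrable.integrableOn_isCompact isCompact_uIcc).intervalIntegrable

lemma eq_add_integral (h : IsPrimitive u u') (a : ℝ) : u = fun x ↦ u a + ∫ t in a..x, u' t := by
  ext x
  rw [← h.sub_eq_integral, add_sub_cancel]

lemma continuous (h : IsPrimitive u u') : Continuous u := by
  rw [h.eq_add_integral 0]
  exact continuous_const.add (intervalIntegral.continuous_primitive h.intervalIntegrable 0)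

lemma ae_hasDerivAt (h : IsPrimitive u u') : ∀ᵐ x, HasDerivAt u (u' x) x := by
  filter_upwards [LocallyIntegrable.ae_hasDerivAt_integral h.locallyIntegrable] with x hx
  rw [h.eq_add_integral 0]
  exact (hx 0).const_add (u 0)

lemma absolutelyContinuousOnInterval (h : IsPrimitive u u') (a b : ℝ) :
    AbsolutelyContinuousOnInterval u a b := by
  have hprim := (h.intervalIntegrable a b).absolutelyContinuousOnInterval_intervalIntegral
    (c := a) left_mem_uIcc
  refine hprim.congr fun E ↦ Finset.sum_congr rfl fun i _ ↦ ?_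
  rw [h.eq_add_integral a, dist_add_left]

lemma integral_comp_mul (h : IsPrimitive u u') (hg : Continuous g) (a b : ℝ) :
    ∫ x in a..b, g (u x) * u' x = ∫ t in u a..u b, g t := by
  set G : ℝ → ℝ := fun t ↦ ∫ s in (0 : ℝ)..t, g s
  have hG (t : ℝ) : HasDerivAt G (g t) t := hg.integral_hasStrictDerivAt 0 t |>.hasDerivAt
  have hG_contDiff : ContDiff ℝ 1 G := contDiff_one_iff_deriv.2
    ⟨fun t ↦ (hG t).differentiableAt, by rwa [funext fun t ↦ (hG t).deriv]⟩
  obtain ⟨K, hK⟩ := hG_contDiff.locallyLipschitz.locallyLipschitzOn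
    |>.exists_lipschitzOnWith_of_compact ((isCompact_uIcc (a := a) (b := b)).image h.continuous)
  have hderiv : ∀ᵐ x, x ∈ Ι a b → deriv (G ∘ u) x = g (u x) * u' x := by
    filter_upwards [h.ae_hasDerivAt] with x hx _
    exact ((hG (u x)).comp x hx).deriv
  rw [← intervalIntegral.integral_congr_ae hderiv,
    (absolutelyContinuousOnInterval_lipschitz_comp hK
      (h.absolutelyContinuousOnInterval a b)).integral_deriv_eq_sub]
  exact intervalIntegral.integral_interval_sub_left (hg.intervalIntegrable _ _)
    (hg.intervalIntegrable _ _)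

lemma two_mul_abs_integral_le (h : IsPrimitive u u') (hg : Continuous g)
    (hE : LocallyIntegrable fun x ↦ u' x ^ 2 + g (u x) ^ 2) (a b : ℝ) :
    2 * |∫ t in u a..u b, g t| ≤ ∫ x in Ι a b, (u' x ^ 2 + g (u x) ^ 2) := by
  have hgu' : IntervalIntegrable (fun x ↦ g (u x) * u' x) volume a b :=
    (h.intervalIntegrable a b).continuousOn_mul (hg.comp h.continuous).continuousOn
  calc 2 * |∫ t in u a..u b, g t|
      ≤ 2 * ∫ x in Ι a b, |g (u x) * u' x| := by
        rw [← h.integral_comp_mul hg]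
        gcongr
        exact intervalIntegral.norm_integral_le_integral_norm_uIoc (f := fun x ↦ g (u x) * u' x)
    _ = ∫ x in Ι a b, 2 * |g (u x) * u' x| := (integral_const_mul _ _).symm
    _ ≤ ∫ x in Ι a b, (u' x ^ 2 + g (u x) ^ 2) := by
        refine setIntegral_mono (hgu'.def'.norm.const_mul 2)
          ((hE.integrableOn_isCompact isCompact_uIcc).mono_set uIoc_subset_uIcc) fun x ↦ ?_
        simp only [abs_mul, ← sq_abs (u' x), ← sq_abs (g (u x))]
        linarith [two_mul_le_add_sq |g (u x)| |u' x|]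

lemma two_mul_abs_integral_le_setIntegral (h : IsPrimitive u u') (hg : Continuous g)
    (hE : Integrable fun x ↦ u' x ^ 2 + g (u x) ^ 2) {l : Filter ℝ} {z c : ℝ} {s : Set ℝ}
    (hz : MapClusterPt z l u) (hs : ∀ᶠ b in l, Ι c b ⊆ s) :
    2 * |∫ t in z..u c, g t| ≤ ∫ x in s, (u' x ^ 2 + g (u x) ^ 2) := by
  have hclosed : IsClosed {t | 2 * |∫ r in t..u c, g r| ≤ ∫ x in s, (u' x ^ 2 + g (u x) ^ 2)} := by
    simp only [intervalIntegral.integral_symm (u c)]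
    exact isClosed_le ((intervalIntegral.continuous_primitive
      (fun _ _ ↦ hg.intervalIntegrable _ _) (u c)).neg.abs.const_mul 2) continuous_const
  refine hclosed.mem_of_mapClusterPt hz (hs.mono fun b hb ↦ ?_)
  refine (h.two_mul_abs_integral_le hg hE.locallyIntegrable b c).trans ?_
  rw [uIoc_comm]
  exact setIntegral_mono_set hE.integrableOn (.of_forall fun x ↦ by positivity) hb.eventuallyLE

lemma four_mul_integral_le (h : IsPrimitive u u') (hu : Integrable u) (hg : Continuous g)
    (hE : Integrable fun x ↦ u' x ^ 2 + g (u x) ^ 2) (c : ℝ) :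
    4 * ∫ t in (0 : ℝ)..u c, g t ≤ ∫ x, (u' x ^ 2 + g (u x) ^ 2) := by
  have hbot : MapClusterPt 0 atBot u := mapClusterPt_zero_of_integrable hu fun s hs ↦ by
    obtain ⟨a, ha⟩ := mem_atBot_sets.1 hs
    exact measure_mono_top (fun x hx ↦ ha x hx) (Real.volume_Iic (a := a))
  have htop : MapClusterPt 0 atTop u := mapClusterPt_zero_of_integrable hu fun s hs ↦ by
    obtain ⟨a, ha⟩ := mem_atTop_sets.1 hs
    exact measure_mono_top (fun x hx ↦ ha x hx) (Real.volume_Ici (a := a))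
  have hleft := h.two_mul_abs_integral_le_setIntegral hg hE (s := Iic c) hbot <| by
    filter_upwards [eventually_le_atBot c] with b hb
    exact uIoc_of_ge hb ▸ Ioc_subset_Iic_self
  have hright := h.two_mul_abs_integral_le_setIntegral hg hE (s := Ioi c) htop <| by
    filter_upwards [eventually_ge_atTop c] with b hb
    exact uIoc_of_le hb ▸ Ioc_subset_Ioi_self
  rw [← intervalIntegral.integral_Iic_add_Ioi hE.integrableOn hE.integrableOn (b := c)]
  linarith [le_abs_self (∫ t in (0 : ℝ)..u c, g t)]

lemma four_mul_integral_iSup_le (h : IsPrimitive u u') (hu : Integrable u)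
    (hbdd : BddAbove (range u)) (hg : Continuous g)
    (hE : Integrable fun x ↦ u' x ^ 2 + g (u x) ^ 2) :
    4 * ∫ t in (0 : ℝ)..⨆ x, u x, g t ≤ ∫ x, (u' x ^ 2 + g (u x) ^ 2) := by
  have hclosed : IsClosed {r | 4 * ∫ t in (0 : ℝ)..r, g t ≤ ∫ x, (u' x ^ 2 + g (u x) ^ 2)} :=
    isClosed_le ((intervalIntegral.continuous_primitive
      (fun _ _ ↦ hg.intervalIntegrable _ _) 0).const_mul 4) continuous_const
  exact closure_minimal (range_subset_iff.2 fun c ↦ h.four_mul_integral_le hu hg hE c) hclosed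
    (csSup_mem_closure (range_nonempty u) hbdd)

-- The choice `g = √` turns the potential `g(u)²` into the integrable function `u`.
lemma bddAbove_range (h : IsPrimitive u u') (h0 : ∀ x, 0 ≤ u x) (hu : Integrable u)
    (hu' : Integrable fun x ↦ u' x ^ 2) : BddAbove (range u) := by
  have hE : Integrable fun x ↦ u' x ^ 2 + √(u x) ^ 2 := by
    simp only [Real.sq_sqrt (h0 _)]
    exact hu'.add hu
  set C := ∫ x, (u' x ^ 2 + √(u x) ^ 2)
  refine ⟨C ^ (3 / 2 : ℝ)⁻¹, forall_mem_range.2 fun c ↦ ?_⟩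
  have hbound := h.four_mul_integral_le hu Real.continuous_sqrt hE c
  have hsqrt : ∫ t in (0 : ℝ)..u c, √t = u c ^ (3 / 2 : ℝ) / (3 / 2) := by
    simp only [Real.sqrt_eq_rpow]
    rw [integral_rpow (Or.inl (by norm_num))]
    norm_num
  have hpos : 0 ≤ u c ^ (3 / 2 : ℝ) := Real.rpow_nonneg (h0 c) _
  rw [Real.le_rpow_inv_iff_of_pos (h0 c) (by linarith) (by norm_num)]
  linarith

end IsPrimitive

end Primitive

section Energy

/-- The function of height `a` and width `ℓ` built on the shape `f`. -/
noncomputable def rescale (a ℓ : ℝ) (f : ℝ → ℝ) (x : ℝ) : ℝ := a * f (x / ℓ)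

lemma rescale_rescale (a b k ℓ : ℝ) (f : ℝ → ℝ) :
    rescale a k (rescale b ℓ f) = rescale (a * b) (k * ℓ) f := by
  ext x
  simp only [rescale, div_div, mul_assoc]

lemma rescale_one_one (f : ℝ → ℝ) : rescale 1 1 f = f := by
  ext x
  simp only [rescale, div_one, one_mul]

/-- `IsAdmissible m ρ ρ'`: the function `ρ` belongs to the class `A_m` of admissible densities of
mass `m`, and `ρ'` is its derivative in the almost everywhere sense. -/
structure IsAdmissible (m : ℝ) (ρ ρ' : ℝ → ℝ) : Prop where
  nonneg : ∀ x, 0 ≤ ρ x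
  integrable : Integrable ρ
  sub_eq_integral : ∀ a b : ℝ, ρ b - ρ a = ∫ x in a..b, ρ' x
  memLp_deriv : MemLp ρ' 2
  integral_eq : ∫ x, ρ x = m

/-- The energy `α ∫ (ρ')² - β ∫ ρ^q`; the functional `𝓗` of exponent `p` is
`energy (1 / 8) (1 / p) (p / 2)`. -/
noncomputable def energy (α β q : ℝ) (ρ ρ' : ℝ → ℝ) : ℝ :=
  α * (∫ x, ρ' x ^ 2) - β * ∫ x, ρ x ^ q

/-- `ρ`, with derivative `ρ'`, minimizes the energy among admissible densities of mass `m`. -/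
structure IsEnergyMinimizer (α β q m : ℝ) (ρ ρ' : ℝ → ℝ) : Prop where
  isAdmissible : IsAdmissible m ρ ρ'
  energy_le : ∀ {σ σ' : ℝ → ℝ}, IsAdmissible m σ σ' → energy α β q ρ ρ' ≤ energy α β q σ σ'

variable {α β q m a ℓ : ℝ} {ρ ρ' : ℝ → ℝ}

lemma integral_rescale (a : ℝ) (hℓ : 0 < ℓ) (f : ℝ → ℝ) :
    ∫ x, rescale a ℓ f x = a * ℓ * ∫ x, f x := by
  simp only [rescale]
  rw [integral_const_mul, Measure.integral_comp_div f, abs_of_pos hℓ, smul_eq_mul, mul_assoc]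

lemma IsAdmissible.isPrimitive (h : IsAdmissible m ρ ρ') : IsPrimitive ρ ρ' where
  locallyIntegrable := h.memLp_deriv.locallyIntegrable one_le_two
  sub_eq_integral := h.sub_eq_integral

lemma memLp_comp_div {E : Type*} [NormedAddCommGroup E] {f : ℝ → E} {r : ENNReal}
    (hf : MemLp f r) (hℓ : ℓ ≠ 0) : MemLp (fun x ↦ f (x / ℓ)) r := by
  have hmap : Measure.map (fun x : ℝ ↦ x / ℓ) volume = ENNReal.ofReal |ℓ| • volume := by
    simpa only [div_eq_mul_inv, inv_inv] using Real.map_volume_mul_right (inv_ne_zero hℓ)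
  have : MemLp f r (Measure.map (fun x : ℝ ↦ x / ℓ) volume) := by
    rw [hmap]
    exact hf.smul_measure ENNReal.ofReal_ne_top
  exact this.comp_of_map (by fun_prop)

lemma IsAdmissible.rescale (h : IsAdmissible m ρ ρ') (ha : 0 < a) (hℓ : 0 < ℓ) :
    IsAdmissible (a * ℓ * m) (rescale a ℓ ρ) (rescale (a / ℓ) ℓ ρ') where
  nonneg x := mul_nonneg ha.le (h.nonneg _)
  integrable := (h.integrable.comp_div hℓ.ne').const_mul a
  sub_eq_integral c d := by
    simp only [_root_.rescale]
    rw [intervalIntegral.integral_const_mul, intervalIntegral.integral_comp_div _ hℓ.ne',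
      ← h.sub_eq_integral, smul_eq_mul]
    field_simp
  memLp_deriv := (memLp_comp_div h.memLp_deriv hℓ.ne').const_mul _
  integral_eq := by rw [integral_rescale a hℓ, h.integral_eq]

lemma energy_rescale (h0 : ∀ x, 0 ≤ ρ x) (ha : 0 < a) (hℓ : 0 < ℓ) :
    energy α β q (rescale a ℓ ρ) (rescale (a / ℓ) ℓ ρ') =
      energy (α * (a ^ 2 / ℓ)) (β * (a ^ q * ℓ)) q ρ ρ' := by
  have hkin : ∫ x, rescale (a / ℓ) ℓ ρ' x ^ 2 = a ^ 2 / ℓ * ∫ x, ρ' x ^ 2 := by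
    have hsq (x : ℝ) : rescale (a / ℓ) ℓ ρ' x ^ 2 =
        rescale ((a / ℓ) ^ 2) ℓ (fun y ↦ ρ' y ^ 2) x := mul_pow _ _ 2
    simp only [hsq, integral_rescale _ hℓ]
    field_simp
  have hpot : ∫ x, rescale a ℓ ρ x ^ q = a ^ q * ℓ * ∫ x, ρ x ^ q := by
    have hrpow (x : ℝ) : rescale a ℓ ρ x ^ q = rescale (a ^ q) ℓ (fun y ↦ ρ y ^ q) x :=
      Real.mul_rpow ha.le (h0 _)
    simp only [hrpow, integral_rescale _ hℓ]
  simp only [energy, hkin, hpot, mul_assoc]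

lemma energy_mul_mul (c α β q : ℝ) (ρ ρ' : ℝ → ℝ) :
    energy (c * α) (c * β) q ρ ρ' = c * energy α β q ρ ρ' := by
  simp only [energy]
  ring

namespace IsEnergyMinimizer

lemma const_mul {c : ℝ} (h : IsEnergyMinimizer α β q m ρ ρ') (hc : 0 ≤ c) :
    IsEnergyMinimizer (c * α) (c * β) q m ρ ρ' where
  isAdmissible := h.isAdmissible
  energy_le hσ := by
    simp only [energy_mul_mul]
    exact mul_le_mul_of_nonneg_left (h.energy_le hσ) hc

lemma rescale (h : IsEnergyMinimizer (α * (a ^ 2 / ℓ)) (β * (a ^ q * ℓ)) q m ρ ρ')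
    (ha : 0 < a) (hℓ : 0 < ℓ) :
    IsEnergyMinimizer α β q (a * ℓ * m) (rescale a ℓ ρ) (rescale (a / ℓ) ℓ ρ') where
  isAdmissible := h.isAdmissible.rescale ha hℓ
  energy_le {σ σ'} hσ := by
    have hτ := hσ.rescale (inv_pos.2 ha) (inv_pos.2 hℓ)
    have hmass : a⁻¹ * ℓ⁻¹ * (a * ℓ * m) = m := by field_simp
    have hdim : a / ℓ * (a⁻¹ / ℓ⁻¹) = 1 := by field_simp
    have hle := h.energy_le (hmass ▸ hτ)
    rwa [← energy_rescale h.isAdmissible.nonneg ha hℓ, ← energy_rescale hτ.nonneg ha hℓ,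
      rescale_rescale, rescale_rescale, mul_inv_cancel₀ ha.ne', mul_inv_cancel₀ hℓ.ne', hdim,
      rescale_one_one, rescale_one_one] at hle

end IsEnergyMinimizer

lemma exists_rescale_balance (hα : 0 < α) (hβ : 0 < β) (hq : q ≠ 4) (hm : 0 < m) :
    ∃ a ℓ : ℝ, 0 < a ∧ 0 < ℓ ∧ a * ℓ = m ∧ β * (a ^ q * ℓ) = α * (a ^ 2 / ℓ) := by
  set a := (β * m ^ 2 / α) ^ (4 - q)⁻¹
  have ha : 0 < a := by positivity
  refine ⟨a, m / a, ha, by positivity, by field_simp, ?_⟩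
  have hapow : a ^ (4 : ℝ) = a ^ q * (β * m ^ 2 / α) := by
    rw [← Real.rpow_inv_rpow (by positivity : 0 ≤ β * m ^ 2 / α) (sub_ne_zero.2 hq.symm),
      ← Real.rpow_add ha]
    ring_nf
  norm_cast at hapow
  field_simp at hapow ⊢
  linarith

end Energy

section LowerBound

open Set

lemma mul_rpow_sub_one_le {r s x : ℝ} (hs : 0 < s) (hsr : s ≤ r) (hx : 0 ≤ x) :
    r * (x ^ s - 1) ≤ s * (x ^ r - 1) := by
  have hbernoulli := one_add_mul_self_le_rpow_one_add (s := x ^ s - 1) (p := r / s)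
    (by linarith [Real.rpow_nonneg hx s]) ((one_le_div hs).2 hsr)
  rw [add_sub_cancel, ← Real.rpow_mul hx, mul_div_cancel₀ r hs.ne', div_mul_eq_mul_div,
    ← le_sub_iff_add_le', div_le_iff₀ hs] at hbernoulli
  linarith

/-- The slope `√(t - t^q)` of the compacton at height `t`, for the compacton of maximum `1`. Only
`t ∈ [0, 1]` is meaningful. -/
noncomputable def compactonSlope (q t : ℝ) : ℝ := √(t - t ^ q)

variable {q t m M : ℝ}

lemma continuous_compactonSlope (hq : 0 ≤ q) : Continuous (compactonSlope q) :=
  (continuous_id.sub (Real.continuous_rpow_const hq)).sqrt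

lemma compactonSlope_sq (hq : 1 ≤ q) (ht : t ∈ Icc (0 : ℝ) 1) :
    compactonSlope q t ^ 2 = t - t ^ q :=
  Real.sq_sqrt (sub_nonneg.2 (Real.rpow_le_self_of_le_one ht.1 ht.2 hq))

lemma compactonSlope_pos (hq : 1 < q) (ht : t ∈ Ioo (0 : ℝ) 1) : 0 < compactonSlope q t :=
  Real.sqrt_pos.2 (sub_pos.2 (Real.rpow_lt_self_of_lt_one ht.1 ht.2 hq))

lemma integral_compactonSlope_div (q : ℝ) (hM : 0 < M) :
    ∫ t in (0 : ℝ)..M, M ^ (q / 2) * compactonSlope q (t / M) =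
      M ^ (q / 2 + 1) * ∫ t in (0 : ℝ)..1, compactonSlope q t := by
  rw [intervalIntegral.integral_const_mul, intervalIntegral.integral_comp_div _ hM.ne', zero_div,
    div_self hM.ne', Real.rpow_add_one hM.ne', smul_eq_mul, mul_assoc]

lemma sq_rpow_mul_compactonSlope_div (hq : 1 ≤ q) (ht : 0 ≤ t) (htM : t ≤ M) (hM : 0 < M) :
    (M ^ (q / 2) * compactonSlope q (t / M)) ^ 2 = M ^ (q - 1) * t - t ^ q := by
  have hMq : (M ^ (q / 2)) ^ 2 = M ^ q := by
    rw [← Real.rpow_mul_natCast hM.le]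
    norm_num
  rw [mul_pow, compactonSlope_sq hq ⟨by positivity, (div_le_one hM).2 htM⟩, hMq,
    Real.div_rpow ht hM.le, Real.rpow_sub_one hM.ne']
  field_simp

lemma integrable_rpow_of_bddAbove {u : ℝ → ℝ} (h0 : ∀ x, 0 ≤ u x) (hu : Integrable u)
    (hbdd : BddAbove (range u)) (hq : 1 ≤ q) : Integrable fun x ↦ u x ^ q := by
  obtain ⟨B, hB⟩ := hbdd
  have hbound (x : ℝ) : ‖u x ^ (q - 1)‖ ≤ B ^ (q - 1) := by
    rw [Real.norm_of_nonneg (Real.rpow_nonneg (h0 x) _)]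
    exact Real.rpow_le_rpow (h0 x) (hB (mem_range_self x)) (by linarith)
  have hsplit (x : ℝ) : u x ^ q = u x ^ (q - 1) * u x := by
    rw [← Real.rpow_add_one' (h0 x) (by linarith), sub_add_cancel]
  simp only [hsplit]
  exact hu.bdd_mul (hu.aemeasurable.pow_const _).aestronglyMeasurable (.of_forall hbound)

lemma IsAdmissible.exists_le_energy {u u' : ℝ → ℝ} (h : IsAdmissible m u u') (hm : 0 < m)
    (hq : 1 ≤ q) : ∃ M : ℝ, 0 < M ∧
      4 * (M ^ (q / 2 + 1) * ∫ t in (0 : ℝ)..1, compactonSlope q t) - M ^ (q - 1) * m ≤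
        energy 1 1 q u u' := by
  have hu' : Integrable fun x ↦ u' x ^ 2 := h.memLp_deriv.integrable_sq
  have hbdd := h.isPrimitive.bddAbove_range h.nonneg h.integrable hu'
  have huq := integrable_rpow_of_bddAbove h.nonneg h.integrable hbdd hq
  set M := ⨆ x, u x
  have hle (x : ℝ) : u x ≤ M := le_ciSup hbdd x
  have hM : 0 < M := by
    by_contra! hM
    have hzero (x : ℝ) : u x = 0 := le_antisymm ((hle x).trans hM) (h.nonneg x)
    have hmass := h.integral_eq
    simp only [hzero, integral_zero] at hmass
    exact hm.ne hmass
  have hsq (x : ℝ) := sq_rpow_mul_compactonSlope_div hq (h.nonneg x) (hle x) hM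
  have hg : Continuous fun t ↦ M ^ (q / 2) * compactonSlope q (t / M) :=
    ((continuous_compactonSlope (by linarith)).comp (continuous_id.div_const M)).const_mul _
  have hpot : Integrable fun x ↦ M ^ (q - 1) * u x - u x ^ q :=
    (h.integrable.const_mul _).sub huq
  have hbound := h.isPrimitive.four_mul_integral_iSup_le h.integrable hbdd hg
    (by simp only [hsq]; exact hu'.add hpot)
  simp only [hsq] at hbound
  rw [integral_compactonSlope_div q hM, integral_add hu' hpot,
    integral_sub (h.integrable.const_mul _) huq, integral_const_mul, h.integral_eq] at hbound
  refine ⟨M, hM, ?_⟩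
  simp only [energy]
  linarith

end LowerBound

section Compacton

open Set Filter
open scoped Topology Interval

lemma measurable_sign_cast : Measurable fun x : ℝ ↦ (SignType.sign x : ℝ) := by
  simp only [sign_apply, apply_ite (SignType.cast (α := ℝ))]
  exact Measurable.ite measurableSet_Ioi measurable_const
    (Measurable.ite measurableSet_Iio measurable_const measurable_const)

lemma exists_orderIso_eq_integral {f : ℝ → ℝ} {c : ℝ}
    (hf : ∀ a b, IntervalIntegrable f volume a b) (hc : 0 < c) (hcf : ∀ t, c ≤ f t) :
    ∃ e : ℝ ≃o ℝ, ∀ t, e t = ∫ s in (0 : ℝ)..t, f s := by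
  set X : ℝ → ℝ := fun t ↦ ∫ s in (0 : ℝ)..t, f s
  have hgrowth {a b : ℝ} (hab : a ≤ b) : c * (b - a) ≤ X b - X a := by
    calc c * (b - a) = ∫ _ in a..b, c := by
          rw [intervalIntegral.integral_const, smul_eq_mul, mul_comm]
      _ ≤ ∫ s in a..b, f s :=
          intervalIntegral.integral_mono hab intervalIntegrable_const (hf a b) hcf
      _ = X b - X a := (intervalIntegral.integral_interval_sub_left (hf 0 b) (hf 0 a)).symm
  have hX0 : X 0 = 0 := intervalIntegral.integral_same
  have hmono : StrictMono X := fun a b hab ↦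
    sub_pos.1 ((mul_pos hc (sub_pos.2 hab)).trans_le (hgrowth hab.le))
  have htop : Tendsto X atTop atTop := by
    refine tendsto_atTop_mono' _ ?_ (tendsto_id.const_mul_atTop hc)
    filter_upwards [eventually_ge_atTop 0] with t ht
    simpa [hX0] using hgrowth ht
  have hbot : Tendsto X atBot atBot := by
    refine tendsto_atBot_mono' _ ?_ (tendsto_id.const_mul_atBot hc)
    filter_upwards [eventually_le_atBot 0] with t ht
    simpa [hX0] using hgrowth ht
  have hsurj := (intervalIntegral.continuous_primitive hf 0).surjective htop hbot
  exact ⟨hmono.orderIsoOfSurjective X hsurj, fun t ↦ rfl⟩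

/-- `Y` is an increasing parametrization of the line that starts from height `0` at time `0` and
solves the autonomous equation `Y' = g(Y)` as long as its height is between `0` and `1`. -/
structure IsTransition (g : ℝ → ℝ) (Y : ℝ ≃o ℝ) : Prop where
  map_zero : Y 0 = 0
  hasDerivAt : ∀ x, Y x ∈ Ioo (0 : ℝ) 1 → HasDerivAt Y (g (Y x)) x

variable {g : ℝ → ℝ} {Y : ℝ ≃o ℝ}

-- Separation of variables: `Y` is the inverse function of `t ↦ ∫ s in 0..t, (g s)⁻¹`.
lemma exists_isTransition (hg : Continuous g) (hpos : ∀ t ∈ Ioo (0 : ℝ) 1, 0 < g t)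
    (hint : IntegrableOn (fun t ↦ (g t)⁻¹) (Ioo 0 1)) : ∃ Y : ℝ ≃o ℝ, IsTransition g Y := by
  obtain ⟨B, hB⟩ := (isCompact_Icc (a := (0 : ℝ)) (b := 1)).bddAbove_image hg.continuousOn
  classical
  set f : ℝ → ℝ := (Ioo (0 : ℝ) 1).piecewise (fun t ↦ (g t)⁻¹) 1
  have hf_eq {t : ℝ} (ht : t ∈ Ioo (0 : ℝ) 1) : f t = (g t)⁻¹ := piecewise_eq_of_mem _ _ _ ht
  have hf (a b : ℝ) : IntervalIntegrable f volume a b := by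
    refine intervalIntegrable_iff.2 (Integrable.piecewise measurableSet_Ioo
      (hint.mono_measure Measure.restrict_le_self) ?_)
    exact intervalIntegrable_const.def'.integrableOn
  have hf_ge (t : ℝ) : (max B 1)⁻¹ ≤ f t := by
    by_cases ht : t ∈ Ioo (0 : ℝ) 1
    · rw [hf_eq ht]
      exact inv_anti₀ (hpos t ht) (le_max_of_le_left (hB ⟨t, Ioo_subset_Icc_self ht, rfl⟩))
    · rw [show f t = 1 from piecewise_eq_of_notMem _ _ _ ht]
      exact inv_le_one_of_one_le₀ (le_max_right B 1)
  obtain ⟨e, he⟩ := exists_orderIso_eq_integral hf (by positivity) hf_ge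
  refine ⟨e.symm, by rw [e.symm_apply_eq, he, intervalIntegral.integral_same], fun x hx ↦ ?_⟩
  have hcont : ContinuousAt f (e.symm x) := by
    refine (hg.continuousAt.inv₀ (hpos _ hx).ne').congr ?_
    filter_upwards [isOpen_Ioo.mem_nhds hx] with t ht using (hf_eq ht).symm
  have hmeas : StronglyMeasurableAtFilter f (𝓝 (e.symm x)) :=
    ⟨Ioo 0 1, isOpen_Ioo.mem_nhds hx, hint.aestronglyMeasurable.congr <|
      (ae_restrict_mem measurableSet_Ioo).mono fun t ht ↦ (hf_eq ht).symm⟩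
  have hderiv : HasDerivAt e (g (e.symm x))⁻¹ (e.symm x) := by
    rw [funext he, ← hf_eq hx]
    exact intervalIntegral.integral_hasDerivAt_right (hf _ _) hmeas hcont
  simpa only [inv_inv] using HasDerivAt.of_local_left_inverse e.symm.continuous.continuousAt
    hderiv (inv_ne_zero (hpos _ hx).ne') (.of_forall e.apply_symm_apply)

/-- The even bump of height `1` that descends from `x = 0` to `x = ±Y⁻¹(1)` along the reversed
transition `Y`, and vanishes beyond. -/
noncomputable def compacton (Y : ℝ ≃o ℝ) (x : ℝ) : ℝ := max 0 (Y (Y.symm 1 - |x|))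

/-- The almost everywhere derivative of `compacton Y` when `Y' = g(Y)`. -/
noncomputable def compactonDeriv (g : ℝ → ℝ) (Y : ℝ ≃o ℝ) (x : ℝ) : ℝ :=
  -SignType.sign x * g (compacton Y x)

lemma compacton_zero (Y : ℝ ≃o ℝ) : compacton Y 0 = 1 := by
  simp [compacton]

lemma continuous_compacton : Continuous (compacton Y) :=
  continuous_const.max (Y.continuous.comp (continuous_const.sub continuous_abs))

lemma compacton_mem_Icc (x : ℝ) : compacton Y x ∈ Icc (0 : ℝ) 1 := by
  refine ⟨le_max_left _ _, max_le zero_le_one ?_⟩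
  rw [← Y.le_symm_apply]
  exact sub_le_self _ (abs_nonneg x)

lemma compactonDeriv_sq (hg1 : g 1 = 0) (x : ℝ) :
    compactonDeriv g Y x ^ 2 = g (compacton Y x) ^ 2 := by
  obtain hx | rfl | hx := lt_trichotomy x 0
  · simp [compactonDeriv, sign_neg hx]
  · simp [compactonDeriv, compacton_zero, hg1]
  · simp [compactonDeriv, sign_pos hx]

namespace IsTransition

lemma symm_one_pos (hY : IsTransition g Y) : 0 < Y.symm 1 := by
  rw [Y.lt_symm_apply, hY.map_zero]
  exact one_pos

lemma apply_mem_Ioo (hY : IsTransition g Y) {x : ℝ} (hx : x ∈ Ioo 0 (Y.symm 1)) :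
    Y x ∈ Ioo (0 : ℝ) 1 :=
  ⟨hY.map_zero ▸ Y.strictMono hx.1, Y.lt_symm_apply.1 hx.2⟩

lemma compacton_of_abs_le (hY : IsTransition g Y) {x : ℝ} (hx : |x| ≤ Y.symm 1) :
    compacton Y x = Y (Y.symm 1 - |x|) :=
  max_eq_right (hY.map_zero ▸ Y.monotone (sub_nonneg.2 hx))

lemma compacton_of_le_abs (hY : IsTransition g Y) {x : ℝ} (hx : Y.symm 1 ≤ |x|) :
    compacton Y x = 0 :=
  max_eq_left (hY.map_zero ▸ Y.monotone (sub_nonpos.2 hx))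

lemma integrable_comp_compacton (hY : IsTransition g Y) {k : ℝ → ℝ} (hk : Continuous k)
    (hk0 : k 0 = 0) : Integrable fun x ↦ k (compacton Y x) := by
  refine (hk.comp continuous_compacton).integrable_of_hasCompactSupport
    (HasCompactSupport.intro (isCompact_Icc (a := -Y.symm 1) (b := Y.symm 1)) fun x hx ↦ ?_)
  rw [Function.comp_apply, hY.compacton_of_le_abs (not_le.1 (mt abs_le.1 hx)).le, hk0]

lemma integrable_compacton (hY : IsTransition g Y) : Integrable (compacton Y) :=
  hY.integrable_comp_compacton continuous_id rfl

lemma integral_compacton_pos (hY : IsTransition g Y) : 0 < ∫ x, compacton Y x :=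
  integral_pos_of_integrable_nonneg_nonzero (x := 0) continuous_compacton
    hY.integrable_compacton (fun x ↦ (compacton_mem_Icc x).1) (by simp [compacton_zero])

lemma integral_comp_compacton (hY : IsTransition g Y) {k : ℝ → ℝ} (hk0 : k 0 = 0) :
    ∫ x, k (compacton Y x) = 2 * ∫ s in (0 : ℝ)..Y.symm 1, k (Y s) := by
  have hout {x : ℝ} (hx : x ∈ Ioi 0 \ Ioc 0 (Y.symm 1)) : k (max 0 (Y (Y.symm 1 - x))) = 0 := by
    have hle : Y.symm 1 ≤ x := (lt_of_not_ge fun h ↦ hx.2 ⟨hx.1, h⟩).le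
    rw [max_eq_left (hY.map_zero ▸ Y.monotone (sub_nonpos.2 hle)), hk0]
  calc ∫ x, k (compacton Y x) = 2 * ∫ x in Ioi (0 : ℝ), k (max 0 (Y (Y.symm 1 - x))) :=
        integral_comp_abs (f := fun x ↦ k (max 0 (Y (Y.symm 1 - x))))
    _ = 2 * ∫ x in (0 : ℝ)..Y.symm 1, k (max 0 (Y (Y.symm 1 - x))) := by
        rw [intervalIntegral.integral_of_le hY.symm_one_pos.le,
          setIntegral_eq_of_subset_of_forall_sdiff_eq_zero measurableSet_Ioi
            Ioc_subset_Ioi_self fun x hx ↦ hout hx]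
    _ = 2 * ∫ s in (0 : ℝ)..Y.symm 1, k (Y s) := by
        rw [intervalIntegral.integral_comp_sub_left (fun s ↦ k (max 0 (Y s))), sub_self, sub_zero]
        congr 1
        refine intervalIntegral.integral_congr fun s hs ↦ ?_
        rw [uIcc_of_le hY.symm_one_pos.le] at hs
        simp only [max_eq_right (hY.map_zero ▸ Y.monotone hs.1 : 0 ≤ Y s)]

lemma integral_comp_compacton_eq_sub (hY : IsTransition g Y) {F F' k : ℝ → ℝ} (hF : Continuous F)
    (hF' : ∀ t ∈ Ioo (0 : ℝ) 1, HasDerivAt F (F' t) t) (hk : Continuous k) (hk0 : k 0 = 0)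
    (hkF : ∀ t ∈ Ioo (0 : ℝ) 1, F' t * g t = k t) :
    ∫ x, k (compacton Y x) = 2 * (F 1 - F 0) := by
  have hderiv (x : ℝ) (hx : x ∈ Ioo 0 (Y.symm 1)) : HasDerivAt (F ∘ Y) (k (Y x)) x := by
    have hYx := hY.apply_mem_Ioo hx
    exact hkF _ hYx ▸ (hF' _ hYx).comp x (hY.hasDerivAt x hYx)
  rw [hY.integral_comp_compacton hk0, intervalIntegral.integral_eq_sub_of_hasDerivAt_of_le
    hY.symm_one_pos.le (hF.comp Y.continuous).continuousOn hderiv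
    ((hk.comp Y.continuous).intervalIntegrable _ _), Function.comp_apply, Function.comp_apply,
    Y.apply_symm_apply, hY.map_zero]

lemma hasDerivAt_compacton (hY : IsTransition g Y) (hg0 : g 0 = 0) {x : ℝ} (hx0 : x ≠ 0)
    (hxT : |x| ≠ Y.symm 1) : HasDerivAt (compacton Y) (compactonDeriv g Y x) x := by
  obtain hx | hx := hxT.lt_or_gt
  · have hmem : Y (Y.symm 1 - |x|) ∈ Ioo (0 : ℝ) 1 :=
      hY.apply_mem_Ioo ⟨sub_pos.2 hx, sub_lt_self _ (abs_pos.2 hx0)⟩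
    have hderiv := (hY.hasDerivAt _ hmem).comp x ((hasDerivAt_abs hx0).const_sub (Y.symm 1))
    rw [← hY.compacton_of_abs_le hx.le, mul_comm] at hderiv
    refine hderiv.congr_of_eventuallyEq ?_
    filter_upwards [continuous_abs.continuousAt.eventually (gt_mem_nhds hx)] with y hy
    exact hY.compacton_of_abs_le hy.le
  · have hzero : compactonDeriv g Y x = 0 := by
      rw [compactonDeriv, hY.compacton_of_le_abs hx.le, hg0, mul_zero]
    rw [hzero]
    refine (hasDerivAt_const x (0 : ℝ)).congr_of_eventuallyEq ?_
    filter_upwards [continuous_abs.continuousAt.eventually (lt_mem_nhds hx)] with y hy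
    exact hY.compacton_of_le_abs hy.le

lemma memLp_compactonDeriv (hY : IsTransition g Y) (hg : Continuous g) (hg0 : g 0 = 0)
    (hg1 : g 1 = 0) : MemLp (compactonDeriv g Y) 2 := by
  have hmeas : Measurable (compactonDeriv g Y) :=
    measurable_sign_cast.neg.mul (hg.comp continuous_compacton).measurable
  rw [memLp_two_iff_integrable_sq hmeas.aestronglyMeasurable]
  simp only [compactonDeriv_sq hg1]
  exact hY.integrable_comp_compacton (hg.pow 2) (by simp [hg0])

lemma isAdmissible_compacton (hY : IsTransition g Y) (hg : Continuous g) (hg0 : g 0 = 0)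
    (hg1 : g 1 = 0) :
    IsAdmissible (∫ x, compacton Y x) (compacton Y) (compactonDeriv g Y) where
  nonneg x := (compacton_mem_Icc x).1
  integrable := hY.integrable_compacton
  sub_eq_integral a b := by
    have hint := ((hY.memLp_compactonDeriv hg hg0 hg1).locallyIntegrable one_le_two
      |>.integrableOn_isCompact (isCompact_uIcc (a := a) (b := b))).intervalIntegrable
    refine (integral_eq_of_hasDerivAt_off_countable (compacton Y) (compactonDeriv g Y)
      (s := {0, Y.symm 1, -Y.symm 1}) (toFinite _).countable continuous_compacton.continuousOn
      (fun x hx ↦ ?_) hint).symm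
    simp only [Set.mem_sdiff, mem_insert_iff, mem_singleton_iff, not_or] at hx
    exact hY.hasDerivAt_compacton hg0 hx.2.1 fun h ↦
      (eq_or_eq_neg_of_abs_eq h).elim hx.2.2.1 hx.2.2.2
  memLp_deriv := hY.memLp_compactonDeriv hg hg0 hg1
  integral_eq := rfl

end IsTransition

end Compacton

section GroundState

open Set

variable {q : ℝ}

lemma compactonSlope_zero (hq : q ≠ 0) : compactonSlope q 0 = 0 := by
  simp [compactonSlope, hq]

lemma compactonSlope_one (q : ℝ) : compactonSlope q 1 = 0 := by
  simp [compactonSlope]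

lemma min_mul_mul_one_sub_le_sub_rpow {t : ℝ} (hq : 1 ≤ q) (ht : t ∈ Icc (0 : ℝ) 1) :
    min 1 (q - 1) * (t * (1 - t)) ≤ t - t ^ q := by
  set c := min 1 (q - 1)
  have hc : 0 ≤ c := le_min zero_le_one (sub_nonneg.2 hq)
  have hbernoulli := rpow_one_add_le_one_add_mul_self (s := t - 1) (by linarith [ht.1]) hc
    (min_le_left _ _)
  rw [add_sub_cancel] at hbernoulli
  calc c * (t * (1 - t)) = t - t * (1 + c * (t - 1)) := by ring
    _ ≤ t - t * t ^ c := by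
        gcongr
        exact ht.1
    _ ≤ t - t * t ^ (q - 1) := by
        gcongr _ - _ * ?_
        · exact ht.1
        · exact Real.rpow_le_rpow_of_exponent_ge' ht.1 ht.2 hc (min_le_right _ _)
    _ = t - t ^ q := by rw [← Real.rpow_one_add' ht.1 (by linarith), add_sub_cancel]

-- This is the derivative of `t ↦ arcsin (2 * t - 1)`.
lemma integrableOn_inv_sqrt_mul_one_sub :
    IntegrableOn (fun t : ℝ ↦ (√(t * (1 - t)))⁻¹) (Ioo 0 1) := by
  have hderiv (t : ℝ) (ht : t ∈ Ioo (0 : ℝ) 1) :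
      HasDerivAt (fun t ↦ Real.arcsin (2 * t - 1)) (√(t * (1 - t)))⁻¹ t := by
    have hlin : HasDerivAt (fun t : ℝ ↦ 2 * t - 1) 2 t := by
      simpa using ((hasDerivAt_id t).const_mul 2).sub_const 1
    refine ((Real.hasDerivAt_arcsin (by linarith [ht.1]) (by linarith [ht.2])).comp t
      hlin).congr_deriv ?_
    rw [show 1 - (2 * t - 1) ^ 2 = 2 ^ 2 * (t * (1 - t)) by ring, Real.sqrt_mul (by positivity),
      Real.sqrt_sq zero_le_two]
    field_simp
  exact (intervalIntegral.integrableOn_deriv_of_nonneg (g := fun t ↦ Real.arcsin (2 * t - 1))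
    (Real.continuous_arcsin.comp (by fun_prop)).continuousOn hderiv
    fun t _ ↦ by positivity).mono_set Ioo_subset_Ioc_self

lemma integrableOn_inv_compactonSlope (hq : 1 < q) :
    IntegrableOn (fun t ↦ (compactonSlope q t)⁻¹) (Ioo 0 1) := by
  set c := min 1 (q - 1)
  have hc : 0 < c := lt_min one_pos (sub_pos.2 hq)
  refine (integrableOn_inv_sqrt_mul_one_sub.const_mul (√c)⁻¹).mono'
    (continuous_compactonSlope (by linarith)).measurable.inv.aestronglyMeasurable
    (ae_restrict_of_forall_mem measurableSet_Ioo fun t ht ↦ ?_)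
  have hpos : 0 < c * (t * (1 - t)) := mul_pos hc (mul_pos ht.1 (sub_pos.2 ht.2))
  rw [Real.norm_of_nonneg (inv_nonneg.2 (compactonSlope_pos hq ht).le), ← mul_inv,
    ← Real.sqrt_mul hc.le]
  exact inv_anti₀ (Real.sqrt_pos.2 hpos)
    (Real.sqrt_le_sqrt (min_mul_mul_one_sub_le_sub_rpow hq.le (Ioo_subset_Icc_self ht)))

lemma hasDerivAt_mul_compactonSlope {t : ℝ} (hq : 1 < q) (ht : t ∈ Ioo (0 : ℝ) 1) :
    HasDerivAt (fun t ↦ t * compactonSlope q t)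
      ((3 / 2 * t - (q / 2 + 1) * t ^ q) / compactonSlope q t) t := by
  have hpos := compactonSlope_pos hq ht
  have hpow : HasDerivAt (fun t : ℝ ↦ t - t ^ q) (1 - q * t ^ (q - 1)) t :=
    (hasDerivAt_id t).sub (Real.hasDerivAt_rpow_const (Or.inl ht.1.ne'))
  have hslope : HasDerivAt (compactonSlope q)
      ((1 - q * t ^ (q - 1)) / (2 * compactonSlope q t)) t :=
    hpow.sqrt (Real.sqrt_pos.1 hpos).ne'
  refine ((hasDerivAt_id t).mul hslope).congr_deriv ?_
  have ht0 := ht.1.ne'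
  have hsq := compactonSlope_sq hq.le (Ioo_subset_Icc_self ht)
  rw [Real.rpow_sub_one ht0, eq_div_iff hpos.ne']
  field_simp
  simp only [id_eq]
  linear_combination 2 * t * hsq

variable {Y : ℝ ≃o ℝ}

namespace IsTransition

lemma integrable_compacton_rpow (hY : IsTransition (compactonSlope q) Y) (hq : 0 < q) :
    Integrable fun x ↦ compacton Y x ^ q :=
  hY.integrable_comp_compacton (Real.continuous_rpow_const hq.le) (Real.zero_rpow hq.ne')

lemma integral_compacton_sub_rpow (hY : IsTransition (compactonSlope q) Y) (hq : 1 ≤ q) :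
    (∫ x, compacton Y x) - ∫ x, compacton Y x ^ q =
      2 * ∫ t in (0 : ℝ)..1, compactonSlope q t := by
  have hslope := continuous_compactonSlope (zero_le_one.trans hq)
  have hprim (t : ℝ) : HasDerivAt (fun r ↦ ∫ s in (0 : ℝ)..r, compactonSlope q s)
      (compactonSlope q t) t := (hslope.integral_hasStrictDerivAt 0 t).hasDerivAt
  rw [← integral_sub hY.integrable_compacton (hY.integrable_compacton_rpow (by linarith)),
    hY.integral_comp_compacton_eq_sub (k := fun t ↦ t - t ^ q)
    (intervalIntegral.continuous_primitive (fun _ _ ↦ hslope.intervalIntegrable _ _) 0)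
    (fun t _ ↦ hprim t) (continuous_id.sub (Real.continuous_rpow_const (by linarith)))
    (by simp [Real.zero_rpow (by linarith : q ≠ 0)])
    fun t ht ↦ by rw [← sq, compactonSlope_sq hq (Ioo_subset_Icc_self ht)],
    intervalIntegral.integral_same, sub_zero]

-- `t * compactonSlope q t` vanishes at both ends of `[0, 1]`, and its derivative along `Y` is
-- `3 / 2 * t - (q / 2 + 1) * t ^ q`.
lemma integral_compacton_virial (hY : IsTransition (compactonSlope q) Y) (hq : 1 < q) :
    3 * ∫ x, compacton Y x = (q + 2) * ∫ x, compacton Y x ^ q := by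
  have hvirial : ∫ x, (3 / 2 * compacton Y x - (q / 2 + 1) * compacton Y x ^ q) = 0 := by
    rw [hY.integral_comp_compacton_eq_sub (k := fun t ↦ 3 / 2 * t - (q / 2 + 1) * t ^ q)
      (continuous_id.mul (continuous_compactonSlope (by linarith)))
      (fun t ht ↦ hasDerivAt_mul_compactonSlope hq ht)
      ((continuous_id.const_mul _).sub ((Real.continuous_rpow_const (by linarith)).const_mul _))
      (by simp [Real.zero_rpow (by linarith : q ≠ 0)])
      fun t ht ↦ div_mul_cancel₀ _ (compactonSlope_pos hq ht).ne']
    simp [compactonSlope_one]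
  rw [integral_sub (hY.integrable_compacton.const_mul _)
    ((hY.integrable_compacton_rpow (by linarith)).const_mul _), integral_const_mul,
    integral_const_mul] at hvirial
  linarith

lemma energy_compacton (hY : IsTransition (compactonSlope q) Y) (hq : 1 ≤ q) :
    energy 1 1 q (compacton Y) (compactonDeriv (compactonSlope q) Y) =
      4 * (∫ t in (0 : ℝ)..1, compactonSlope q t) - ∫ x, compacton Y x := by
  have hmass := hY.integral_compacton_sub_rpow hq
  simp only [energy, compactonDeriv_sq (compactonSlope_one q),
    compactonSlope_sq hq (compacton_mem_Icc _)]
  rw [integral_sub hY.integrable_compacton (hY.integrable_compacton_rpow (by linarith))]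
  linarith

lemma sub_one_mul_integral_compacton (hY : IsTransition (compactonSlope q) Y) (hq : 1 < q) :
    (q - 1) * ∫ x, compacton Y x = 2 * (q + 2) * ∫ t in (0 : ℝ)..1, compactonSlope q t := by
  linear_combination (q + 2) * hY.integral_compacton_sub_rpow hq.le -
    hY.integral_compacton_virial hq

lemma isEnergyMinimizer_compacton (hY : IsTransition (compactonSlope q) Y) (hq : 1 < q)
    (hq4 : q ≤ 4) :
    IsEnergyMinimizer 1 1 q (∫ x, compacton Y x) (compacton Y)
      (compactonDeriv (compactonSlope q) Y) where
  isAdmissible := hY.isAdmissible_compacton (continuous_compactonSlope (by linarith))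
    (compactonSlope_zero (by linarith)) (compactonSlope_one q)
  energy_le {σ σ'} hσ := by
    obtain ⟨M, hM, hle⟩ := hσ.exists_le_energy hY.integral_compacton_pos hq.le
    have hmass := hY.sub_one_mul_integral_compacton hq
    have hbernoulli := mul_le_mul_of_nonneg_left
      (mul_rpow_sub_one_le (r := q / 2 + 1) (sub_pos.2 hq) (by linarith) hM.le)
      hY.integral_compacton_pos.le
    have hgap : (∫ x, compacton Y x) * (M ^ (q - 1) - 1) ≤
        4 * (∫ t in (0 : ℝ)..1, compactonSlope q t) * (M ^ (q / 2 + 1) - 1) := by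
      refine le_of_mul_le_mul_left ?_ (by linarith : 0 < q / 2 + 1)
      linear_combination hbernoulli + (M ^ (q / 2 + 1) - 1) * hmass
    rw [hY.energy_compacton hq.le]
    linarith

end IsTransition

lemma exists_isTransition_compactonSlope (hq : 1 < q) :
    ∃ Y : ℝ ≃o ℝ, IsTransition (compactonSlope q) Y :=
  exists_isTransition (continuous_compactonSlope (by linarith))
    (fun _ ht ↦ compactonSlope_pos hq ht) (integrableOn_inv_compactonSlope hq)

end GroundState

theorem stmt_15_general {α β q m : ℝ} (hα : 0 < α) (hβ : 0 < β) (hq1 : 1 < q) (hq4 : q < 4)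
    (hm : 0 < m) : ∃ ρ ρ' : ℝ → ℝ, IsEnergyMinimizer α β q m ρ ρ' := by
  obtain ⟨Y, hY⟩ := exists_isTransition_compactonSlope hq1
  have hmass := hY.integral_compacton_pos
  obtain ⟨a, ℓ, ha, hℓ, haℓ, hbalance⟩ :=
    exists_rescale_balance hα hβ hq4.ne (div_pos hm hmass)
  have hmin := (hY.isEnergyMinimizer_compacton hq1 hq4.le).const_mul
    (c := α * (a ^ 2 / ℓ)) (by positivity)
  rw [mul_one, ← hbalance] at hmin
  nth_rw 1 [hbalance] at hmin
  have hresc := hmin.rescale ha hℓ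
  rw [haℓ, div_mul_cancel₀ _ hmass.ne'] at hresc
  exact ⟨_, _, hresc⟩

/-- for 2 < p < 8 and m > 0, the minimization of
𝓗(ρ) = (1/8)∫(ρ')² − (1/p)∫ρ^{p/2} over nonnegative integrable locally absolutely
continuous ρ with ρ' ∈ L² and ∫ρ = m admits a minimizer. -/
theorem stmt_15 (p m : ℝ) (hp1 : 2 < p) (hp2 : p < 8) (hm : 0 < m) :
    ∃ (ρs ρs' : ℝ → ℝ),
      ((∀ x, 0 ≤ ρs x) ∧
        Integrable ρs ∧
        (∀ a b : ℝ, ρs b - ρs a = ∫ x in a..b, ρs' x) ∧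
        MemLp ρs' 2 (volume : Measure ℝ) ∧
        (∫ x, ρs x) = m) ∧
      ∀ (ρ ρ' : ℝ → ℝ),
        (∀ x, 0 ≤ ρ x) →
        Integrable ρ →
        (∀ a b : ℝ, ρ b - ρ a = ∫ x in a..b, ρ' x) →
        MemLp ρ' 2 (volume : Measure ℝ) →
        (∫ x, ρ x) = m →
        (1 / 8) * (∫ x, (ρs' x) ^ 2) - (1 / p) * (∫ x, ρs x ^ (p / 2)) ≤
          (1 / 8) * (∫ x, (ρ' x) ^ 2) - (1 / p) * (∫ x, ρ x ^ (p / 2)) := by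
  obtain ⟨ρs, ρs', hρs, hmin⟩ := stmt_15_general (α := 1 / 8) (β := 1 / p) (q := p / 2)
    (by norm_num) (by positivity) (by linarith) (by linarith) hm
  exact ⟨ρs, ρs', ⟨hρs.nonneg, hρs.integrable, hρs.sub_eq_integral, hρs.memLp_deriv,
    hρs.integral_eq⟩, fun ρ ρ' h0 hint hprim hLp hmass ↦ hmin ⟨h0, hint, hprim, hLp, hmass⟩⟩
end

section
/- Let m > 0 and set c = m/(√2·π). Define ρ*(x) = 2c·cos²(x/√2) for |x| ≤ π/√2 and ρ*(x) = 0 otherwise. Then ρ* is nonnegative, continuously differentiable on ℝ, satisfies ∫ρ* dx = m, and for every nonnegative, integrable, locally absolutely continuous ρ : ℝ → ℝ with ∫ρ dx = m and ρ' ∈ L²(ℝ), one has 𝓗(ρ*) ≤ 𝓗(ρ), where 𝓗(σ) = (1/8)∫(σ'(x))² dx − (1/4)∫σ(x)² dx. Moreover 𝓗(ρ*) = −m²/(4√2·π). -/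
open MeasureTheory
open Real Set Filter Topology

/-!
A Riccati function `φ` with `φ' = -(ω ^ 2 + φ ^ 2)` calibrates the quotient `∫ h' ^ 2 / ∫ h ^ 2`:
integrating `(φ h ^ 2)' = h' ^ 2 - ω ^ 2 h ^ 2 - (h' - φ h) ^ 2` bounds `ω ^ 2 ∫ h ^ 2` by
`∫ h' ^ 2` when `φ h ^ 2` vanishes at the endpoints. Applied to `f` minus its midpoint value on the
two halves of an interval of length `ℓ`, this gives the Poincaré inequality with the Neumann
constant `(π / ℓ) ^ 2`. Now split the line at a median of `ρ ≥ 0` and cut both half-lines into cells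
of length `ℓ`. Since `∑ Mᵢ ^ 2 ≤ (∑ Mᵢ) ^ 2` for the masses of the cells, each half-line costs
`(m / 2) ^ 2 / ℓ`, that is, `m ^ 2 / (2 * ℓ)` in total. For `ℓ = π / √2` this is the energy bound.
It is attained by the raised cosine, whose two monotone halves occupy one cell each.
-/

section Poincare

variable {a b : ℝ}

theorem riccati_comparison {φ h : ℝ → ℝ} {q : ℝ} (hab : a ≤ b)
    (hφ : AbsolutelyContinuousOnInterval φ a b) (hh : AbsolutelyContinuousOnInterval h a b)
    (hh' : IntervalIntegrable (fun x => deriv h x ^ 2) volume a b)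
    (hriccati : ∀ x ∈ Icc a b, deriv φ x + φ x ^ 2 ≤ -q) :
    φ b * h b ^ 2 - φ a * h a ^ 2 + q * ∫ x in a..b, h x ^ 2 ≤ ∫ x in a..b, deriv h x ^ 2 := by
  have hhh := hh.fun_mul hh
  have hh_sq : IntervalIntegrable (fun x => q * h x ^ 2) volume a b :=
    (continuousOn_const.mul (hh.continuousOn.pow 2)).intervalIntegrable
  have boundary := hφ.integral_deriv_mul_eq_sub hhh
  have pointwise : ∫ x in a..b, (deriv φ x * (h x * h x) + φ x * deriv (fun y => h y * h y) x) ≤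
      ∫ x in a..b, (deriv h x ^ 2 - q * h x ^ 2) := by
    refine intervalIntegral.integral_mono_ae_restrict hab
      ((hφ.intervalIntegrable_deriv.mul_continuousOn hhh.continuousOn).add
        (hhh.intervalIntegrable_deriv.continuousOn_mul hφ.continuousOn)) (hh'.sub hh_sq) ?_
    filter_upwards [ae_restrict_of_ae hh.ae_differentiableAt, ae_restrict_mem measurableSet_Icc]
      with x hdiff hx
    have hd : DifferentiableAt ℝ h x := hdiff (by rwa [uIcc_of_le hab])
    rw [deriv_fun_mul hd hd]
    nlinarith [sq_nonneg (deriv h x - φ x * h x),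
      mul_le_mul_of_nonneg_right (hriccati x hx) (sq_nonneg (h x))]
  rw [boundary, intervalIntegral.integral_sub hh' hh_sq,
    intervalIntegral.integral_const_mul] at pointwise
  linarith

/-- The solution of the Riccati equation `φ' = -(ω ^ 2 + φ ^ 2)` that vanishes at `c`. -/
noncomputable def riccatiTan (ω c x : ℝ) : ℝ := ω * tan (ω * (c - x))

theorem riccatiTan_self (ω c : ℝ) : riccatiTan ω c c = 0 := by simp [riccatiTan]

theorem contDiffAt_riccatiTan {ω c x : ℝ} (hx : cos (ω * (c - x)) ≠ 0) :
    ContDiffAt ℝ 1 (riccatiTan ω c) x :=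
  contDiffAt_const.mul <| (contDiffAt_tan.2 hx : ContDiffAt ℝ 1 tan _).comp x
    (f := fun x => ω * (c - x)) (by fun_prop)

theorem deriv_riccatiTan {ω c x : ℝ} (hx : cos (ω * (c - x)) ≠ 0) :
    deriv (riccatiTan ω c) x = -(ω ^ 2 + riccatiTan ω c x ^ 2) := by
  have hlin : HasDerivAt (fun x => ω * (c - x)) (ω * -1) x :=
    ((hasDerivAt_id x).const_sub c).const_mul ω
  have htan : HasDerivAt (riccatiTan ω c) (ω * (1 / cos (ω * (c - x)) ^ 2 * (ω * -1))) x :=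
    ((hasDerivAt_tan hx).comp (h := fun x => ω * (c - x)) x hlin).const_mul ω
  rw [htan.deriv, riccatiTan, mul_pow, one_div, ← inv_one_add_tan_sq hx, inv_inv]
  ring

theorem sq_mul_integral_sq_le_integral_deriv_sq {h : ℝ → ℝ} {ω : ℝ} (hab : a ≤ b)
    (hω : 0 ≤ ω) (hωab : ω * (b - a) < π / 2) (hh : AbsolutelyContinuousOnInterval h a b)
    (hh' : IntervalIntegrable (fun x => deriv h x ^ 2) volume a b) (h0 : h a = 0 ∨ h b = 0) :
    ω ^ 2 * ∫ x in a..b, h x ^ 2 ≤ ∫ x in a..b, deriv h x ^ 2 := by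
  have comparison (c : ℝ) (hc : c ∈ Icc a b) :
      riccatiTan ω c b * h b ^ 2 - riccatiTan ω c a * h a ^ 2 + ω ^ 2 * ∫ x in a..b, h x ^ 2 ≤
        ∫ x in a..b, deriv h x ^ 2 := by
    have hcos : ∀ x ∈ Icc a b, cos (ω * (c - x)) ≠ 0 := fun x hx =>
      (cos_pos_of_mem_Ioo
        ⟨by nlinarith [hx.1, hx.2, hc.1, hc.2], by nlinarith [hx.1, hx.2, hc.1, hc.2]⟩).ne'
    refine riccati_comparison hab (ContDiffOn.absolutelyContinuousOnInterval fun x hx => ?_) hh hh'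
      fun x hx => ?_
    · exact (contDiffAt_riccatiTan (hcos x (uIcc_of_le hab ▸ hx))).contDiffWithinAt
    · rw [deriv_riccatiTan (hcos x hx)]
      linarith
  rcases h0 with ha | hb
  · simpa [ha, riccatiTan_self] using comparison b (right_mem_Icc.2 hab)
  · simpa [hb, riccatiTan_self] using comparison a (left_mem_Icc.2 hab)

theorem integral_sq_le_integral_deriv_sq_of_endpoint_eq_zero {h : ℝ → ℝ} (hab : a < b)
    (hh : AbsolutelyContinuousOnInterval h a b)
    (hh' : IntervalIntegrable (fun x => deriv h x ^ 2) volume a b) (h0 : h a = 0 ∨ h b = 0) :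
    ∫ x in a..b, h x ^ 2 ≤ (2 * (b - a) / π) ^ 2 * ∫ x in a..b, deriv h x ^ 2 := by
  have hlen : 0 < b - a := sub_pos.2 hab
  set ω₀ := π / (2 * (b - a)) with hω₀
  have hω₀_pos : 0 < ω₀ := by positivity
  have hω₀_len : ω₀ * (b - a) = π / 2 := by rw [hω₀]; field_simp
  have critical : ω₀ ^ 2 * ∫ x in a..b, h x ^ 2 ≤ ∫ x in a..b, deriv h x ^ 2 := by
    refine le_of_tendsto (f := fun ω : ℝ => ω ^ 2 * ∫ x in a..b, h x ^ 2) (x := 𝓝[<] ω₀)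
      (((continuous_pow 2).mul continuous_const).continuousAt.mono_left nhdsWithin_le_nhds) ?_
    filter_upwards [Ioo_mem_nhdsLT hω₀_pos] with ω hω
    refine sq_mul_integral_sq_le_integral_deriv_sq hab.le hω.1.le ?_ hh hh' h0
    exact (mul_lt_mul_of_pos_right hω.2 hlen).trans_eq hω₀_len
  rw [← inv_div, inv_pow, ← div_eq_inv_mul]
  exact (le_div_iff₀' (by positivity)).2 critical

theorem integral_sq_le_integral_sub_const_sq {f : ℝ → ℝ} (hab : a < b)
    (hf : IntervalIntegrable f volume a b)
    (hf2 : IntervalIntegrable (fun x => f x ^ 2) volume a b) (k : ℝ) :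
    ∫ x in a..b, f x ^ 2 ≤
      (∫ x in a..b, (f x - k) ^ 2) + (∫ x in a..b, f x) ^ 2 / (b - a) := by
  have hlen : 0 < b - a := sub_pos.2 hab
  have expansion : ∫ x in a..b, (f x - k) ^ 2 =
      (∫ x in a..b, f x ^ 2) - 2 * k * (∫ x in a..b, f x) + (b - a) * k ^ 2 := by
    have hsq : ∀ x, (f x - k) ^ 2 = f x ^ 2 - 2 * k * f x + k ^ 2 := fun x => by ring
    simp_rw [hsq]
    rw [intervalIntegral.integral_add (hf2.sub (hf.const_mul _)) intervalIntegrable_const,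
      intervalIntegral.integral_sub hf2 (hf.const_mul _), intervalIntegral.integral_const_mul,
      intervalIntegral.integral_const, smul_eq_mul]
  have hsquare : 0 ≤ (∫ x in a..b, f x) ^ 2 / (b - a) - 2 * k * (∫ x in a..b, f x)
      + (b - a) * k ^ 2 := by
    have : 0 ≤ ((∫ x in a..b, f x) - (b - a) * k) ^ 2 / (b - a) := by positivity
    convert this using 1
    field_simp
    ring
  linarith

theorem poincare_wirtinger {f : ℝ → ℝ} (hab : a < b) (hf : AbsolutelyContinuousOnInterval f a b)
    (hf' : IntervalIntegrable (fun x => deriv f x ^ 2) volume a b) :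
    ∫ x in a..b, f x ^ 2 ≤
      ((b - a) / π) ^ 2 * (∫ x in a..b, deriv f x ^ 2) + (∫ x in a..b, f x) ^ 2 / (b - a) := by
  set c := (a + b) / 2 with hc
  have hac : a < c := by linarith
  have hcb : c < b := by linarith
  have hleft : uIcc a c ⊆ uIcc a b := uIcc_subset_uIcc_left (Icc_subset_uIcc ⟨hac.le, hcb.le⟩)
  have hright : uIcc c b ⊆ uIcc a b := uIcc_subset_uIcc_right (Icc_subset_uIcc ⟨hac.le, hcb.le⟩)
  let h : ℝ → ℝ := fun x => f x - f c
  have hh : AbsolutelyContinuousOnInterval h a b :=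
    hf.fun_sub contDiffOn_const.absolutelyContinuousOnInterval
  have hderiv : deriv h = deriv f := funext fun x => deriv_sub_const (f c)
  have hh2 : IntervalIntegrable (fun x => h x ^ 2) volume a b :=
    (hh.continuousOn.pow 2).intervalIntegrable
  have left := integral_sq_le_integral_deriv_sq_of_endpoint_eq_zero hac (hh.mono hleft)
    (hderiv ▸ hf'.mono_set hleft) (Or.inr (sub_self _))
  have right := integral_sq_le_integral_deriv_sq_of_endpoint_eq_zero hcb (hh.mono hright)
    (hderiv ▸ hf'.mono_set hright) (Or.inl (sub_self _))
  rw [hderiv, show 2 * (c - a) = b - a by rw [hc]; ring] at left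
  rw [hderiv, show 2 * (b - c) = b - a by rw [hc]; ring] at right
  have centred : ∫ x in a..b, h x ^ 2 ≤ ((b - a) / π) ^ 2 * ∫ x in a..b, deriv f x ^ 2 := by
    rw [← intervalIntegral.integral_add_adjacent_intervals (hh2.mono_set hleft)
        (hh2.mono_set hright), ← intervalIntegral.integral_add_adjacent_intervals
        (hf'.mono_set hleft) (hf'.mono_set hright), mul_add]
    exact add_le_add left right
  exact (integral_sq_le_integral_sub_const_sq hab hf.continuousOn.intervalIntegrable
    (hf.continuousOn.pow 2).intervalIntegrable (f c)).trans (by gcongr)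

end Poincare

section Median

variable {μ : Measure ℝ} [NullSingletonClass μ] {f : ℝ → ℝ}

theorem exists_setIntegral_Iic_eq (hf : Integrable f μ) {t : ℝ} (ht : t ∈ Ioo 0 (∫ x, f x ∂μ)) :
    ∃ a, ∫ x in Iic a, f x ∂μ = t := by
  have hcont : Continuous fun a => ∫ x in Iic a, f x ∂μ := continuous_iff_continuousAt.2 fun a =>
    hf.integrableOn.continuousOn_Iic_primitive_Iic.continuousAt (Iic_mem_nhds (lt_add_one a))
  have htop : Tendsto (fun a => ∫ x in Iic a, f x ∂μ) atTop (𝓝 (∫ x, f x ∂μ)) :=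
    (aecover_Iic tendsto_id).integral_tendsto_of_countably_generated hf
  exact mem_range_of_exists_le_of_exists_ge hcont
    ((tendsto_integral_Iic_zero tendsto_id).eventually_le_const ht.1).exists
    (htop.eventually_const_le ht.2).exists

theorem exists_setIntegral_Iic_eq_half (hf0 : 0 ≤ᵐ[μ] f) (hf : Integrable f μ) :
    ∃ a, ∫ x in Iic a, f x ∂μ = (∫ x, f x ∂μ) / 2 := by
  rcases (integral_nonneg_of_ae hf0).eq_or_lt with hzero | hpos
  · refine ⟨0, ?_⟩
    rw [← hzero, zero_div]
    exact le_antisymm (hzero ▸ setIntegral_le_integral hf hf0)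
      (integral_nonneg_of_ae (ae_restrict_of_ae hf0))
  · exact exists_setIntegral_Iic_eq hf ⟨half_pos hpos, half_lt_self hpos⟩

end Median

section Line

variable {f : ℝ → ℝ} {ℓ : ℝ}

theorem integral_sq_le_of_nonneg_of_cells (hℓ : 0 < ℓ) (hf0 : ∀ x, 0 ≤ f x)
    (hf : ∀ a b, AbsolutelyContinuousOnInterval f a b)
    (hf' : ∀ a b, IntervalIntegrable (fun x => deriv f x ^ 2) volume a b) (a : ℝ) (n : ℕ) :
    ∫ x in a..(a + n * ℓ), f x ^ 2 ≤ (ℓ / π) ^ 2 * (∫ x in a..(a + n * ℓ), deriv f x ^ 2) +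
      (∫ x in a..(a + n * ℓ), f x) ^ 2 / ℓ := by
  have hfi (a b : ℝ) : IntervalIntegrable f volume a b := (hf a b).continuousOn.intervalIntegrable
  have hf2 (a b : ℝ) : IntervalIntegrable (fun x => f x ^ 2) volume a b :=
    ((hf a b).continuousOn.pow 2).intervalIntegrable
  induction n with
  | zero => simp
  | succ n ih =>
    set b := a + n * ℓ with hb
    have hsucc : a + (n + 1 : ℕ) * ℓ = b + ℓ := by push_cast; ring
    have hab : a ≤ b := by rw [hb]; linarith [show 0 ≤ n * ℓ by positivity]
    have cell := poincare_wirtinger (lt_add_of_pos_right b hℓ) (hf b (b + ℓ)) (hf' b (b + ℓ))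
    rw [add_sub_cancel_left] at cell
    have masses_sq : (∫ x in a..b, f x) ^ 2 / ℓ + (∫ x in b..(b + ℓ), f x) ^ 2 / ℓ ≤
        ((∫ x in a..b, f x) + ∫ x in b..(b + ℓ), f x) ^ 2 / ℓ := by
      rw [← add_div]
      gcongr
      have hmass : 0 ≤ ∫ x in a..b, f x := intervalIntegral.integral_nonneg hab fun x _ => hf0 x
      have hcell : 0 ≤ ∫ x in b..(b + ℓ), f x :=
        intervalIntegral.integral_nonneg (by linarith) fun x _ => hf0 x
      linarith [add_sq (∫ x in a..b, f x) (∫ x in b..(b + ℓ), f x), mul_nonneg hmass hcell]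
    rw [hsucc, ← intervalIntegral.integral_add_adjacent_intervals (hf2 a b) (hf2 b (b + ℓ)),
      ← intervalIntegral.integral_add_adjacent_intervals (hfi a b) (hfi b (b + ℓ)),
      ← intervalIntegral.integral_add_adjacent_intervals (hf' a b) (hf' b (b + ℓ))]
    linarith

theorem exists_forall_integral_sq_le (hℓ : 0 < ℓ) (hf0 : ∀ x, 0 ≤ f x) (hfi : Integrable f)
    (hf : ∀ a b, AbsolutelyContinuousOnInterval f a b)
    (hf' : Integrable fun x => deriv f x ^ 2) :
    ∃ a, ∀ n : ℕ, ∫ x in (a - n * ℓ)..(a + n * ℓ), f x ^ 2 ≤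
      (ℓ / π) ^ 2 * (∫ x, deriv f x ^ 2) + (∫ x, f x) ^ 2 / (2 * ℓ) := by
  obtain ⟨a, hmedian⟩ := exists_setIntegral_Iic_eq_half (Eventually.of_forall hf0) hfi
  refine ⟨a, fun n => ?_⟩
  have hnℓ : 0 ≤ n * ℓ := by positivity
  have hderiv_sq : ∀ a b, IntervalIntegrable (fun x => deriv f x ^ 2) volume a b :=
    fun _ _ => hf'.intervalIntegrable
  have hf2 (a b : ℝ) : IntervalIntegrable (fun x => f x ^ 2) volume a b :=
    ((hf a b).continuousOn.pow 2).intervalIntegrable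
  have left := integral_sq_le_of_nonneg_of_cells hℓ hf0 hf hderiv_sq (a - n * ℓ) n
  have right := integral_sq_le_of_nonneg_of_cells hℓ hf0 hf hderiv_sq a n
  rw [sub_add_cancel] at left
  have mass_left : (∫ x in (a - n * ℓ)..a, f x) ^ 2 ≤ ((∫ x, f x) / 2) ^ 2 := by
    gcongr
    · exact intervalIntegral.integral_nonneg (by linarith) fun x _ => hf0 x
    · rw [intervalIntegral.integral_of_le (by linarith), ← hmedian]
      exact setIntegral_mono_set hfi.integrableOn (Eventually.of_forall hf0)
        Ioc_subset_Iic_self.eventuallyLE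
  have mass_right : (∫ x in a..(a + n * ℓ), f x) ^ 2 ≤ ((∫ x, f x) / 2) ^ 2 := by
    have hIoi : ∫ x in Ioi a, f x = (∫ x, f x) / 2 := by
      linarith [intervalIntegral.integral_Iic_add_Ioi (b := a) hfi.integrableOn hfi.integrableOn]
    gcongr
    · exact intervalIntegral.integral_nonneg (by linarith) fun x _ => hf0 x
    · rw [intervalIntegral.integral_of_le (by linarith), ← hIoi]
      exact setIntegral_mono_set hfi.integrableOn (Eventually.of_forall hf0)
        Ioc_subset_Ioi_self.eventuallyLE
  have deriv_le : (∫ x in (a - n * ℓ)..a, deriv f x ^ 2) + (∫ x in a..(a + n * ℓ), deriv f x ^ 2) ≤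
      ∫ x, deriv f x ^ 2 := by
    rw [intervalIntegral.integral_add_adjacent_intervals (hderiv_sq _ _) (hderiv_sq _ _),
      intervalIntegral.integral_of_le (by linarith)]
    exact setIntegral_le_integral hf' (Eventually.of_forall fun x => sq_nonneg _)
  calc ∫ x in (a - n * ℓ)..(a + n * ℓ), f x ^ 2
      = (∫ x in (a - n * ℓ)..a, f x ^ 2) + ∫ x in a..(a + n * ℓ), f x ^ 2 :=
        (intervalIntegral.integral_add_adjacent_intervals (hf2 _ _) (hf2 _ _)).symm
    _ ≤ (ℓ / π) ^ 2 * ((∫ x in (a - n * ℓ)..a, deriv f x ^ 2) +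
          ∫ x in a..(a + n * ℓ), deriv f x ^ 2) +
        ((∫ x in (a - n * ℓ)..a, f x) ^ 2 / ℓ + (∫ x in a..(a + n * ℓ), f x) ^ 2 / ℓ) := by
        linarith
    _ ≤ (ℓ / π) ^ 2 * (∫ x, deriv f x ^ 2) +
        (((∫ x, f x) / 2) ^ 2 / ℓ + ((∫ x, f x) / 2) ^ 2 / ℓ) := by gcongr
    _ = (ℓ / π) ^ 2 * (∫ x, deriv f x ^ 2) + (∫ x, f x) ^ 2 / (2 * ℓ) := by ring

theorem integral_sq_le_integral_deriv_sq_add (hℓ : 0 < ℓ) (hf0 : ∀ x, 0 ≤ f x)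
    (hfi : Integrable f) (hf : ∀ a b, AbsolutelyContinuousOnInterval f a b)
    (hf' : Integrable fun x => deriv f x ^ 2) :
    ∫ x, f x ^ 2 ≤ (ℓ / π) ^ 2 * (∫ x, deriv f x ^ 2) + (∫ x, f x) ^ 2 / (2 * ℓ) := by
  obtain ⟨a, hbound⟩ := exists_forall_integral_sq_le hℓ hf0 hfi hf hf'
  have hn : Tendsto (fun n : ℕ => n * ℓ) atTop atTop :=
    tendsto_natCast_atTop_atTop.atTop_mul_const hℓ
  have hleft : Tendsto (fun n : ℕ => a - n * ℓ) atTop atBot :=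
    tendsto_atBot_add_const_left _ a (tendsto_neg_atTop_atBot.comp hn)
  have hright : Tendsto (fun n : ℕ => a + n * ℓ) atTop atTop := tendsto_atTop_add_const_left _ a hn
  have hf2 : Integrable fun x => f x ^ 2 := by
    refine integrable_of_intervalIntegral_norm_bounded
      ((ℓ / π) ^ 2 * (∫ x, deriv f x ^ 2) + (∫ x, f x) ^ 2 / (2 * ℓ))
      (fun n : ℕ => ((hf (a - n * ℓ) (a + n * ℓ)).continuousOn.pow 2).intervalIntegrable.1)
      hleft hright (Eventually.of_forall fun n => ?_)
    simpa only [norm_pow, norm_eq_abs, sq_abs] using hbound n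
  exact le_of_tendsto' (intervalIntegral_tendsto_integral hf2 hleft hright) hbound

theorem neg_sq_div_le_energy (hf0 : ∀ x, 0 ≤ f x) (hfi : Integrable f)
    (hf : ∀ a b, AbsolutelyContinuousOnInterval f a b)
    (hf' : Integrable fun x => deriv f x ^ 2) :
    -(∫ x, f x) ^ 2 / (4 * √2 * π) ≤
      (1 / 8) * (∫ x, deriv f x ^ 2) - (1 / 4) * (∫ x, f x ^ 2) := by
  have key := integral_sq_le_integral_deriv_sq_add (ℓ := π / √2) (by positivity) hf0 hfi hf hf'
  have hsq : (π / √2 / π) ^ 2 = 1 / 2 := by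
    rw [div_div_cancel_left' pi_ne_zero, inv_pow, sq_sqrt zero_le_two, one_div]
  have hmass : -(∫ x, f x) ^ 2 / (4 * √2 * π) =
      -(1 / 4) * ((∫ x, f x) ^ 2 / (2 * (π / √2))) := by
    field_simp
    norm_num
  rw [hsq] at key
  linarith

end Line

section Primitive

variable {f g : ℝ → ℝ}

theorem absolutelyContinuousOnInterval_of_forall_sub_eq_integral (hg : LocallyIntegrable g)
    (hfg : ∀ a b, f b - f a = ∫ x in a..b, g x) (a b : ℝ) :
    AbsolutelyContinuousOnInterval f a b := by
  have hgi : IntervalIntegrable g volume a b := intervalIntegrable_iff.2 <|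
    (hg.integrableOn_isCompact isCompact_uIcc).mono_set uIoc_subset_uIcc
  have hf : f = fun x => f a + ∫ t in a..x, g t := funext fun x => by rw [← hfg, add_sub_cancel]
  rw [hf]
  exact contDiffOn_const.absolutelyContinuousOnInterval.fun_add
    (hgi.absolutelyContinuousOnInterval_intervalIntegral left_mem_uIcc)

theorem deriv_ae_eq_of_forall_sub_eq_integral (hg : LocallyIntegrable g)
    (hfg : ∀ a b, f b - f a = ∫ x in a..b, g x) : deriv f =ᵐ[volume] g := by
  have hf : f = fun x => f 0 + ∫ t in 0..x, g t := funext fun x => by rw [← hfg, add_sub_cancel]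
  filter_upwards [_root_.LocallyIntegrable.ae_hasDerivAt_integral hg] with x hx
  rw [hf]
  exact ((hx 0).const_add _).deriv

end Primitive

section Indicator

variable {𝕜 F : Type*} [NontriviallyNormedField 𝕜] [NormedAddCommGroup F] [NormedSpace 𝕜 F]
  {s : Set 𝕜} {f : 𝕜 → F}

theorem hasDerivAt_indicator (hf : Differentiable 𝕜 f) (h0 : ∀ x ∈ frontier s, f x = 0)
    (h1 : ∀ x ∈ frontier s, deriv f x = 0) (x : 𝕜) :
    HasDerivAt (s.indicator f) (s.indicator (deriv f) x) x := by
  by_cases hx : x ∈ frontier s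
  · have hfx : HasDerivAt f 0 x := h1 x hx ▸ (hf x).hasDerivAt
    have hval : s.indicator f x = 0 := by simp [h0 x hx]
    have hder : s.indicator (deriv f) x = 0 := by simp [h1 x hx]
    rw [hasDerivAt_iff_isLittleO] at hfx ⊢
    simp only [h0 x hx, hval, hder, smul_zero, sub_zero] at hfx ⊢
    exact (Asymptotics.isBigO_of_le _ fun y => norm_indicator_le_norm_self f y).trans_isLittleO hfx
  · rw [← mem_compl_iff, compl_frontier_eq_union_interior] at hx
    rcases hx with hin | hout
    · rw [indicator_of_mem (interior_subset hin)]
      exact (hf x).hasDerivAt.congr_of_eventuallyEq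
        (eqOn_indicator.eventuallyEq_of_mem (mem_interior_iff_mem_nhds.1 hin))
    · rw [indicator_of_notMem (interior_subset hout)]
      exact (hasDerivAt_const x 0).congr_of_eventuallyEq
        (eqOn_indicator'.eventuallyEq_of_mem (mem_interior_iff_mem_nhds.1 hout))

theorem contDiff_one_indicator (hf : ContDiff 𝕜 1 f) (h0 : ∀ x ∈ frontier s, f x = 0)
    (h1 : ∀ x ∈ frontier s, deriv f x = 0) : ContDiff 𝕜 1 (s.indicator f) := by
  obtain ⟨hdiff, hcont⟩ := contDiff_one_iff_deriv.1 hf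
  have hderiv := hasDerivAt_indicator hdiff h0 h1
  refine contDiff_one_iff_deriv.2 ⟨fun x => (hderiv x).differentiableAt, ?_⟩
  rw [funext fun x => (hderiv x).deriv]
  exact continuous_indicator h1 hcont.continuousOn

end Indicator

section RaisedCosine

theorem integral_indicator_Icc_eq_intervalIntegral {E : Type*} [NormedAddCommGroup E]
    [NormedSpace ℝ E] {μ : Measure ℝ} [NullSingletonClass μ] {a b : ℝ} (hab : a ≤ b) (f : ℝ → E) :
    ∫ x, (Icc a b).indicator f x ∂μ = ∫ x in a..b, f x ∂μ := by
  rw [integral_indicator measurableSet_Icc, integral_Icc_eq_integral_Ioc,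
    intervalIntegral.integral_of_le hab]

/-- One period of `1 + cos`, extended by zero: the profile of the squared compacton in units where
the amplitude and the frequency are one. -/
noncomputable def raisedCosine : ℝ → ℝ := (Icc (-π) π).indicator fun x => 1 + cos x

theorem raisedCosine_nonneg (x : ℝ) : 0 ≤ raisedCosine x :=
  indicator_nonneg (fun y _ => by linarith [neg_one_le_cos y]) x

theorem one_add_cos_eq_zero_of_mem_frontier :
    ∀ x ∈ frontier (Icc (-π) π), 1 + cos x = 0 := by
  rw [frontier_Icc (by linarith [pi_pos])]
  rintro x (rfl | rfl) <;> simp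

theorem deriv_one_add_cos_eq_zero_of_mem_frontier :
    ∀ x ∈ frontier (Icc (-π) π), deriv (fun x => 1 + cos x) x = 0 := by
  rw [frontier_Icc (by linarith [pi_pos])]
  rintro x (rfl | rfl) <;> simp

theorem contDiff_raisedCosine : ContDiff ℝ 1 raisedCosine :=
  contDiff_one_indicator (by fun_prop) one_add_cos_eq_zero_of_mem_frontier
    deriv_one_add_cos_eq_zero_of_mem_frontier

theorem deriv_raisedCosine : deriv raisedCosine = (Icc (-π) π).indicator fun x => -sin x := by
  funext x
  rw [raisedCosine, (hasDerivAt_indicator (by fun_prop) one_add_cos_eq_zero_of_mem_frontier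
    deriv_one_add_cos_eq_zero_of_mem_frontier x).deriv]
  simp

theorem integral_raisedCosine : ∫ x, raisedCosine x = 2 * π := by
  rw [raisedCosine, integral_indicator_Icc_eq_intervalIntegral (by linarith [pi_pos]),
    intervalIntegral.integral_add intervalIntegrable_const
      (continuous_cos.intervalIntegrable _ _), integral_cos]
  simp only [intervalIntegral.integral_const, smul_eq_mul, sin_neg, sin_pi]
  ring

theorem integral_raisedCosine_sq : ∫ x, raisedCosine x ^ 2 = 3 * π := by
  have hsq (x : ℝ) : raisedCosine x ^ 2 =
      (Icc (-π) π).indicator (fun x => 1 + 2 * cos x + cos x ^ 2) x := by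
    simp only [raisedCosine, indicator_apply]
    split_ifs <;> ring
  simp_rw [hsq]
  rw [integral_indicator_Icc_eq_intervalIntegral (by linarith [pi_pos]),
    intervalIntegral.integral_add (Continuous.intervalIntegrable (by fun_prop) _ _)
      (Continuous.intervalIntegrable (by fun_prop) _ _),
    intervalIntegral.integral_add intervalIntegrable_const
      (Continuous.intervalIntegrable (by fun_prop) _ _),
    intervalIntegral.integral_const_mul, integral_cos, integral_cos_sq]
  simp only [intervalIntegral.integral_const, smul_eq_mul, sin_neg, sin_pi, mul_zero]
  ring

theorem integral_deriv_raisedCosine_sq : ∫ x, deriv raisedCosine x ^ 2 = π := by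
  have hsq (x : ℝ) : deriv raisedCosine x ^ 2 = (Icc (-π) π).indicator (fun x => sin x ^ 2) x := by
    simp only [deriv_raisedCosine, indicator_apply]
    split_ifs <;> ring
  simp_rw [hsq]
  rw [integral_indicator_Icc_eq_intervalIntegral (by linarith [pi_pos]), integral_sin_sq]
  simp

end RaisedCosine

section Compacton

/-- The density `Φ ^ 2` of the compacton `Φ x = √(2 * c) * cos (x / √2)`, `|x| ≤ π / √2`; see
`compactonDensity_apply` for this form. -/
noncomputable def compactonDensity (c x : ℝ) : ℝ := c * raisedCosine (√2 * x)

theorem compactonDensity_apply (c x : ℝ) :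
    compactonDensity c x = if |x| ≤ π / √2 then 2 * c * cos (x / √2) ^ 2 else 0 := by
  have hmem : √2 * x ∈ Icc (-π) π ↔ |x| ≤ π / √2 := by
    rw [mem_Icc, ← abs_le, abs_mul, abs_of_nonneg (sqrt_nonneg 2), le_div_iff₀' (by positivity)]
  have hdouble : √2 * x = 2 * (x / √2) := by
    field_simp
    rw [sq_sqrt zero_le_two, mul_comm]
  simp only [compactonDensity, raisedCosine, indicator_apply, hmem, mul_ite, mul_zero]
  rw [cos_sq, ← hdouble]
  congr 1
  ring

theorem compactonDensity_nonneg {c : ℝ} (hc : 0 ≤ c) (x : ℝ) : 0 ≤ compactonDensity c x :=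
  mul_nonneg hc (raisedCosine_nonneg _)

theorem contDiff_compactonDensity (c : ℝ) : ContDiff ℝ 1 (compactonDensity c) :=
  contDiff_const.mul (contDiff_raisedCosine.comp (contDiff_const.mul contDiff_id))

theorem deriv_compactonDensity (c x : ℝ) :
    deriv (compactonDensity c) x = c * √2 * deriv raisedCosine (√2 * x) := by
  unfold compactonDensity
  rw [deriv_const_mul_field, deriv_comp_mul_left, smul_eq_mul, mul_assoc]

theorem integral_compactonDensity (c : ℝ) : ∫ x, compactonDensity c x = √2 * π * c := by
  simp only [compactonDensity]
  rw [integral_const_mul, Measure.integral_comp_mul_left, integral_raisedCosine, smul_eq_mul,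
    abs_of_nonneg (by positivity)]
  field_simp
  norm_num

theorem energy_compactonDensity (c : ℝ) :
    (1 / 8) * (∫ x, deriv (compactonDensity c) x ^ 2) - (1 / 4) * (∫ x, compactonDensity c x ^ 2) =
      -(√2 * π * c) ^ 2 / (4 * √2 * π) := by
  simp only [deriv_compactonDensity, compactonDensity, mul_pow, integral_const_mul]
  rw [Measure.integral_comp_mul_left (fun x => deriv raisedCosine x ^ 2),
    Measure.integral_comp_mul_left (fun x => raisedCosine x ^ 2), integral_deriv_raisedCosine_sq,
    integral_raisedCosine_sq, smul_eq_mul, smul_eq_mul, abs_of_nonneg (by positivity),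
    sq_sqrt zero_le_two]
  field_simp
  ring

end Compacton

/-- for p = 4, the function ρ*(x) = 2c·cos²(x/√2) on [−π/√2, π/√2]
(zero outside), with c = m/(√2π), is nonnegative, C¹, has mass m, minimizes
𝓗(σ) = (1/8)∫(σ')² − (1/4)∫σ² among nonnegative mass-m functions, and
𝓗(ρ*) = −m²/(4√2π). -/
theorem stmt_16 (m : ℝ) (hm : 0 < m) (c : ℝ) (hc : c = m / (Real.sqrt 2 * Real.pi))
    (ρs : ℝ → ℝ)
    (hρs : ∀ x, ρs x = if |x| ≤ Real.pi / Real.sqrt 2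
      then 2 * c * Real.cos (x / Real.sqrt 2) ^ 2 else 0) :
    (∀ x, 0 ≤ ρs x) ∧
    ContDiff ℝ 1 ρs ∧
    (∫ x, ρs x) = m ∧
    (∀ (ρ ρ' : ℝ → ℝ),
      (∀ x, 0 ≤ ρ x) →
      Integrable ρ →
      (∀ a b : ℝ, ρ b - ρ a = ∫ x in a..b, ρ' x) →
      MemLp ρ' 2 (volume : Measure ℝ) →
      (∫ x, ρ x) = m →
      (1 / 8) * (∫ x, (deriv ρs x) ^ 2) - (1 / 4) * (∫ x, (ρs x) ^ 2) ≤
        (1 / 8) * (∫ x, (ρ' x) ^ 2) - (1 / 4) * (∫ x, (ρ x) ^ 2)) ∧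
    (1 / 8) * (∫ x, (deriv ρs x) ^ 2) - (1 / 4) * (∫ x, (ρs x) ^ 2)
      = -(m ^ 2) / (4 * Real.sqrt 2 * Real.pi) := by
  have hmass : √2 * π * c = m := by
    rw [hc]
    field_simp
  obtain rfl : ρs = compactonDensity c :=
    funext fun x => (hρs x).trans (compactonDensity_apply c x).symm
  have energy_eq := hmass ▸ energy_compactonDensity c
  refine ⟨compactonDensity_nonneg (by rw [hc]; positivity), contDiff_compactonDensity c,
    (integral_compactonDensity c).trans hmass, ?_, energy_eq⟩
  intro ρ ρ' hρ0 hρi hρρ' hρ'2 hρm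
  have hloc : LocallyIntegrable ρ' := hρ'2.locallyIntegrable one_le_two
  have hac := absolutelyContinuousOnInterval_of_forall_sub_eq_integral hloc hρρ'
  have hsq : (fun x => deriv ρ x ^ 2) =ᵐ[volume] fun x => ρ' x ^ 2 :=
    (deriv_ae_eq_of_forall_sub_eq_integral hloc hρρ').fun_comp (· ^ 2)
  have bound := neg_sq_div_le_energy hρ0 hρi hac (hρ'2.integrable_sq.congr hsq.symm)
  rw [hρm, integral_congr_ae hsq] at bound
  exact energy_eq.trans_le bound
end

section
/- Let p ≥ 2 be real, c, v ∈ ℝ, and let I ⊆ ℝ be an open interval. Suppose Q : I → ℂ is twice continuously differentiable and satisfies −c·Q(x) + i·v·Q'(x) + conj(Q(x))·(Q·Q')'(x) + |Q(x)|^{p−2}·Q(x) = 0 for all x ∈ I. Then the two real-valued functions x ↦ (v/2)·|Q(x)|² + Im(|Q(x)|²·conj(Q(x))·Q'(x)) and x ↦ −c·|Q(x)|² + |Q(x)|²·|Q'(x)|² + (2/p)·|Q(x)|^p are constant on I. -/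
/-!
Put `g = Q Q'` and read the ODE as `conj Q * g' = a Q - i v Q'` with the real coefficient
`a = c - |Q|^(p-2)`. The two quantities involve `Q'` only through `g`, as `Im (conj Q² g)` and
`|g|²`. When `Im (conj Q² g)` is differentiated, the term `2 conj Q conj Q' g = 2 |g|²` is real and
drops out, leaving `Im (conj Q² g') = -v Re (conj Q Q') = -(v/2) (|Q|²)'`. Likewise
`(|g|²)' = 2 Re (conj Q' conj Q g') = 2 a Re (conj Q Q') = a (|Q|²)'`, which is the derivative of
`c |Q|² - (2/p) |Q|^p`.
-/

open scoped ComplexConjugate InnerProductSpace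

theorem exists_forall_eq_of_hasDerivWithinAt_zero {𝕜 E : Type*} [RCLike 𝕜]
    [NormedAddCommGroup E] [NormedSpace 𝕜 E] {f : 𝕜 → E} {s : Set 𝕜} (hs : Convex ℝ s)
    (hf : ∀ x ∈ s, HasDerivWithinAt f 0 s x) : ∃ k, ∀ x ∈ s, f x = k := by
  obtain rfl | ⟨y, hy⟩ := s.eq_empty_or_nonempty
  · exact ⟨0, by simp⟩
  · refine ⟨f y, fun x hx => ?_⟩
    have hle : ‖f x - f y‖ ≤ 0 * ‖x - y‖ :=
      hs.norm_image_sub_le_of_norm_hasDerivWithin_le hf (fun _ _ => norm_zero.le) hy hx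
    rwa [zero_mul, norm_le_zero_iff, sub_eq_zero] at hle

theorem hasDerivWithinAt_norm_rpow_comp {E : Type*} [NormedAddCommGroup E]
    [InnerProductSpace ℝ E] {f : ℝ → E} {f' : E} {s : Set ℝ} {x p : ℝ} (hp : 1 < p)
    (hf : HasDerivWithinAt f f' s x) :
    HasDerivWithinAt (fun y => ‖f y‖ ^ p) (p * ‖f x‖ ^ (p - 2) * ⟪f x, f'⟫_ℝ) s x :=
  (hasFDerivAt_norm_rpow (f x) hp).comp_hasDerivWithinAt x hf

section PointwiseAlgebra

variable {z z' w : ℂ} {a v : ℝ}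

theorem ofReal_norm_sq_mul_conj_mul (z w : ℂ) :
    (‖z‖ : ℂ) ^ 2 * conj z * w = conj z ^ 2 * (z * w) := by
  rw [← Complex.conj_mul' z]
  ring

theorem im_conj_sq_mul_eq_neg_mul_inner (h : conj z * w = a * z - Complex.I * v * z') :
    (conj z ^ 2 * w).im = -v * ⟪z, z'⟫_ℝ := by
  have hmul : conj z ^ 2 * w = a * (z * conj z) - Complex.I * (v * (z' * conj z)) := by
    linear_combination conj z * h
  rw [hmul, Complex.mul_conj', Complex.inner, Complex.sub_im, Complex.I_mul_im,
    Complex.re_ofReal_mul, ← Complex.ofReal_pow, ← Complex.ofReal_mul, Complex.ofReal_im]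
  ring

theorem inner_mul_eq_mul_inner (h : conj z * w = a * z - Complex.I * v * z') :
    ⟪z * z', w⟫_ℝ = a * ⟪z, z'⟫_ℝ := by
  have hmul : w * conj (z * z') = a * (z * conj z') - Complex.I * (v * (z' * conj z')) := by
    rw [map_mul]
    linear_combination conj z' * h
  rw [real_inner_comm z' z, Complex.inner, Complex.inner, hmul, Complex.mul_conj',
    Complex.sub_re, Complex.I_mul_re, Complex.re_ofReal_mul, ← Complex.ofReal_pow,
    ← Complex.ofReal_mul, Complex.ofReal_im, neg_zero, sub_zero]

end PointwiseAlgebra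

section Derivatives

variable {Q Q' : ℝ → ℂ} {g' : ℂ} {s : Set ℝ} {x a p c v : ℝ}

theorem hasDerivWithinAt_im_conj_sq_mul (hQ : HasDerivWithinAt Q (Q' x) s x)
    (hg : HasDerivWithinAt (fun y => Q y * Q' y) g' s x) :
    HasDerivWithinAt (fun y => (conj (Q y) ^ 2 * (Q y * Q' y)).im)
      (conj (Q x) ^ 2 * g').im s x := by
  have hprod := (hQ.star.fun_pow 2).fun_mul hg
  refine (Complex.imCLM.hasFDerivAt.comp_hasDerivWithinAt x hprod).congr_deriv ?_
  have hreal : 2 * conj (Q x) * conj (Q' x) * (Q x * Q' x) =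
      ((2 * ‖Q x * Q' x‖ ^ 2 : ℝ) : ℂ) := by
    rw [Complex.ofReal_mul, Complex.ofReal_pow, ← Complex.conj_mul', map_mul, Complex.ofReal_ofNat]
    ring
  have hvanish : (2 * conj (Q x) * conj (Q' x) * (Q x * Q' x)).im = 0 := by
    rw [hreal, Complex.ofReal_im]
  simpa using hvanish

theorem hasDerivWithinAt_chargeFlux_zero (hQ : HasDerivWithinAt Q (Q' x) s x)
    (hg : HasDerivWithinAt (fun y => Q y * Q' y) g' s x)
    (hODE : conj (Q x) * g' = a * Q x - Complex.I * v * Q' x) :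
    HasDerivWithinAt
      (fun y => v / 2 * ‖Q y‖ ^ 2 + ((‖Q y‖ : ℂ) ^ 2 * conj (Q y) * Q' y).im) 0 s x := by
  simp only [ofReal_norm_sq_mul_conj_mul]
  refine ((hQ.norm_sq.const_mul (v / 2)).add (hasDerivWithinAt_im_conj_sq_mul hQ hg)).congr_deriv ?_
  rw [im_conj_sq_mul_eq_neg_mul_inner hODE]
  ring

theorem hasDerivWithinAt_norm_sq_mul_norm_sq (hg : HasDerivWithinAt (fun y => Q y * Q' y) g' s x)
    (hODE : conj (Q x) * g' = a * Q x - Complex.I * v * Q' x) :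
    HasDerivWithinAt (fun y => ‖Q y‖ ^ 2 * ‖Q' y‖ ^ 2) (2 * (a * ⟪Q x, Q' x⟫_ℝ)) s x := by
  simp only [← mul_pow, ← norm_mul]
  exact hg.norm_sq.congr_deriv (congrArg (2 * ·) (inner_mul_eq_mul_inner hODE))

theorem hasDerivWithinAt_energy_zero (hp : 1 < p) (hQ : HasDerivWithinAt Q (Q' x) s x)
    (hg : HasDerivWithinAt (fun y => Q y * Q' y) g' s x)
    (hODE : conj (Q x) * g' =
      ((c - ‖Q x‖ ^ (p - 2) : ℝ) : ℂ) * Q x - Complex.I * v * Q' x) :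
    HasDerivWithinAt
      (fun y => -c * ‖Q y‖ ^ 2 + ‖Q y‖ ^ 2 * ‖Q' y‖ ^ 2 + 2 / p * ‖Q y‖ ^ p) 0 s x := by
  have hpower := hasDerivWithinAt_norm_rpow_comp hp hQ
  refine (((hQ.norm_sq.const_mul (-c)).add (hasDerivWithinAt_norm_sq_mul_norm_sq hg hODE)).add
    (hpower.const_mul (2 / p))).congr_deriv ?_
  have hp0 : p ≠ 0 := by linarith
  field_simp
  ring

end Derivatives

theorem stmt_17_general (p c v : ℝ) (hp : 1 < p) (I : Set ℝ) (hI : IsPreconnected I)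
    (Q Q' g' : ℝ → ℂ)
    (hQ : ∀ x ∈ I, HasDerivWithinAt Q (Q' x) I x)
    (hg : ∀ x ∈ I, HasDerivWithinAt (fun y => Q y * Q' y) (g' x) I x)
    (hODE : ∀ x ∈ I,
      -(c : ℂ) * Q x + Complex.I * (v : ℂ) * Q' x + conj (Q x) * g' x
        + ((‖Q x‖ ^ (p - 2) : ℝ) : ℂ) * Q x = 0) :
    (∃ η : ℝ, ∀ x ∈ I,
      v / 2 * ‖Q x‖ ^ 2 + ((‖Q x‖ : ℂ) ^ 2 * conj (Q x) * Q' x).im = η) ∧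
    (∃ κ : ℝ, ∀ x ∈ I,
      -c * ‖Q x‖ ^ 2 + ‖Q x‖ ^ 2 * ‖Q' x‖ ^ 2 + 2 / p * ‖Q x‖ ^ p = κ) := by
  have hconv : Convex ℝ I := hI.ordConnected.convex
  have hsolved : ∀ x ∈ I, conj (Q x) * g' x =
      ((c - ‖Q x‖ ^ (p - 2) : ℝ) : ℂ) * Q x - Complex.I * v * Q' x := fun x hx => by
    rw [Complex.ofReal_sub]
    linear_combination hODE x hx
  exact ⟨exists_forall_eq_of_hasDerivWithinAt_zero hconv fun x hx =>
      hasDerivWithinAt_chargeFlux_zero (hQ x hx) (hg x hx) (hsolved x hx),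
    exists_forall_eq_of_hasDerivWithinAt_zero hconv fun x hx =>
      hasDerivWithinAt_energy_zero hp (hQ x hx) (hg x hx) (hsolved x hx)⟩

/-- the two first integrals of the degenerate NLS traveling-wave ODE:
for a solution Q of −cQ + ivQ' + conj(Q)(QQ')' + |Q|^{p−2}Q = 0 on an open interval I,
the functions (v/2)|Q|² + Im(|Q|²·conj(Q)·Q') and −c|Q|² + |Q|²|Q'|² + (2/p)|Q|^p
are constant on I. -/
theorem stmt_17 (p c v : ℝ) (hp : 2 ≤ p)
    (I : Set ℝ) (hI : IsOpen I) (hIconn : IsPreconnected I)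
    (Q Q' Q'' g' : ℝ → ℂ)
    (hd1 : ∀ x ∈ I, HasDerivAt Q (Q' x) x)
    (hd2 : ∀ x ∈ I, HasDerivAt Q' (Q'' x) x)
    (hc2 : ContinuousOn Q'' I)
    (hg : ∀ x ∈ I, HasDerivAt (fun y => Q y * Q' y) (g' x) x)
    (hODE : ∀ x ∈ I,
      -(c : ℂ) * Q x + Complex.I * (v : ℂ) * Q' x
        + (starRingEnd ℂ) (Q x) * g' x
        + ((‖Q x‖ ^ (p - 2) : ℝ) : ℂ) * Q x = 0) :
    (∃ η : ℝ, ∀ x ∈ I,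
      v / 2 * ‖Q x‖ ^ 2
        + (((‖Q x‖ : ℂ)) ^ 2 * (starRingEnd ℂ) (Q x) * Q' x).im = η) ∧
    (∃ κ : ℝ, ∀ x ∈ I,
      -c * ‖Q x‖ ^ 2
        + ‖Q x‖ ^ 2 * ‖Q' x‖ ^ 2
        + (2 / p) * ‖Q x‖ ^ p = κ) :=
  stmt_17_general p c v (by linarith) I hIconn Q Q' g'
    (fun x hx => (hd1 x hx).hasDerivWithinAt) (fun x hx => (hg x hx).hasDerivWithinAt) hODE
end
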